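/- Let δ > 0 and let (u,p) be a C² (−1)-homogeneous solution of the stationary Navier–Stokes equations on S² ∩ B_δ(S) \ {S} with lim_{x∈S², x→S} |u(x)|/ln(dist(x,S)) = 0. Let Ω := Ω_{−2,−1/2,δ/16}. Then u ∈ L²(Ω); ∇u, u⊗u, and p belong to L^s(Ω) for every 1 < s < 2; and (u,p) is a weak solution of the Stokes system with force −(u·∇)u on all of Ω: for every φ ∈ C_c^∞(Ω; ℝ³) with div φ = 0, ∫_Ω ∇u·∇φ dx = ∫_Ω (u⊗u)·∇φ dx, and ∫_Ω u·∇ψ dx = 0 for every ψ ∈ C_c^∞(Ω). -/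

import Mathlib

noncomputable section

open Real Filter MeasureTheory Metric Topology
open scoped ENNReal InnerProductSpace

abbrev V3 := EuclideanSpace ℝ (Fin 3)
abbrev V2 := EuclideanSpace ℝ (Fin 2)

/-- standard basis vector in `ℝ³` -/
def e3 (j : Fin 3) : V3 := EuclideanSpace.single j 1

/-- partial derivative `∂_j f` -/
def pd (j : Fin 3) (f : V3 → ℝ) (x : V3) : ℝ := fderiv ℝ f x (e3 j)

/-- Laplacian on `ℝ³` -/
def lap3 (f : V3 → ℝ) (x : V3) : ℝ := ∑ j, pd j (fun y => pd j f y) x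

/-- stationary Navier–Stokes equations `-Δu + (u·∇)u + ∇p = 0`, `div u = 0` at `x` -/
def NSEq (u : V3 → V3) (p : V3 → ℝ) (x : V3) : Prop :=
  (∀ i, - lap3 (fun z => u z i) x + (∑ j, u x j * pd j (fun z => u z i) x) + pd i p x = 0)
  ∧ (∑ j, pd j (fun z => u z j) x) = 0

/-- stationary Euler equations `(u·∇)u + ∇p = 0`, `div u = 0` at `x` -/
def EulerEq (u : V3 → V3) (p : V3 → ℝ) (x : V3) : Prop :=
  (∀ i, (∑ j, u x j * pd j (fun z => u z i) x) + pd i p x = 0)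
  ∧ (∑ j, pd j (fun z => u z j) x) = 0

/-- south pole -/
def S3 : V3 := EuclideanSpace.single 2 (-1)
/-- north pole -/
def N3 : V3 := EuclideanSpace.single 2 1

/-- the unit sphere `S²` -/
def sphere2 : Set V3 := Metric.sphere (0 : V3) 1

/-- the open cone over a subset of the unit sphere -/
def cone3 (Ω : Set V3) : Set V3 := {x : V3 | x ≠ 0 ∧ (‖x‖⁻¹ • x) ∈ Ω}

/-- `|x'| = √(x₁² + x₂²)` -/
def rho (x : V3) : ℝ := Real.sqrt ((x 0) ^ 2 + (x 1) ^ 2)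

/-- the `x₃`-axis `{x' = 0}` -/
def axis3 : Set V3 := {x : V3 | x 0 = 0 ∧ x 1 = 0}

/-- `Ω_{a,b,R} = {a < x₃ < b, |x'| < R}` -/
def OmegaR (a b R : ℝ) : Set V3 := {x : V3 | a < x 2 ∧ x 2 < b ∧ rho x < R}

/-- build a point of `ℝ³` from `x' ∈ ℝ²` and `x₃ ∈ ℝ` -/
def emb (y : V2) (t : ℝ) : V3 := (EuclideanSpace.equiv (Fin 3) ℝ).symm ![y 0, y 1, t]

/-- spherical component `u_r = u · e_r` -/
def uRc (u : V3 → V3) (x : V3) : ℝ := (u x 0 * x 0 + u x 1 * x 1 + u x 2 * x 2) / ‖x‖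

/-- spherical component `u_θ = u · e_θ` -/
def uTc (u : V3 → V3) (x : V3) : ℝ :=
  (u x 0 * x 0 * x 2 + u x 1 * x 1 * x 2) / (‖x‖ * rho x) - u x 2 * rho x / ‖x‖

/-- spherical component `u_φ = u · e_φ` -/
def uPc (u : V3 → V3) (x : V3) : ℝ := (-(u x 0) * x 1 + u x 1 * x 0) / rho x

/-- axisymmetry on a set: the spherical components are independent of the meridian angle -/
def AxisymOn (u : V3 → V3) (Ω : Set V3) : Prop :=
  ∀ x ∈ Ω, ∀ y ∈ Ω, ‖x‖ = ‖y‖ → x 2 = y 2 →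
    uRc u x = uRc u y ∧ uTc u x = uTc u y ∧ uPc u x = uPc u y

/-- spherical frame vector `e_r` -/
def eRv (x : V3) : V3 := ‖x‖⁻¹ • x

/-- spherical frame vector `e_θ` -/
def eThv (x : V3) : V3 := (EuclideanSpace.equiv (Fin 3) ℝ).symm
  ![x 2 * x 0 / (‖x‖ * rho x), x 2 * x 1 / (‖x‖ * rho x), -(rho x) / ‖x‖]

/-- spherical frame vector `e_φ` -/
def ePhv (x : V3) : V3 := (EuclideanSpace.equiv (Fin 3) ℝ).symm ![-(x 1) / rho x, x 0 / rho x, 0]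

/-- the spherical cap `S² ∩ B_δ(S) \ {S}` -/
def NSCap (δ : ℝ) : Set V3 := (sphere2 ∩ Metric.ball S3 δ) \ {S3}

/-- the spherical cap `S² ∩ B_δ(S)` -/
def NSCapFull (δ : ℝ) : Set V3 := sphere2 ∩ Metric.ball S3 δ


/-! ### Part 1: calculus toolkit -/

lemma e3_apply (i j : Fin 3) : (e3 j) i = if i = j then 1 else 0 := by
  simp [e3]

lemma pd_congr {f g : V3 → ℝ} {x : V3} (j : Fin 3) (h : f =ᶠ[𝓝 x] g) : pd j f x = pd j g x := by
  unfold pd; rw [h.fderiv_eq]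

lemma pd_add {f g : V3 → ℝ} {x : V3} (j : Fin 3) (hf : DifferentiableAt ℝ f x)
    (hg : DifferentiableAt ℝ g x) : pd j (fun y => f y + g y) x = pd j f x + pd j g x := by
  unfold pd; rw [fderiv_fun_add hf hg]; rfl

lemma pd_sub {f g : V3 → ℝ} {x : V3} (j : Fin 3) (hf : DifferentiableAt ℝ f x)
    (hg : DifferentiableAt ℝ g x) : pd j (fun y => f y - g y) x = pd j f x - pd j g x := by
  unfold pd; rw [fderiv_fun_sub hf hg]; rfl

lemma pd_mul {f g : V3 → ℝ} {x : V3} (j : Fin 3) (hf : DifferentiableAt ℝ f x)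
    (hg : DifferentiableAt ℝ g x) :
    pd j (fun y => f y * g y) x = pd j f x * g x + f x * pd j g x := by
  unfold pd; rw [fderiv_fun_mul hf hg]; simp; ring

lemma pd_const_mul {f : V3 → ℝ} {x : V3} (j : Fin 3) (c : ℝ) (hf : DifferentiableAt ℝ f x) :
    pd j (fun y => c * f y) x = c * pd j f x := by
  unfold pd; rw [fderiv_const_mul hf]; simp

lemma pd_const (j : Fin 3) (c : ℝ) (x : V3) : pd j (fun _ => c) x = 0 := by
  unfold pd; simp

lemma pd_sum {ι : Type*} {s : Finset ι} {f : ι → V3 → ℝ} {x : V3} (j : Fin 3)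
    (hf : ∀ i ∈ s, DifferentiableAt ℝ (f i) x) :
    pd j (fun y => ∑ i ∈ s, f i y) x = ∑ i ∈ s, pd j (f i) x := by
  unfold pd; rw [fderiv_fun_sum hf]; simp

lemma pd_comp_real {F : ℝ → ℝ} {F' : ℝ} {f : V3 → ℝ} {x : V3} (j : Fin 3)
    (hF : HasDerivAt F F' (f x)) (hf : DifferentiableAt ℝ f x) :
    pd j (fun y => F (f y)) x = F' * pd j f x := by
  unfold pd
  have := (hF.comp_hasFDerivAt x hf.hasFDerivAt).fderiv
  simp only [Function.comp_def] at this
  rw [this]; simp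

lemma pd_coord (i j : Fin 3) (x : V3) : pd j (fun y : V3 => y i) x = if i = j then 1 else 0 := by
  unfold pd
  have : (fun y : V3 => y i) = (EuclideanSpace.proj i : V3 →L[ℝ] ℝ) := by ext; simp
  rw [this, ContinuousLinearMap.fderiv]
  simp [e3_apply]

lemma pd_affine {f : V3 → ℝ} (x0 : V3) (t : ℝ) (j : Fin 3) (y : V3)
    (hf : DifferentiableAt ℝ f (x0 + t • y)) :
    pd j (fun y => f (x0 + t • y)) y = t * pd j f (x0 + t • y) := by
  unfold pd
  have h1 : HasFDerivAt (fun y : V3 => x0 + t • y) (t • ContinuousLinearMap.id ℝ V3) y :=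
    ((hasFDerivAt_id y).const_smul t).const_add x0
  have := (hf.hasFDerivAt.comp y h1).fderiv
  simp only [Function.comp_def] at this
  rw [this]; simp

lemma contDiff_pd {f : V3 → ℝ} {m n : WithTop ℕ∞} (hf : ContDiff ℝ n f) (hmn : m + 1 ≤ n)
    (j : Fin 3) : ContDiff ℝ m (fun x => pd j f x) :=
  (hf.fderiv_right hmn).clm_apply contDiff_const

lemma contDiff_pd_top {f : V3 → ℝ} (hf : ContDiff ℝ (⊤ : ℕ∞) f)
    (j : Fin 3) : ContDiff ℝ (⊤ : ℕ∞) (fun x => pd j f x) :=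
  contDiff_pd hf (by simp) j

lemma contDiffOn_pd {f : V3 → ℝ} {m n : WithTop ℕ∞} {U : Set V3} (hU : IsOpen U)
    (hf : ContDiffOn ℝ n f U) (hmn : m + 1 ≤ n)
    (j : Fin 3) : ContDiffOn ℝ m (fun x => pd j f x) U :=
  (hf.fderiv_of_isOpen hU hmn).clm_apply contDiffOn_const

lemma pd_comm {f : V3 → ℝ} {x : V3} (hf : ContDiffAt ℝ 2 f x) (i j : Fin 3) :
    pd i (fun y => pd j f y) x = pd j (fun y => pd i f y) x := by
  have hs := hf.isSymmSndFDerivAt (by simp)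
  have hd : DifferentiableAt ℝ (fderiv ℝ f) x :=
    (hf.fderiv_right (m := 1) (by norm_num)).differentiableAt (by simp)
  have key : ∀ a b : Fin 3, pd a (fun y => pd b f y) x = fderiv ℝ (fderiv ℝ f) x (e3 a) (e3 b) := by
    intro a b
    unfold pd
    rw [fderiv_clm_apply hd (differentiableAt_const _)]
    simp
  rw [key, key]
  exact hs _ _

lemma tsupport_pd_subset (f : V3 → ℝ) (j : Fin 3) : tsupport (fun x => pd j f x) ⊆ tsupport f :=
  tsupport_fderiv_apply_subset ℝ (e3 j)

lemma hasCompactSupport_pd {f : V3 → ℝ} (hf : HasCompactSupport f) (j : Fin 3) :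
    HasCompactSupport (fun x => pd j f x) :=
  hf.fderiv_apply ℝ (e3 j)

lemma continuous_mul_of_tsupport {f g : V3 → ℝ} {U : Set V3} (hU : IsOpen U)
    (hf : ContinuousOn f U) (hg : Continuous g) (hgU : tsupport g ⊆ U) :
    Continuous (fun x => f x * g x) := by
  apply continuous_of_tsupport
  intro x hx
  have hx' : x ∈ tsupport g := (tsupport_mul_subset_right (f := f) (g := g)) hx
  exact ((hf.continuousAt (hU.mem_nhds (hgU hx'))).mul hg.continuousAt)

lemma integrable_mul_of_tsupport {f g : V3 → ℝ} {U : Set V3} (hU : IsOpen U)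
    (hf : ContinuousOn f U) (hg : Continuous g) (hgc : HasCompactSupport g) (hgU : tsupport g ⊆ U) :
    Integrable (fun x => f x * g x) :=
  (continuous_mul_of_tsupport hU hf hg hgU).integrable_of_hasCompactSupport hgc.mul_left

/-- integration by parts -/
lemma ibp {f g : V3 → ℝ} {U : Set V3} (hU : IsOpen U)
    (hf : ContDiffOn ℝ 1 f U) (hg : ContDiff ℝ 1 g) (hgc : HasCompactSupport g)
    (hgU : tsupport g ⊆ U) (j : Fin 3) :
    ∫ x, f x * pd j g x = - ∫ x, pd j f x * g x := by
  apply integral_mul_fderiv_eq_neg_fderiv_mul_of_integrable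
  · exact integrable_mul_of_tsupport hU (contDiffOn_pd (m := 0) hU hf (by simp) j).continuousOn
      hg.continuous hgc hgU
  · exact integrable_mul_of_tsupport hU hf.continuousOn
      (contDiff_pd (m := 0) hg (by simp) j).continuous (hasCompactSupport_pd hgc j)
      ((tsupport_pd_subset g j).trans hgU)
  · exact integrable_mul_of_tsupport hU hf.continuousOn hg.continuous hgc hgU
  · intro x hx
    exact (hf.contDiffAt (hU.mem_nhds (hgU hx))).differentiableAt (by simp)
  · intro x _
    exact hg.differentiable (by simp) x


/-! ### Part 2: kernel and gradient representation -/

lemma nsq_eq (y : V3) : ‖y‖ ^ 2 = y 0 ^ 2 + y 1 ^ 2 + y 2 ^ 2 := by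
  rw [EuclideanSpace.real_norm_sq_eq, Fin.sum_univ_three]

lemma differentiableAt_coord (i : Fin 3) (x : V3) : DifferentiableAt ℝ (fun y : V3 => y i) x :=
  (EuclideanSpace.proj i : V3 →L[ℝ] ℝ).differentiableAt

lemma contDiff_coord (i : Fin 3) {n : WithTop ℕ∞} : ContDiff ℝ n (fun y : V3 => y i) :=
  (EuclideanSpace.proj i : V3 →L[ℝ] ℝ).contDiff

lemma pd_nsq (j : Fin 3) (y : V3) : pd j (fun y : V3 => ‖y‖ ^ 2) y = 2 * y j := by
  have h : (fun y : V3 => ‖y‖ ^ 2) = fun y : V3 => ∑ i, y i * y i := by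
    ext y; rw [EuclideanSpace.real_norm_sq_eq]; simp [sq]
  have hd := fun i => differentiableAt_coord i y
  rw [h, pd_sum (f := fun i (y : V3) => y i * y i) _ (fun i _ => (hd i).fun_mul (hd i))]
  simp_rw [pd_mul j (hd _) (hd _), pd_coord]
  fin_cases j <;> simp [Fin.sum_univ_three] <;> ring

lemma exists_kernel : ∃ ζ η : V3 → ℝ, ContDiff ℝ (⊤ : ℕ∞) ζ ∧ ContDiff ℝ (⊤ : ℕ∞) η ∧
    tsupport ζ ⊆ closedBall 0 1 ∧ tsupport η ⊆ closedBall 0 1 ∧ (∫ y, η y) = 1 ∧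
    ∀ j y, pd j ζ y = η y * y j := by
  set f : ℝ → ℝ := fun s => Real.smoothTransition (1 - s) with hf
  have hfs : ContDiff ℝ (⊤ : ℕ∞) f := Real.smoothTransition.contDiff.comp (contDiff_const.sub contDiff_id)
  have hfs' : ContDiff ℝ (⊤ : ℕ∞) (deriv f) := by
    have := (contDiff_succ_iff_deriv (n := (⊤ : ℕ∞)) (f := f) (𝕜 := ℝ)).1 (by simpa using hfs)
    exact this.2.2
  have hf0 : ∀ s, 1 ≤ s → f s = 0 := fun s hs => Real.smoothTransition.zero_of_nonpos (by linarith)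
  have hf'0 : ∀ s, 1 < s → deriv f s = 0 := by
    intro s hs
    have : f =ᶠ[𝓝 s] fun _ => 0 := by
      filter_upwards [lt_mem_nhds hs] with a ha using hf0 a ha.le
    rw [this.deriv_eq]; simp
  have hanti : Antitone f := by
    intro a b hab
    exact Real.smoothTransition.monotone (by linarith)
  have hn : ContDiff ℝ (⊤ : ℕ∞) (fun y : V3 => ‖y‖ ^ 2) := contDiff_norm_sq ℝ
  set ζ0 : V3 → ℝ := fun y => f (‖y‖ ^ 2) with hζ0
  set η0 : V3 → ℝ := fun y => 2 * deriv f (‖y‖ ^ 2) with hη0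
  have hζ0s : ContDiff ℝ (⊤ : ℕ∞) ζ0 := hfs.comp hn
  have hη0s : ContDiff ℝ (⊤ : ℕ∞) η0 := contDiff_const.mul (hfs'.comp hn)
  have big : ∀ y : V3, y ∉ closedBall (0 : V3) 1 → 1 < ‖y‖ ^ 2 := by
    intro y hy
    simp at hy
    nlinarith
  have hs1 : tsupport ζ0 ⊆ closedBall 0 1 := by
    apply closure_minimal _ isClosed_closedBall
    intro y hy
    by_contra h
    exact hy (hf0 _ (big y h).le)
  have hs2 : tsupport η0 ⊆ closedBall 0 1 := by
    apply closure_minimal _ isClosed_closedBall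
    intro y hy
    by_contra h
    apply hy
    simp [hη0, hf'0 _ (big y h)]
  have hpd : ∀ j y, pd j ζ0 y = η0 y * y j := by
    intro j y
    have := pd_comp_real (F := f) (f := fun y : V3 => ‖y‖ ^ 2) (x := y) j
      ((hfs.differentiable (by simp)).differentiableAt.hasDerivAt)
      (hn.differentiable (by simp) y)
    rw [pd_nsq] at this
    rw [hζ0, this, hη0]; ring
  have hI : 0 < ∫ y, - η0 y := by
    have hc : HasCompactSupport (fun y => - η0 y) := by
      apply HasCompactSupport.of_support_subset_isCompact (isCompact_closedBall (0 : V3) 1)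
      intro y hy
      apply hs2
      apply subset_tsupport
      simpa using hy
    have hnn : ∀ y, 0 ≤ - η0 y := by
      intro y
      have := hanti.deriv_nonpos (x := ‖y‖ ^ 2)
      simp only [hη0]; linarith
    have hne : ∃ y, - η0 y ≠ 0 := by
      by_contra! h
      have h2 : ∀ s : ℝ, 0 ≤ s → deriv f s = 0 := by
        intro s hs
        have := h (EuclideanSpace.single 0 (Real.sqrt s))
        simp only [hη0] at this
        rw [PiLp.norm_single] at this
        simp [Real.sq_sqrt hs] at this
        exact this
      have h3 : f 0 = f 1 := by
        have := (convex_Icc (0:ℝ) 1).is_const_of_fderivWithin_eq_zero (𝕜 := ℝ) (f := f)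
          (hfs.differentiable (by simp)).differentiableOn ?_ (x := 0) (y := 1) (by simp) (by simp)
        · exact this
        · intro s hs
          have hd : HasDerivAt f 0 s := by
            rw [← h2 s hs.1]
            exact (hfs.differentiable (by simp)).differentiableAt.hasDerivAt
          have h5 := hd.hasFDerivAt.hasFDerivWithinAt (s := Set.Icc (0:ℝ) 1)
          rw [h5.fderivWithin (uniqueDiffOn_Icc (by norm_num) s hs)]
          ext; simp
      simp [hf] at h3
    obtain ⟨y, hy⟩ := hne
    exact hη0s.continuous.neg.integral_pos_of_hasCompactSupport_nonneg_nonzero hc hnn hy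
  set I : ℝ := ∫ y, η0 y with hIdef
  have hI0 : I ≠ 0 := by
    rw [integral_neg] at hI; intro h; linarith
  refine ⟨fun y => I⁻¹ * ζ0 y, fun y => I⁻¹ * η0 y, contDiff_const.mul hζ0s, contDiff_const.mul hη0s,
    (tsupport_mul_subset_right).trans hs1, (tsupport_mul_subset_right).trans hs2, ?_, ?_⟩
  · rw [integral_const_mul, ← hIdef, inv_mul_cancel₀ hI0]
  · intro j y
    rw [pd_const_mul j _ (hζ0s.differentiable (by simp) y), hpd]; ring

/-- change of a function by an affine map is still smooth -/
lemma contDiff_affine {f : V3 → ℝ} {n : WithTop ℕ∞} (hf : ContDiff ℝ n f) (x0 : V3) (t : ℝ) :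
    ContDiff ℝ n (fun y => f (x0 + t • y)) :=
  hf.comp (by fun_prop)

lemma ibp' {f g : V3 → ℝ}
    (hf : ContDiff ℝ 1 f) (hg : ContDiff ℝ 1 g) (hgc : HasCompactSupport g) (j : Fin 3) :
    ∫ x, f x * pd j g x = - ∫ x, pd j f x * g x :=
  ibp isOpen_univ hf.contDiffOn hg hgc (Set.subset_univ _) j

/-- integration by parts with affine change -/
lemma ibp_affine {f g : V3 → ℝ} (x0 : V3) (t : ℝ)
    (hf : ContDiff ℝ 1 f) (hg : ContDiff ℝ 1 g) (hgc : HasCompactSupport g) (j : Fin 3) :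
    t * ∫ y, pd j f (x0 + t • y) * g y = - ∫ y, f (x0 + t • y) * pd j g y := by
  rw [ibp' (contDiff_affine hf x0 t) hg hgc j, neg_neg, ← integral_const_mul]
  congr 1; ext y
  rw [pd_affine _ _ _ _ (hf.differentiable (by simp) _)]; ring

lemma pd_dir {f : V3 → ℝ} {x : V3} (y : V3) : fderiv ℝ f x y = ∑ j, y j * pd j f x := by
  have h : y = ∑ j, y j • e3 j := by
    ext i
    fin_cases i <;> simp [Fin.sum_univ_three, e3_apply]
  conv_lhs => rw [h]
  simp [pd]

lemma gradient_repr {ζ η : V3 → ℝ} (hζ : ContDiff ℝ (⊤ : ℕ∞) ζ) (hη : ContDiff ℝ (⊤ : ℕ∞) η)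
    (hζ1 : tsupport ζ ⊆ closedBall 0 1) (hη1 : tsupport η ⊆ closedBall 0 1)
    (hI : (∫ y, η y) = 1) (hpd : ∀ j y, pd j ζ y = η y * y j)
    {v : Fin 3 → V3 → ℝ} (hv : ∀ j, ContDiff ℝ 1 (v j))
    (hcurl : ∀ j k x, pd j (v k) x = pd k (v j) x) (x0 : V3) {r K : ℝ} (hr : 0 < r) (k : Fin 3)
    (hweak : ∀ t, 0 < t → t < r →
      |∑ j, ∫ y, v j (x0 + t • y) * pd j (fun z => pd k ζ z) y| ≤ t * K) :
    |v k x0 - ∫ y, v k (x0 + r • y) * η y| ≤ K * r := by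
  have hζc : HasCompactSupport ζ := HasCompactSupport.of_support_subset_isCompact
    (isCompact_closedBall (0 : V3) 1) ((subset_tsupport _).trans hζ1)
  have hηc : HasCompactSupport η := HasCompactSupport.of_support_subset_isCompact
    (isCompact_closedBall (0 : V3) 1) ((subset_tsupport _).trans hη1)
  set φ : ℝ → ℝ := fun t => ∫ y, v k (x0 + t • y) * η y with hφ
  have hcontd : Continuous (fderiv ℝ (v k)) := (hv k).continuous_fderiv (by simp)
  have hder : ∀ t, HasDerivAt φ (∫ y, fderiv ℝ (v k) (x0 + t • y) y * η y) t := by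
    intro t
    obtain ⟨B, hB⟩ : ∃ B, ∀ z ∈ closedBall x0 (|t| + 1), ‖fderiv ℝ (v k) z‖ ≤ B :=
      (isCompact_closedBall x0 (|t|+1)).exists_bound_of_continuousOn hcontd.continuousOn
    refine (hasDerivAt_integral_of_dominated_loc_of_deriv_le (s := ball t 1)
      (F := fun t y => v k (x0 + t • y) * η y)
      (F' := fun t y => fderiv ℝ (v k) (x0 + t • y) y * η y)
      (bound := fun y => B * ‖η y‖) (ball_mem_nhds t one_pos) ?_ ?_ ?_ ?_ ?_ ?_).2
    · refine Eventually.of_forall fun s => ?_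
      exact (((contDiff_affine (hv k) x0 s).continuous).mul hη.continuous).aestronglyMeasurable
    · exact (((contDiff_affine (hv k) x0 t).continuous).mul
        hη.continuous).integrable_of_hasCompactSupport hηc.mul_left
    · apply Continuous.aestronglyMeasurable
      have := hη.continuous
      fun_prop
    · refine Eventually.of_forall fun y s hs => ?_
      by_cases hy : y ∈ closedBall (0 : V3) 1
      · rw [norm_mul]
        apply mul_le_mul_of_nonneg_right _ (norm_nonneg _)
        simp at hy
        have h1 : x0 + s • y ∈ closedBall x0 (|t| + 1) := by
          simp [norm_smul]
          have h2 : |s| ≤ |t| + 1 := by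
            have : |s - t| < 1 := by simpa [Real.dist_eq] using hs
            have := abs_sub_abs_le_abs_sub s t
            linarith
          nlinarith [abs_nonneg s, norm_nonneg y]
        calc ‖fderiv ℝ (v k) (x0 + s • y) y‖ ≤ ‖fderiv ℝ (v k) (x0 + s • y)‖ * ‖y‖ :=
              ContinuousLinearMap.le_opNorm _ _
          _ ≤ ‖fderiv ℝ (v k) (x0 + s • y)‖ * 1 := by gcongr
          _ ≤ B := by rw [mul_one]; exact hB _ h1
      · have : η y = 0 := by
          by_contra h
          exact hy (hη1 (subset_tsupport _ h))
        simp [this]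
    · exact ((hη.continuous.norm).integrable_of_hasCompactSupport hηc.norm).const_mul B
    · refine Eventually.of_forall fun y s hs => ?_
      have h1 : HasDerivAt (fun s : ℝ => x0 + s • y) y s := by
        simpa using ((hasDerivAt_id s).smul_const y).const_add x0
      have h2 := ((hv k).differentiable (by simp) (x0 + s • y)).hasFDerivAt.comp_hasDerivAt s h1
      exact h2.mul_const _
  have hval : ∀ t, 0 < t → t < r → |∫ y, fderiv ℝ (v k) (x0 + t • y) y * η y| ≤ K := by
    intro t ht htr
    have hint : ∀ j, Integrable (fun y => pd k (v j) (x0 + t • y) * pd j ζ y) := by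
      intro j
      have hc1 : Continuous (fun y => pd k (v j) (x0 + t • y)) :=
        ((contDiff_pd (m := 0) (hv j) (by simp) k).continuous).comp (by fun_prop)
      exact (hc1.mul (contDiff_pd_top hζ j).continuous).integrable_of_hasCompactSupport
        (hasCompactSupport_pd hζc j).mul_left
    have e1 : ∫ y, fderiv ℝ (v k) (x0 + t • y) y * η y
        = ∑ j, ∫ y, pd k (v j) (x0 + t • y) * pd j ζ y := by
      rw [← integral_finsetSum _ (fun j _ => hint j)]
      congr 1; ext y
      rw [pd_dir, Finset.sum_mul]
      refine Finset.sum_congr rfl fun j _ => ?_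
      rw [hpd, hcurl j k]; ring
    have e2 : t * (∫ y, fderiv ℝ (v k) (x0 + t • y) y * η y)
        = - ∑ j, ∫ y, v j (x0 + t • y) * pd j (fun z => pd k ζ z) y := by
      rw [e1, Finset.mul_sum, ← Finset.sum_neg_distrib]
      refine Finset.sum_congr rfl fun j _ => ?_
      rw [ibp_affine x0 t (hv j) (contDiff_pd hζ (by norm_cast) j) (hasCompactSupport_pd hζc j) k]
      congr 1; congr 1; ext y
      rw [pd_comm (hζ.contDiffAt.of_le (by norm_cast))]
    have := hweak t ht htr
    rw [← abs_neg, ← e2, abs_mul, abs_of_pos ht] at this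
    exact le_of_mul_le_mul_left this ht
  have h0 : φ 0 = v k x0 := by
    simp [hφ, integral_const_mul, hI]
  obtain ⟨c, hc, hc2⟩ := exists_hasDerivAt_eq_slope φ _ hr
    (fun t _ => (hder t).continuousAt.continuousWithinAt) (fun t _ => hder t)
  have h3 := hval c hc.1 hc.2
  rw [hc2, h0, sub_zero, abs_div, abs_of_pos hr, div_le_iff₀ hr] at h3
  rw [abs_sub_comm]
  exact h3


/-! ### Part 3: interior estimates -/

lemma affine_mem {x0 y : V3} {t r : ℝ} (ht : 0 ≤ t) (htr : t ≤ r) (hy : y ∈ closedBall (0 : V3) 1) :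
    x0 + t • y ∈ closedBall x0 r := by
  simp [norm_smul] at hy ⊢
  rw [abs_of_nonneg ht]
  nlinarith [norm_nonneg y]

lemma affine_mem' {x0 y : V3} {t r : ℝ} (ht : 0 ≤ t) (htr : t < r) (hy : y ∈ closedBall (0 : V3) 1) :
    x0 + t • y ∈ ball x0 r := by
  simp [norm_smul] at hy ⊢
  rw [abs_of_nonneg ht]
  nlinarith [norm_nonneg y]

lemma integral_congr_unit {f f' g : V3 → ℝ} (hg : tsupport g ⊆ closedBall 0 1)
    (h : ∀ y ∈ closedBall (0 : V3) 1, f y = f' y) : ∫ y, f y * g y = ∫ y, f' y * g y := by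
  congr 1; ext y
  by_cases hy : y ∈ closedBall (0 : V3) 1
  · rw [h y hy]
  · have : g y = 0 := by
      by_contra hh
      exact hy (hg (subset_tsupport _ hh))
    simp [this]

lemma hcs_unit {g : V3 → ℝ} (hg : tsupport g ⊆ closedBall 0 1) : HasCompactSupport g :=
  HasCompactSupport.of_support_subset_isCompact
    (isCompact_closedBall (0 : V3) 1) ((subset_tsupport _).trans hg)

lemma integral_bound_unit {f g : V3 → ℝ} (hg : Continuous g) (hg1 : tsupport g ⊆ closedBall 0 1)
    {M : ℝ} (h : ∀ y ∈ closedBall (0 : V3) 1, |f y| ≤ M) :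
    |∫ y, f y * g y| ≤ M * ∫ y, |g y| := by
  rw [← integral_const_mul]
  have hint : Integrable (fun y => M * |g y|) :=
    ((hg.abs).integrable_of_hasCompactSupport ((hcs_unit hg1).comp_left abs_zero)).const_mul M
  have hb : ∀ y, ‖f y * g y‖ ≤ M * |g y| := by
    intro y
    by_cases hy : y ∈ closedBall (0 : V3) 1
    · rw [Real.norm_eq_abs, abs_mul]
      exact mul_le_mul_of_nonneg_right (h y hy) (abs_nonneg _)
    · have : g y = 0 := by
        by_contra hh
        exact hy (hg1 (subset_tsupport _ hh))
      simp [this]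
  exact norm_integral_le_of_norm_le hint (Eventually.of_forall hb)

lemma integrable_affine_mul {f g : V3 → ℝ} (x0 : V3) (t : ℝ) (hf : Continuous f) (hg : Continuous g)
    (hg1 : tsupport g ⊆ closedBall 0 1) : Integrable (fun y => f (x0 + t • y) * g y) :=
  ((hf.comp (by fun_prop)).mul hg).integrable_of_hasCompactSupport (hcs_unit hg1).mul_left

lemma gradient_bound : ∃ C : ℝ, 1 ≤ C ∧ ∀ (w : V3 → ℝ) (x0 : V3) (r M H : ℝ), ContDiff ℝ 2 w →
    0 < r → (∀ x ∈ closedBall x0 r, |w x| ≤ M) → (∀ x ∈ closedBall x0 r, |lap3 w x| ≤ H) →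
    ∀ k, |pd k w x0| ≤ C * (M / r + r * H) := by
  obtain ⟨ζ, η, hζ, hη, hζ1, hη1, hI, hpd⟩ := exists_kernel
  set C : ℝ := 1 + (∑ k, ∫ y, |pd k ζ y|) + (∑ k, ∫ y, |pd k η y|) with hC
  have hA : ∀ k, 0 ≤ ∫ y, |pd k ζ y| := fun k => integral_nonneg fun y => abs_nonneg _
  have hB : ∀ k, 0 ≤ ∫ y, |pd k η y| := fun k => integral_nonneg fun y => abs_nonneg _
  have hA1 : 0 ≤ ∑ k, ∫ y, |pd k ζ y| := Finset.sum_nonneg fun k _ => hA k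
  have hB1 : 0 ≤ ∑ k, ∫ y, |pd k η y| := Finset.sum_nonneg fun k _ => hB k
  refine ⟨C, by linarith, ?_⟩
  intro w x0 r M H hw hr hM hH k
  have hM0 : 0 ≤ M := (abs_nonneg _).trans (hM x0 (by simp [hr.le]))
  have hH0 : 0 ≤ H := (abs_nonneg _).trans (hH x0 (by simp [hr.le]))
  have hv : ∀ j, ContDiff ℝ 1 (fun x => pd j w x) := fun j => contDiff_pd hw (by norm_num) j
  have hξ : ContDiff ℝ (⊤ : ℕ∞) (fun z => pd k ζ z) := contDiff_pd_top hζ k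
  have hξ1 : tsupport (fun z => pd k ζ z) ⊆ closedBall 0 1 := (tsupport_pd_subset ζ k).trans hζ1
  have key := gradient_repr hζ hη hζ1 hη1 hI hpd hv (fun j k x => pd_comm hw.contDiffAt j k) x0 hr k
    (K := H * ∫ y, |pd k ζ y|) (by
      intro t ht htr
      have e1 : ∀ j, ∫ y, pd j w (x0 + t • y) * pd j (fun z => pd k ζ z) y
          = - (t * ∫ y, pd j (fun z => pd j w z) (x0 + t • y) * pd k ζ y) := by
        intro j
        rw [ibp_affine x0 t (hv j) (hξ.of_le (by norm_cast)) (hcs_unit hξ1) j, neg_neg]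
      simp_rw [e1]
      rw [Finset.sum_neg_distrib, ← Finset.mul_sum, abs_neg, abs_mul, abs_of_pos ht,
        ← integral_finsetSum]
      · simp_rw [← Finset.sum_mul]
        refine mul_le_mul_of_nonneg_left ?_ ht.le
        exact integral_bound_unit hξ.continuous hξ1
          (fun y hy => hH _ (affine_mem ht.le htr.le hy))
      · intro j _
        exact integrable_affine_mul x0 t (contDiff_pd (m := 0) (hv j) (by simp) j).continuous
          hξ.continuous hξ1)
  have e2 : ∫ y, pd k w (x0 + r • y) * η y = - (∫ y, w (x0 + r • y) * pd k η y) / r := by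
    rw [← ibp_affine x0 r (hw.of_le (by norm_num)) (hη.of_le (by norm_cast)) (hcs_unit hη1) k]
    field_simp
  have e3 : |∫ y, w (x0 + r • y) * pd k η y| ≤ M * ∫ y, |pd k η y| :=
    integral_bound_unit (contDiff_pd_top hη k).continuous ((tsupport_pd_subset η k).trans hη1)
      (fun y hy => hM _ (affine_mem hr.le le_rfl hy))
  have e4 : |∫ y, pd k w (x0 + r • y) * η y| ≤ M / r * ∫ y, |pd k η y| := by
    rw [e2, abs_div, abs_neg, abs_of_pos hr, div_le_iff₀ hr]
    calc _ ≤ _ := e3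
      _ = _ := by field_simp
  have h5 : ∫ y, |pd k ζ y| ≤ C := by
    have := Finset.single_le_sum (f := fun k => ∫ y, |pd k ζ y|) (fun k _ => hA k) (Finset.mem_univ k)
    linarith
  have h6 : ∫ y, |pd k η y| ≤ C := by
    have := Finset.single_le_sum (f := fun k => ∫ y, |pd k η y|) (fun k _ => hB k) (Finset.mem_univ k)
    linarith
  have h7 : M / r * ∫ y, |pd k η y| ≤ M / r * C := by gcongr
  have h8 : H * (∫ y, |pd k ζ y|) * r ≤ H * C * r := by gcongr
  have h9 := abs_sub_abs_le_abs_sub (pd k w x0) (∫ y, pd k w (x0 + r • y) * η y)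
  nlinarith

lemma lap_ibp {w g : V3 → ℝ} (x0 : V3) (t : ℝ) (hw : ContDiff ℝ 2 w) (hg : ContDiff ℝ 2 g)
    (hg1 : tsupport g ⊆ closedBall 0 1) :
    t ^ 2 * ∫ y, lap3 w (x0 + t • y) * g y = ∫ y, w (x0 + t • y) * lap3 g y := by
  have hv : ∀ j, ContDiff ℝ 1 (fun x => pd j w x) := fun j => contDiff_pd hw (by norm_num) j
  have hv' : ∀ j, ContDiff ℝ 1 (fun x => pd j g x) := fun j => contDiff_pd hg (by norm_num) j
  unfold lap3
  simp_rw [Finset.sum_mul, Finset.mul_sum]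
  rw [integral_finsetSum, integral_finsetSum, Finset.mul_sum]
  · refine Finset.sum_congr rfl fun j _ => ?_
    have h1 := ibp_affine x0 t (hv j) (hg.of_le (by norm_num)) (hcs_unit hg1) j
    have h2 := ibp_affine x0 t (hw.of_le (by norm_num)) (hv' j) (hasCompactSupport_pd (hcs_unit hg1) j) j
    rw [sq, mul_assoc, h1, mul_neg, h2, neg_neg]
  · intro j _
    exact integrable_affine_mul x0 t hw.continuous
      (contDiff_pd (m := 0) (hv' j) (by simp) j).continuous
      ((tsupport_pd_subset _ _).trans ((tsupport_pd_subset _ _).trans hg1))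
  · intro j _
    exact integrable_affine_mul x0 t (contDiff_pd (m := 0) (hv j) (by simp) j).continuous
      hg.continuous hg1

lemma continuous_lap {w : V3 → ℝ} (hw : ContDiff ℝ 2 w) : Continuous (lap3 w) := by
  unfold lap3
  refine continuous_finsetSum _ fun j _ => ?_
  exact (contDiff_pd (m := 0) (contDiff_pd (m := 1) hw (by norm_num) j) (by simp) j).continuous

lemma tsupport_lap {g : V3 → ℝ} {s : Set V3} (hs : IsClosed s) (hg : tsupport g ⊆ s) :
    tsupport (lap3 g) ⊆ s := by
  apply closure_minimal _ hs
  intro x hx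
  by_contra h
  apply hx
  unfold lap3
  refine Finset.sum_eq_zero fun j _ => ?_
  by_contra h2
  exact h (hg (tsupport_pd_subset _ _ (tsupport_pd_subset _ _ (subset_tsupport _ h2))))

lemma pressure_bound : ∃ C : ℝ, 1 ≤ C ∧ ∀ (u : Fin 3 → V3 → ℝ) (p : V3 → ℝ) (x0 : V3) (r M G : ℝ),
    (∀ i, ContDiff ℝ 2 (u i)) → ContDiff ℝ 2 p → 0 < r →
    (∀ x ∈ closedBall x0 r, ∀ i, pd i p x = lap3 (u i) x - ∑ j, u j x * pd j (u i) x) →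
    (∀ x ∈ closedBall x0 r, ∑ j, pd j (u j) x = 0) →
    (∀ x ∈ closedBall x0 r, ∀ i, |u i x| ≤ M) →
    (∀ x ∈ closedBall x0 r, ∀ i j, |pd j (u i) x| ≤ G) →
    ∀ k, |pd k p x0| ≤ C * (M / r ^ 2 + M * G + r * G ^ 2) := by
  obtain ⟨ζ, η, hζ, hη, hζ1, hη1, hI, hpd⟩ := exists_kernel
  set C1 : ℝ := ∑ k, ∫ y, |pd k ζ y| with hC1
  set C2 : ℝ := ∫ y, |lap3 η y| with hC2
  set C3 : ℝ := ∫ y, |η y| with hC3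
  have hA : ∀ k, 0 ≤ ∫ y, |pd k ζ y| := fun k => integral_nonneg fun y => abs_nonneg _
  have hA1 : 0 ≤ C1 := Finset.sum_nonneg fun k _ => hA k
  have hA2 : 0 ≤ C2 := integral_nonneg fun y => abs_nonneg _
  have hA3 : 0 ≤ C3 := integral_nonneg fun y => abs_nonneg _
  refine ⟨1 + 9 * C1 + C2 + 3 * C3, by linarith, ?_⟩
  intro u p x0 r M G hu hp hr hNS hdiv hM hG k
  have hM0 : 0 ≤ M := (abs_nonneg _).trans (hM x0 (by simp [hr.le]) 0)
  have hG0 : 0 ≤ G := (abs_nonneg _).trans (hG x0 (by simp [hr.le]) 0 0)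
  have hv : ∀ j, ContDiff ℝ 1 (fun x => pd j p x) := fun j => contDiff_pd hp (by norm_num) j
  have hdu : ∀ i j, ContDiff ℝ 1 (fun x => pd j (u i) x) := fun i j => contDiff_pd (hu i) (by norm_num) j
  have hu1 : ∀ i, ContDiff ℝ 1 (u i) := fun i => (hu i).of_le (by norm_num)
  have hηs := hη.of_le (m := 2) (by norm_cast)
  set f : Fin 3 → V3 → ℝ := fun i x => ∑ j, u j x * pd j (u i) x with hf
  have hfs : ∀ i, ContDiff ℝ 1 (f i) := fun i =>
    ContDiff.sum fun j _ => (hu1 j).mul (hdu i j)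
  have hξ : ContDiff ℝ (⊤ : ℕ∞) (fun z => pd k ζ z) := contDiff_pd_top hζ k
  have hξ1 : tsupport (fun z => pd k ζ z) ⊆ closedBall 0 1 := (tsupport_pd_subset ζ k).trans hζ1
  set ξ : V3 → ℝ := fun z => pd k ζ z with hξdef
  have hξ' : ∀ j, ContDiff ℝ (⊤ : ℕ∞) (fun z => pd j ξ z) := fun j => contDiff_pd_top hξ j
  have hξ1' : ∀ j, tsupport (fun z => pd j ξ z) ⊆ closedBall 0 1 :=
    fun j => (tsupport_pd_subset _ _).trans hξ1
  -- the weak Laplacian of the pressure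
  have hdivf : ∀ x ∈ ball x0 r, |∑ j, pd j (f j) x| ≤ 9 * G ^ 2 := by
    intro x hx
    have hxc := ball_subset_closedBall hx
    have e0 : ∀ j, pd j (f j) x
        = ∑ i, (pd j (u i) x * pd i (u j) x + u i x * pd i (fun z => pd j (u j) z) x) := by
      intro j
      rw [hf, pd_sum (f := fun i x => u i x * pd i (u j) x) j
        (fun i _ => ((hu1 i).mul (hdu j i)).differentiable (by simp) x)]
      refine Finset.sum_congr rfl fun i _ => ?_
      rw [pd_mul j ((hu1 i).differentiable (by simp) x) ((hdu j i).differentiable (by simp) x),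
        pd_comm (hu j).contDiffAt j i]
    have e1 : ∑ j, pd j (f j) x = ∑ j, ∑ i, pd j (u i) x * pd i (u j) x := by
      simp_rw [e0, Finset.sum_add_distrib]
      have : ∑ j, ∑ i, u i x * pd i (fun z => pd j (u j) z) x = 0 := by
        rw [Finset.sum_comm]
        refine Finset.sum_eq_zero fun i _ => ?_
        rw [← Finset.mul_sum, ← pd_sum i (fun j _ => (hdu j j).differentiable (by simp) x)]
        have : (fun y => ∑ j, pd j (u j) y) =ᶠ[𝓝 x] fun _ => 0 := by
          filter_upwards [isOpen_ball.mem_nhds hx] with z hz using hdiv z (ball_subset_closedBall hz)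
        rw [pd_congr i this, pd_const, mul_zero]
      rw [this, add_zero]
    rw [e1]
    calc |∑ j, ∑ i, pd j (u i) x * pd i (u j) x| ≤ ∑ j : Fin 3, ∑ i : Fin 3, G ^ 2 := by
          refine (Finset.abs_sum_le_sum_abs _ _).trans (Finset.sum_le_sum fun j _ => ?_)
          refine (Finset.abs_sum_le_sum_abs _ _).trans (Finset.sum_le_sum fun i _ => ?_)
          rw [abs_mul, sq]
          exact mul_le_mul (hG x hxc i j) (hG x hxc j i) (abs_nonneg _) hG0
      _ = 9 * G ^ 2 := by simp; ring
  have key := gradient_repr hζ hη hζ1 hη1 hI hpd hv (fun j k x => pd_comm hp.contDiffAt j k) x0 hr k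
    (K := 9 * G ^ 2 * ∫ y, |pd k ζ y|) (by
      intro t ht htr
      have e1 : ∀ j, ∫ y, pd j p (x0 + t • y) * pd j ξ y
          = (∫ y, lap3 (u j) (x0 + t • y) * pd j ξ y) - ∫ y, f j (x0 + t • y) * pd j ξ y := by
        intro j
        rw [← integral_sub, integral_congr_unit (hξ1' j)
          (f' := fun y => lap3 (u j) (x0 + t • y) - f j (x0 + t • y))]
        · congr 1; ext y; ring
        · intro y hy
          exact hNS _ (affine_mem ht.le htr.le hy) j
        · exact integrable_affine_mul x0 t (continuous_lap (hu j)) (hξ' j).continuous (hξ1' j)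
        · exact integrable_affine_mul x0 t (hfs j).continuous (hξ' j).continuous (hξ1' j)
      have e2 : ∑ j, ∫ y, lap3 (u j) (x0 + t • y) * pd j ξ y = 0 := by
        have hlξ : ContDiff ℝ 1 (lap3 ξ) := by
          unfold lap3
          exact ContDiff.sum fun i _ => (contDiff_pd_top (hξ' i) i).of_le (by norm_cast)
        have hlξ1 := tsupport_lap isClosed_closedBall hξ1
        have e3 : t ^ 2 * ∑ j, ∫ y, lap3 (u j) (x0 + t • y) * pd j ξ y
            = - (t * ∑ j, ∫ y, pd j (u j) (x0 + t • y) * lap3 ξ y) := by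
          rw [Finset.mul_sum, Finset.mul_sum, ← Finset.sum_neg_distrib]
          refine Finset.sum_congr rfl fun j _ => ?_
          rw [lap_ibp x0 t (hu j) ((hξ' j).of_le (by norm_cast)) (hξ1' j),
            ibp_affine x0 t (hu1 j) hlξ (hcs_unit hlξ1) j, neg_neg]
          congr 1; ext y; congr 1
          unfold lap3
          rw [pd_sum j (fun i _ => (contDiff_pd_top (hξ' i) i).differentiable (by simp) y)]
          refine Finset.sum_congr rfl fun i _ => ?_
          have h2 : (fun z => pd i (fun z => pd j ξ z) z) = fun z => pd j (fun z => pd i ξ z) z := by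
            ext z; exact pd_comm (hξ.contDiffAt.of_le (by norm_cast)) i j
          rw [pd_comm ((hξ' i).contDiffAt.of_le (by norm_cast)) j i, h2]
        have e5 : ∑ j, ∫ y, pd j (u j) (x0 + t • y) * lap3 ξ y = 0 := by
          rw [← integral_finsetSum]
          · simp_rw [← Finset.sum_mul]
            rw [integral_congr_unit hlξ1 (f' := fun _ => 0)]
            · simp
            · intro y hy
              exact hdiv _ (affine_mem ht.le htr.le hy)
          · intro j _
            exact integrable_affine_mul x0 t (hdu j j).continuous hlξ.continuous hlξ1
        rw [e5, mul_zero, neg_zero] at e3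
        exact (mul_eq_zero.1 e3).resolve_left (by positivity)
      rw [Finset.sum_congr rfl (fun j _ => e1 j)]
      rw [Finset.sum_sub_distrib, e2, zero_sub, ← Finset.sum_neg_distrib]
      have e4 : ∀ j, - ∫ y, f j (x0 + t • y) * pd j ξ y
          = t * ∫ y, pd j (f j) (x0 + t • y) * ξ y := by
        intro j
        rw [ibp_affine x0 t (hfs j) (hξ.of_le (by norm_cast)) (hcs_unit hξ1) j]
      simp_rw [e4]
      rw [← Finset.mul_sum, abs_mul, abs_of_pos ht, ← integral_finsetSum]
      · simp_rw [← Finset.sum_mul]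
        refine mul_le_mul_of_nonneg_left ?_ ht.le
        exact integral_bound_unit hξ.continuous hξ1
          (fun y hy => hdivf _ (affine_mem' ht.le htr hy))
      · intro j _
        exact integrable_affine_mul x0 t (contDiff_pd (m := 0) (hfs j) (by simp) j).continuous
          hξ.continuous hξ1)
  have e5 : ∫ y, pd k p (x0 + r • y) * η y
      = (∫ y, lap3 (u k) (x0 + r • y) * η y) - ∫ y, f k (x0 + r • y) * η y := by
    rw [← integral_sub, integral_congr_unit hη1
      (f' := fun y => lap3 (u k) (x0 + r • y) - f k (x0 + r • y))]
    · congr 1; ext y; ring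
    · intro y hy
      exact hNS _ (affine_mem hr.le le_rfl hy) k
    · exact integrable_affine_mul x0 r (continuous_lap (hu k)) hη.continuous hη1
    · exact integrable_affine_mul x0 r (hfs k).continuous hη.continuous hη1
  have e6 : |∫ y, lap3 (u k) (x0 + r • y) * η y| ≤ M / r ^ 2 * C2 := by
    have h1 := lap_ibp x0 r (hu k) hηs hη1
    have h2 : |∫ y, u k (x0 + r • y) * lap3 η y| ≤ M * C2 :=
      integral_bound_unit (continuous_lap hηs) (tsupport_lap isClosed_closedBall hη1)
        (fun y hy => hM _ (affine_mem hr.le le_rfl hy) k)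
    rw [← h1, abs_mul, abs_of_pos (by positivity)] at h2
    rw [div_mul_eq_mul_div, le_div_iff₀ (by positivity)]
    linarith
  have e7 : |∫ y, f k (x0 + r • y) * η y| ≤ 3 * (M * G) * C3 := by
    refine integral_bound_unit hη.continuous hη1 (fun y hy => ?_)
    have hx := affine_mem (x0 := x0) hr.le le_rfl hy
    refine (Finset.abs_sum_le_sum_abs _ _).trans ?_
    calc ∑ i, |u i (x0 + r • y) * pd i (u k) (x0 + r • y)| ≤ ∑ i : Fin 3, M * G := by
          refine Finset.sum_le_sum fun i _ => ?_
          rw [abs_mul]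
          exact mul_le_mul (hM _ hx i) (hG _ hx k i) (abs_nonneg _) hM0
      _ = 3 * (M * G) := by simp
  have h5 : ∫ y, |pd k ζ y| ≤ C1 :=
    Finset.single_le_sum (f := fun k => ∫ y, |pd k ζ y|) (fun k _ => hA k) (Finset.mem_univ k)
  have h8 : 9 * G ^ 2 * (∫ y, |pd k ζ y|) * r ≤ 9 * G ^ 2 * C1 * r := by gcongr
  have h9 := abs_sub_abs_le_abs_sub (pd k p x0) (∫ y, pd k p (x0 + r • y) * η y)
  have h10 := abs_sub (∫ y, lap3 (u k) (x0 + r • y) * η y) (∫ y, f k (x0 + r • y) * η y)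
  rw [← e5] at h10
  have q1 : 0 ≤ M / r ^ 2 := by positivity
  have q2 : 0 ≤ M * G := by positivity
  have q3 : 0 ≤ r * G ^ 2 := by positivity
  have : |pd k p x0| ≤ 9 * (r * G ^ 2) * C1 + M / r ^ 2 * C2 + 3 * (M * G) * C3 := by linarith
  have r1 := mul_nonneg q1 hA1
  have r2 := mul_nonneg q1 hA3
  have r3 := mul_nonneg q2 hA1
  have r4 := mul_nonneg q2 hA2
  have r5 := mul_nonneg q3 hA2
  have r6 := mul_nonneg q3 hA3
  linarith


/-! ### Part 4: the interior estimate -/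

lemma interior_est : ∃ C c0 : ℝ, 1 ≤ C ∧ 0 < c0 ∧
    ∀ (u : Fin 3 → V3 → ℝ) (p : V3 → ℝ) (x0 : V3) (R M : ℝ),
    (∀ i, ContDiff ℝ 2 (u i)) → ContDiff ℝ 2 p → 0 < R → 0 < M →
    (∀ x ∈ closedBall x0 R, ∀ i, pd i p x = lap3 (u i) x - ∑ j, u j x * pd j (u i) x) →
    (∀ x ∈ closedBall x0 R, ∑ j, pd j (u j) x = 0) →
    (∀ x ∈ closedBall x0 R, ∀ i, |u i x| ≤ M) → M * R ≤ c0 →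
    (∀ i j, |pd j (u i) x0| ≤ C * (M / R)) ∧ ∀ k, |pd k p x0| ≤ C * (M / R ^ 2) := by
  obtain ⟨C1, hC1, hgrad⟩ := gradient_bound
  obtain ⟨C2, hC2, hpress⟩ := pressure_bound
  set K : ℝ := 3 * (C2 * (C1 + 2 * C1 ^ 2) + 3 * C1) with hK
  have hK1 : 1 ≤ K := by nlinarith [mul_nonneg (by linarith : 0 ≤ C2) (by positivity : 0 ≤ C1 + 2 * C1 ^ 2)]
  refine ⟨C1 * (2 + 192 * C2) + 96 * C2 + 3 * (C1 * (2 + 192 * C2)), 1 / (8 * K),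
    by nlinarith, by positivity, ?_⟩
  intro u p x0 R M hu hp hR hM hNS hdiv hub hMR
  have hc0 : 1 / (8 * K) ≤ 1 := by
    rw [div_le_one (by positivity)]; linarith
  set L : V3 → ℝ := fun x => ∑ i, |lap3 (u i) x| with hL
  have hLc : Continuous L := continuous_finsetSum _ fun i _ => (continuous_lap (hu i)).abs
  have hL0 : ∀ x, 0 ≤ L x := fun x => Finset.sum_nonneg fun i _ => abs_nonneg _
  have hLi : ∀ i x, |lap3 (u i) x| ≤ L x := fun i x =>
    Finset.single_le_sum (f := fun i => |lap3 (u i) x|) (fun i _ => abs_nonneg _) (Finset.mem_univ i)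
  obtain ⟨x1, hx1, hmax⟩ := (isCompact_closedBall x0 R).exists_isMaxOn ⟨x0, by simp [hR.le]⟩
    (f := fun x => (R - dist x x0) ^ 2 * L x) (by fun_prop)
  set D : ℝ := (R - dist x1 x0) ^ 2 * L x1 with hD
  have hmax' : ∀ x ∈ closedBall x0 R, (R - dist x x0) ^ 2 * L x ≤ D := fun x hx => hmax hx
  have hD0 : 0 ≤ D := mul_nonneg (sq_nonneg _) (hL0 _)
  have hDM : D ≤ 96 * C2 * M := by
    by_cases h4 : D ≤ 4 * M
    · nlinarith
    push Not at h4
    have hDpos : 0 < D := by linarith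
    have hd1 : 0 < R - dist x1 x0 := by
      rcases (sub_nonneg.2 (mem_closedBall.1 hx1)).eq_or_lt with h | h
      · exfalso; rw [hD, ← h] at hDpos; simp at hDpos
      · exact h
    set d : ℝ := (R - dist x1 x0) / 2 with hd
    have hdpos : 0 < d := by positivity
    set s : ℝ := √(M / D) with hs
    have hspos : 0 < s := Real.sqrt_pos.2 (by positivity)
    have hs2 : s ^ 2 * D = M := by
      rw [hs, Real.sq_sqrt (by positivity)]; field_simp
    have hs12 : s ≤ 1 / 2 := by
      by_contra h
      push Not at h
      have : 1 / 4 < s ^ 2 := by nlinarith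
      nlinarith
    have hLb : ∀ x ∈ closedBall x1 d, L x ≤ D / d ^ 2 := by
      intro x hx
      have h1 : dist x x0 ≤ dist x x1 + dist x1 x0 := dist_triangle _ _ _
      have h2 : d ≤ R - dist x x0 := by
        have := mem_closedBall.1 hx
        linarith
      have h3 := hmax' x (by rw [mem_closedBall]; linarith)
      rw [le_div_iff₀ (by positivity)]
      refine le_trans ?_ h3
      rw [mul_comm]
      exact mul_le_mul_of_nonneg_right (by gcongr) (hL0 _)
    have hsub : closedBall x1 d ⊆ closedBall x0 R := by
      intro x hx
      have h1 : dist x x0 ≤ dist x x1 + dist x1 x0 := dist_triangle _ _ _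
      have := mem_closedBall.1 hx
      rw [mem_closedBall]; linarith
    have hsub2 : closedBall x1 (d / 2) ⊆ closedBall x1 d := closedBall_subset_closedBall (by linarith)
    have hG : ∀ x ∈ closedBall x1 (d / 2), ∀ i j, |pd j (u i) x| ≤ 2 * C1 * s * D / d := by
      intro x hx i j
      have hsubx : closedBall x (s * d) ⊆ closedBall x1 d := by
        intro y hy
        have h1 : dist y x1 ≤ dist y x + dist x x1 := dist_triangle _ _ _
        have h2 := mem_closedBall.1 hy
        have h3 := mem_closedBall.1 hx
        rw [mem_closedBall]; nlinarith
      have := hgrad (u i) x (s * d) M (D / d ^ 2) (hu i) (by positivity)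
        (fun y hy => hub y (hsub (hsubx hy)) i)
        (fun y hy => (hLi i y).trans (hLb y (hsubx hy))) j
      refine this.trans (le_of_eq ?_)
      rw [← hs2]
      field_simp
      ring
    have hP := hpress u p x1 (d / 2) M (2 * C1 * s * D / d) hu hp (by positivity)
      (fun x hx => hNS x (hsub (hsub2 hx))) (fun x hx => hdiv x (hsub (hsub2 hx)))
      (fun x hx => hub x (hsub (hsub2 hx))) hG
    have hMd : M * d ≤ 1 / (8 * K) := by
      refine le_trans ?_ hMR
      have : d ≤ R := by have := dist_nonneg (x := x1) (y := x0); linarith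
      gcongr
    have hx1' : x1 ∈ closedBall x1 (d / 2) := by simp; positivity
    have hlap : ∀ i, |lap3 (u i) x1| ≤ C2 * (M / (d / 2) ^ 2 + M * (2 * C1 * s * D / d)
        + d / 2 * (2 * C1 * s * D / d) ^ 2) + 3 * (M * (2 * C1 * s * D / d)) := by
      intro i
      have e := hNS x1 hx1 i
      have e' : lap3 (u i) x1 = pd i p x1 + ∑ j, u j x1 * pd j (u i) x1 := by linarith
      rw [e']
      refine (abs_add_le _ _).trans (add_le_add (hP i) ?_)
      refine (Finset.abs_sum_le_sum_abs _ _).trans ?_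
      calc ∑ j, |u j x1 * pd j (u i) x1| ≤ ∑ j : Fin 3, M * (2 * C1 * s * D / d) := by
            refine Finset.sum_le_sum fun j _ => ?_
            rw [abs_mul]
            exact mul_le_mul (hub _ hx1 j) (hG _ hx1' i j) (abs_nonneg _) hM.le
        _ = _ := by simp
    have b1 : M * (2 * C1 * s * D / d) ≤ C1 * (M * d) * D / d ^ 2 := by
      have : M * (2 * C1 * s * D / d) = (2 * s) * (C1 * (M * d) * D / d ^ 2) := by field_simp
      rw [this]
      have h0 : 0 ≤ C1 * (M * d) * D / d ^ 2 := by positivity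
      nlinarith
    have b2 : d / 2 * (2 * C1 * s * D / d) ^ 2 = 2 * C1 ^ 2 * (M * d) * D / d ^ 2 := by
      rw [← hs2]; field_simp
      try ring
    have hLx1 : L x1 ≤ 3 * (C2 * (4 * M / d ^ 2 + C1 * (M * d) * D / d ^ 2
        + 2 * C1 ^ 2 * (M * d) * D / d ^ 2) + 3 * (C1 * (M * d) * D / d ^ 2)) := by
      calc L x1 ≤ ∑ i : Fin 3, (C2 * (4 * M / d ^ 2 + C1 * (M * d) * D / d ^ 2
        + 2 * C1 ^ 2 * (M * d) * D / d ^ 2) + 3 * (C1 * (M * d) * D / d ^ 2)) := by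
            refine Finset.sum_le_sum fun i _ => (hlap i).trans ?_
            rw [b2]
            have : M / (d / 2) ^ 2 = 4 * M / d ^ 2 := by field_simp; norm_num
            rw [this]
            gcongr
        _ = _ := by simp only [Finset.sum_const, Finset.card_univ, Fintype.card_fin, nsmul_eq_mul]; norm_num
    have hLD : L x1 = D / (4 * d ^ 2) := by
      have : 4 * d ^ 2 = (R - dist x1 x0) ^ 2 := by rw [hd]; ring
      rw [this, hD]; field_simp
    have e9 : 3 * (C2 * (4 * M / d ^ 2 + C1 * (M * d) * D / d ^ 2
        + 2 * C1 ^ 2 * (M * d) * D / d ^ 2) + 3 * (C1 * (M * d) * D / d ^ 2))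
        = (12 * C2 * M + K * (M * d) * D) / d ^ 2 := by
      rw [hK]; field_simp; ring
    rw [e9, hLD] at hLx1
    have e10 : D / 4 ≤ 12 * C2 * M + K * (M * d) * D := by
      have : D / (4 * d ^ 2) = (D / 4) / d ^ 2 := by field_simp
      rw [this] at hLx1
      exact (div_le_div_iff_of_pos_right (by positivity)).1 hLx1
    have e11 : K * (M * d) ≤ 1 / 8 := by
      calc K * (M * d) ≤ K * (1 / (8 * K)) := by gcongr
        _ = 1 / 8 := by field_simp
    have e12 : K * (M * d) * D ≤ 1 / 8 * D := by gcongr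
    linarith
  have hsub : closedBall x0 (R / 2) ⊆ closedBall x0 R := closedBall_subset_closedBall (by linarith)
  have hLb : ∀ x ∈ closedBall x0 (R / 2), L x ≤ 4 * D / R ^ 2 := by
    intro x hx
    have h3 := hmax' x (hsub hx)
    have h2 : R / 2 ≤ R - dist x x0 := by
      have := mem_closedBall.1 hx
      linarith
    have : (R / 2) ^ 2 * L x ≤ D := le_trans (mul_le_mul_of_nonneg_right (by gcongr) (hL0 _)) h3
    rw [le_div_iff₀ (by positivity)]
    linarith
  have hgr : ∀ i j, |pd j (u i) x0| ≤ C1 * (2 + 192 * C2) * (M / R) := by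
    intro i j
    refine (hgrad (u i) x0 (R / 2) M (4 * D / R ^ 2) (hu i) (by positivity)
      (fun y hy => hub y (hsub hy) i) (fun y hy => (hLi i y).trans (hLb y hy)) j).trans ?_
    have : C1 * (M / (R / 2) + R / 2 * (4 * D / R ^ 2)) = C1 * ((2 * M + 2 * D) / R) := by
      field_simp; ring
    rw [this, mul_assoc, ← mul_div_assoc (2 + 192 * C2)]
    gcongr
    linarith
  have hx0 : x0 ∈ closedBall x0 R := by simp [hR.le]
  refine ⟨fun i j => (hgr i j).trans ?_, fun k => ?_⟩
  · gcongr
    have : 0 ≤ C1 * (2 + 192 * C2) := by positivity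
    linarith
  · rw [hNS x0 hx0 k]
    refine (abs_sub _ _).trans ?_
    have h1 : |lap3 (u k) x0| ≤ 96 * C2 * (M / R ^ 2) := by
      refine (hLi k x0).trans ?_
      have := hmax' x0 hx0
      simp at this
      rw [← mul_div_assoc, le_div_iff₀ (by positivity)]
      linarith
    have h2 : |∑ j, u j x0 * pd j (u k) x0| ≤ 3 * (C1 * (2 + 192 * C2)) * (M / R ^ 2) := by
      refine (Finset.abs_sum_le_sum_abs _ _).trans ?_
      calc ∑ j, |u j x0 * pd j (u k) x0| ≤ ∑ j : Fin 3, M * (C1 * (2 + 192 * C2) * (M / R)) := by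
            refine Finset.sum_le_sum fun j _ => ?_
            rw [abs_mul]
            exact mul_le_mul (hub _ hx0 j) (hgr k j) (abs_nonneg _) hM.le
        _ = 3 * (C1 * (2 + 192 * C2)) * (M * R) * (M / R ^ 2) := by
            simp; field_simp
        _ ≤ 3 * (C1 * (2 + 192 * C2)) * 1 * (M / R ^ 2) := by
            gcongr
            linarith
        _ = _ := by ring
    have h3 : 0 ≤ C1 * (2 + 192 * C2) * (M / R ^ 2) := by positivity
    linarith

lemma lap3_congr {f g : V3 → ℝ} {x : V3} (h : f =ᶠ[𝓝 x] g) : lap3 f x = lap3 g x := by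
  unfold lap3
  refine Finset.sum_congr rfl fun j _ => pd_congr j ?_
  filter_upwards [h.eventuallyEq_nhds] with y hy using pd_congr j hy

lemma contDiff_of_tsupport' {f : V3 → ℝ} {n : WithTop ℕ∞} (h : ∀ x ∈ tsupport f, ContDiffAt ℝ n f x) :
    ContDiff ℝ n f := by
  rw [contDiff_iff_contDiffAt]
  intro x
  by_cases hx : x ∈ tsupport f
  · exact h x hx
  · exact (contDiffAt_const (c := (0 : ℝ))).congr_of_eventuallyEq (notMem_tsupport_iff_eventuallyEq.1 hx)

lemma interior_est' : ∃ C c0 : ℝ, 1 ≤ C ∧ 0 < c0 ∧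
    ∀ (u : Fin 3 → V3 → ℝ) (p : V3 → ℝ) (x0 : V3) (R M : ℝ) (U : Set V3), IsOpen U →
    (∀ i, ContDiffOn ℝ 2 (u i) U) → ContDiffOn ℝ 2 p U → 0 < R → 0 < M →
    closedBall x0 (2 * R) ⊆ U →
    (∀ x ∈ U, ∀ i, pd i p x = lap3 (u i) x - ∑ j, u j x * pd j (u i) x) →
    (∀ x ∈ U, ∑ j, pd j (u j) x = 0) →
    (∀ x ∈ closedBall x0 R, ∀ i, |u i x| ≤ M) → M * R ≤ c0 →
    (∀ i j, |pd j (u i) x0| ≤ C * (M / R)) ∧ ∀ k, |pd k p x0| ≤ C * (M / R ^ 2) := by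
  obtain ⟨C, c0, hC, hc0, h⟩ := interior_est
  refine ⟨C, c0, hC, hc0, ?_⟩
  intro u p x0 R M U hU hu hp hR hM hsub hNS hdiv hub hMR
  let b : ContDiffBump x0 := ⟨3 / 2 * R, 2 * R, by positivity, by linarith⟩
  have key : ∀ f : V3 → ℝ, ContDiffOn ℝ 2 f U → ContDiff ℝ 2 (fun x => b x * f x) := by
    intro f hf
    apply contDiff_of_tsupport'
    intro x hx
    have hx' : x ∈ U := by
      have := (tsupport_mul_subset_left (f := b) (g := f)) hx
      rw [b.tsupport_eq] at this
      exact hsub this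
    exact b.contDiff.contDiffAt.mul (hf.contDiffAt (hU.mem_nhds hx'))
  have heq : ∀ f : V3 → ℝ, ∀ x ∈ closedBall x0 R, (fun x => b x * f x) =ᶠ[𝓝 x] f := by
    intro f x hx
    have : x ∈ ball x0 (3 / 2 * R) := by
      rw [mem_ball]; have := mem_closedBall.1 hx; linarith
    filter_upwards [isOpen_ball.mem_nhds this] with y hy
    rw [b.one_of_mem_closedBall (ball_subset_closedBall hy), one_mul]
  have hx0 : x0 ∈ closedBall x0 R := by simp [hR.le]
  have hsub' : closedBall x0 R ⊆ U := (closedBall_subset_closedBall (by linarith)).trans hsub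
  obtain ⟨h1, h2⟩ := h (fun i x => b x * u i x) (fun x => b x * p x) x0 R M (fun i => key _ (hu i))
    (key _ hp) hR hM
    (by
      intro x hx i
      rw [pd_congr i (heq p x hx), lap3_congr (heq (u i) x hx), hNS x (hsub' hx)]
      congr 1
      refine Finset.sum_congr rfl fun j _ => ?_
      rw [pd_congr j (heq (u i) x hx), (heq (u j) x hx).eq_of_nhds])
    (by
      intro x hx
      rw [← hdiv x (hsub' hx)]
      refine Finset.sum_congr rfl fun j _ => ?_
      rw [pd_congr j (heq (u j) x hx)])
    (by
      intro x hx i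
      rw [(heq (u i) x hx).eq_of_nhds]
      exact hub x hx i) hMR
  refine ⟨fun i j => ?_, fun k => ?_⟩
  · rw [← pd_congr j (heq (u i) x0 hx0)]; exact h1 i j
  · rw [← pd_congr k (heq p x0 hx0)]; exact h2 k


/-! ### Part 5: geometry and pointwise bounds -/

lemma rho_eq_norm (x : V3) : rho x = ‖(!₂[x 0, x 1] : V2)‖ := by
  rw [rho, EuclideanSpace.norm_eq]; simp [Fin.sum_univ_two]

lemma norm_sq3 (x : V3) : ‖x‖ ^ 2 = x 0 ^ 2 + x 1 ^ 2 + x 2 ^ 2 := by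
  rw [EuclideanSpace.norm_sq_eq]; simp [Fin.sum_univ_three]

lemma rho_sq (x : V3) : rho x ^ 2 = x 0 ^ 2 + x 1 ^ 2 := Real.sq_sqrt (by positivity)

lemma rho_nonneg (x : V3) : 0 ≤ rho x := Real.sqrt_nonneg _

lemma rho_continuous : Continuous rho := by unfold rho; fun_prop

lemma rho_le_norm (x : V3) : rho x ≤ ‖x‖ := by
  have := rho_sq x
  have := norm_sq3 x
  exact abs_le_of_sq_le_sq' (by nlinarith [sq_nonneg (x 2)]) (norm_nonneg x) |>.2

lemma abs_coord_le (x : V3) (i : Fin 3) : |x i| ≤ ‖x‖ := by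
  simpa using PiLp.norm_apply_le x i

lemma rho_lip (x z : V3) : rho x ≤ rho z + ‖x - z‖ := by
  have h : rho x ≤ rho z + rho (x - z) := by
    rw [rho_eq_norm, rho_eq_norm, rho_eq_norm]
    have : (!₂[x 0, x 1] : V2) = !₂[z 0, z 1] + !₂[(x - z) 0, (x - z) 1] := by
      ext i; fin_cases i <;> simp
    rw [this]
    exact norm_add_le _ _
  linarith [rho_le_norm (x - z)]

def Areg (δ : ℝ) : Set V3 := {x : V3 | -2 ≤ x 2 ∧ x 2 ≤ -1/2 ∧ 0 < rho x ∧ rho x ≤ δ/16}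
def Breg (δ : ℝ) : Set V3 := {x : V3 | -3 ≤ x 2 ∧ x 2 ≤ -1/4 ∧ 0 < rho x ∧ rho x ≤ δ/8}

lemma Areg_sub_Breg {δ : ℝ} : Areg δ ⊆ Breg δ := fun x ⟨h1, h2, h3, h4⟩ =>
  ⟨by linarith, by linarith, h3, by linarith⟩

lemma isOpen_cone (δ : ℝ) : IsOpen (cone3 (NSCap δ)) := by
  have : cone3 (NSCap δ) = {x : V3 | x ≠ 0} ∩ (fun x : V3 => ‖x‖⁻¹ • x) ⁻¹' (ball S3 δ \ {S3}) := by
    ext x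
    simp only [cone3, NSCap, sphere2, Set.mem_ofPred_eq, Set.mem_inter_iff, Set.mem_preimage, Set.mem_sdiff]
    constructor
    · rintro ⟨h, ⟨_, h2⟩, h3⟩; exact ⟨h, h2, h3⟩
    · rintro ⟨h, h2, h3⟩
      refine ⟨h, ⟨?_, h2⟩, h3⟩
      rw [mem_sphere_zero_iff_norm, norm_smul, norm_inv, norm_norm, inv_mul_cancel₀ (norm_ne_zero_iff.2 h)]
  rw [this]
  refine ContinuousOn.isOpen_inter_preimage ?_ isOpen_ne (isOpen_ball.sdiff isClosed_singleton)
  intro x hx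
  exact (ContinuousAt.smul (continuousAt_inv₀ (norm_ne_zero_iff.2 hx) |>.comp continuous_norm.continuousAt)
    continuousAt_id).continuousWithinAt

lemma dist_pole_sq {x : V3} (hx : x ≠ 0) : dist (‖x‖⁻¹ • x) S3 ^ 2 = 2 + 2 * x 2 / ‖x‖ := by
  have h0 : ‖x‖ ≠ 0 := norm_ne_zero_iff.2 hx
  rw [dist_eq_norm, norm_sq3]
  simp only [S3, PiLp.sub_apply, PiLp.smul_apply, smul_eq_mul, EuclideanSpace.single_apply]
  have := norm_sq3 x
  simp
  field_simp
  linarith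

lemma dist_pole_bounds {x : V3} (hx : x 2 < 0) :
    x ≠ 0 ∧ rho x / ‖x‖ ≤ dist (‖x‖⁻¹ • x) S3 ∧ dist (‖x‖⁻¹ • x) S3 ≤ rho x / (- x 2) := by
  have hx0 : x ≠ 0 := by rintro rfl; simp at hx
  have hn : 0 < ‖x‖ := norm_pos_iff.2 hx0
  have hd := dist_pole_sq hx0
  have h1 := norm_sq3 x
  have h2 := rho_sq x
  have h3 : - x 2 ≤ ‖x‖ := (neg_le_abs _).trans (abs_coord_le x 2)
  have hd' : dist (‖x‖⁻¹ • x) S3 ^ 2 = 2 * (‖x‖ - (-x 2)) / ‖x‖ := by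
    rw [hd]; field_simp; ring
  have hr : rho x ^ 2 = (‖x‖ - (-x 2)) * (‖x‖ + (-x 2)) := by nlinarith
  have hsub : 0 ≤ ‖x‖ - (-x 2) := by linarith
  refine ⟨hx0, ?_, ?_⟩
  · refine le_of_sq_le_sq ?_ dist_nonneg |> fun h => h
    rw [hd', div_pow, hr, div_le_div_iff₀ (by positivity) hn]
    nlinarith [mul_nonneg hsub (sq_nonneg ‖x‖), mul_nonneg hsub hsub, mul_nonneg hsub hn.le,
      mul_nonneg (mul_nonneg hsub hsub) hn.le]
  · refine le_of_sq_le_sq ?_ (div_nonneg (rho_nonneg x) (by linarith)) |> fun h => h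
    rw [hd', div_pow, hr, div_le_div_iff₀ hn (by nlinarith)]
    have : 0 ≤ (‖x‖ - (-x 2)) * ((‖x‖ - (-x 2)) * (‖x‖ + 2 * (- x 2))) := by
      have : 0 ≤ ‖x‖ + 2 * (- x 2) := by linarith
      positivity
    nlinarith

lemma Breg_dist {δ : ℝ} {x : V3} (hx : x ∈ Breg δ) :
    x ≠ 0 ∧ 1/4 ≤ ‖x‖ ∧ ‖x‖ ≤ 3 + δ ∧ rho x / (3 + δ) ≤ dist (‖x‖⁻¹ • x) S3 ∧
    dist (‖x‖⁻¹ • x) S3 ≤ 4 * rho x ∧ dist (‖x‖⁻¹ • x) S3 ≤ δ / 2 ∧ 0 < dist (‖x‖⁻¹ • x) S3 := by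
  obtain ⟨h1, h2, h3, h4⟩ := hx
  obtain ⟨k1, k2, k3⟩ := dist_pole_bounds (x := x) (by linarith)
  have hn : 0 < ‖x‖ := norm_pos_iff.2 k1
  have e1 : 1/4 ≤ ‖x‖ := by linarith [(neg_le_abs _).trans (abs_coord_le x 2)]
  have e2 : ‖x‖ ≤ 3 + δ := by
    have := norm_sq3 x
    have := rho_sq x
    refine abs_le_of_sq_le_sq' (by nlinarith) (by linarith) |>.2
  have e3 : rho x / (-x 2) ≤ 4 * rho x := by
    rw [div_le_iff₀ (by linarith)]; nlinarith
  refine ⟨k1, e1, e2, ?_, k3.trans e3, by linarith, ?_⟩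
  · refine le_trans ?_ k2
    gcongr
  · refine lt_of_lt_of_le ?_ k2
    positivity

lemma Breg_sub_cone {δ : ℝ} : Breg δ ⊆ cone3 (NSCap δ) := by
  intro x hx
  obtain ⟨k1, k2, _, _, k5, k6, k7⟩ := Breg_dist hx
  refine ⟨k1, ⟨?_, ?_⟩, ?_⟩
  · rw [sphere2, mem_sphere_zero_iff_norm, norm_smul, norm_inv, norm_norm, inv_mul_cancel₀ (norm_ne_zero_iff.2 k1)]
  · rw [mem_ball]; linarith
  · intro h
    rw [Set.mem_singleton_iff] at h
    rw [h, dist_self] at k7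
    exact lt_irrefl _ k7

/-- logarithmic bound -/
lemma u_log_bound {δ : ℝ} (hδ : 0 < δ) {u : V3 → V3}
    (hu_hom : ∀ x ∈ cone3 (NSCap δ), ∀ lam : ℝ, 0 < lam → u (lam • x) = lam⁻¹ • u x)
    (hu_reg : ContinuousOn u (cone3 (NSCap δ)))
    (hlim : Tendsto (fun x => ‖u x‖ / Real.log (dist x S3))
      (𝓝[sphere2 \ {S3}] S3) (𝓝 0)) (ε : ℝ) (hε : 0 < ε) :
    ∃ C, 0 < C ∧ ∀ x ∈ Breg δ, ‖u x‖ ≤ ε * |Real.log (rho x)| + C := by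
  set e : ℝ := ε / 4
  have he : 0 < e := by positivity
  have h1 := (Metric.tendsto_nhds.1 hlim) e he
  rw [eventually_nhdsWithin_iff, Metric.eventually_nhds_iff] at h1
  obtain ⟨r1, hr1, h1⟩ := h1
  set r0 : ℝ := min r1 (1/2)
  have hr0 : 0 < r0 := by positivity
  -- compact part
  set Kc : Set V3 := sphere2 ∩ {y | r0 ≤ dist y S3 ∧ dist y S3 ≤ δ / 2}
  have hKc : IsCompact Kc := by
    refine (isCompact_sphere (0 : V3) 1).inter_right ?_
    have hcd : Continuous fun y : V3 => dist y S3 := by fun_prop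
    exact (isClosed_le continuous_const hcd).inter (isClosed_le hcd continuous_const)
  have hKU : Kc ⊆ cone3 (NSCap δ) := by
    rintro y ⟨hy, hy1, hy2⟩
    have hn : ‖y‖ = 1 := mem_sphere_zero_iff_norm.1 hy
    refine ⟨norm_ne_zero_iff.1 (by rw [hn]; norm_num), ?_⟩
    rw [hn, inv_one, one_smul]
    refine ⟨⟨hy, by rw [mem_ball]; linarith⟩, ?_⟩
    rintro rfl
    rw [dist_self] at hy1; linarith
  obtain ⟨B, hB⟩ := hKc.exists_bound_of_continuousOn (hu_reg.mono hKU)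
  have hsph : ∀ y ∈ sphere2, 0 < dist y S3 → dist y S3 ≤ δ / 2 →
      ‖u y‖ ≤ e * |Real.log (dist y S3)| + |B| := by
    intro y hy hy0 hy1
    by_cases h : r0 ≤ dist y S3
    · have := hB y ⟨hy, h, hy1⟩
      have h2 := le_abs_self B
      have : 0 ≤ e * |Real.log (dist y S3)| := by positivity
      linarith
    · push Not at h
      have hl : Real.log (dist y S3) < 0 := Real.log_neg hy0 (by
        have := min_le_right r1 (1/2 : ℝ); linarith)
      have := h1 (lt_of_lt_of_le h (min_le_left _ _)) ⟨hy, by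
        rintro rfl
        rw [dist_self] at hy0; exact lt_irrefl _ hy0⟩
      rw [Real.dist_eq, sub_zero, abs_div, abs_norm, div_lt_iff₀ (abs_pos.2 hl.ne)] at this
      linarith [abs_nonneg B]
  set c : ℝ := Real.log 4 + Real.log (3 + δ)
  have hc4 : 0 ≤ Real.log 4 := Real.log_nonneg (by norm_num)
  have hc3 : 0 ≤ Real.log (3 + δ) := Real.log_nonneg (by linarith)
  refine ⟨4 * (e * c + |B|) + 1, by positivity, ?_⟩
  intro x hx
  obtain ⟨k1, k2, k3, k4, k5, k6, k7⟩ := Breg_dist hx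
  have hrho : 0 < rho x := hx.2.2.1
  have hn : 0 < ‖x‖ := norm_pos_iff.2 k1
  have hh := hu_hom x (Breg_sub_cone hx) ‖x‖⁻¹ (by positivity)
  rw [inv_inv] at hh
  have hs := hsph (‖x‖⁻¹ • x) (by
    rw [sphere2, mem_sphere_zero_iff_norm, norm_smul, norm_inv, norm_norm, inv_mul_cancel₀ hn.ne']) k7 k6
  rw [hh, norm_smul, norm_norm] at hs
  have hlog : |Real.log (dist (‖x‖⁻¹ • x) S3)| ≤ |Real.log (rho x)| + c := by
    have l1 := Real.log_le_log k7 k5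
    rw [Real.log_mul (by norm_num) hrho.ne'] at l1
    have l2 := Real.log_le_log (by positivity) k4
    rw [Real.log_div hrho.ne' (by positivity)] at l2
    rw [abs_le]
    have := neg_abs_le (Real.log (rho x))
    have := le_abs_self (Real.log (rho x))
    constructor <;> linarith
  have h5 : ‖u x‖ ≤ 4 * (‖x‖ * ‖u x‖) := by nlinarith [norm_nonneg (u x)]
  have h6 : e * |Real.log (dist (‖x‖⁻¹ • x) S3)| ≤ e * (|Real.log (rho x)| + c) := by gcongr
  have h7 : ε = 4 * e := by simp only [e]; ring
  rw [h7]
  linarith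

/-- power bound for the logarithm -/
lemma abs_log_le_rpow {κ R : ℝ} (hκ : 0 < κ) (hR : 0 < R) : ∃ C, 0 < C ∧ ∀ r, 0 < r → r ≤ R →
    |Real.log r| + 1 ≤ C * r ^ (-κ) := by
  refine ⟨1 / κ + R ^ (2 * κ) / κ + R ^ κ, by positivity, ?_⟩
  intro r hr hrR
  have h1 := Real.log_le_rpow_div hr.le hκ
  have h2 := Real.log_le_rpow_div (inv_nonneg.2 hr.le) hκ
  rw [Real.log_inv, Real.inv_rpow hr.le, ← Real.rpow_neg hr.le] at h2
  have h3 : r ^ κ ≤ R ^ (2 * κ) * r ^ (-κ) := by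
    have : r ^ κ = r ^ (2 * κ) * r ^ (-κ) := by rw [← Real.rpow_add hr]; congr 1; ring
    rw [this]
    gcongr
  have h4 : 1 ≤ R ^ κ * r ^ (-κ) := by
    have : 1 = r ^ κ * r ^ (-κ) := by rw [← Real.rpow_add hr]; simp
    rw [this]
    gcongr
  have h5 : r ^ κ / κ ≤ R ^ (2 * κ) * r ^ (-κ) / κ := by gcongr
  have h6 : 0 ≤ r ^ (-κ) / κ := by positivity
  have h7 : 0 ≤ R ^ (2 * κ) * r ^ (-κ) / κ := by positivity
  have : |Real.log r| ≤ r ^ (-κ) / κ + R ^ (2 * κ) * r ^ (-κ) / κ := by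
    rw [abs_le]; constructor <;> linarith
  calc |Real.log r| + 1 ≤ r ^ (-κ) / κ + R ^ (2 * κ) * r ^ (-κ) / κ + R ^ κ * r ^ (-κ) := by linarith
    _ = _ := by ring


lemma rpow_half_le {κ r ρ : ℝ} (hκ : 0 < κ) (hκ1 : κ ≤ 1) (hρ : 0 < ρ) (h : ρ / 2 ≤ r) :
    r ^ (-κ) ≤ 2 * ρ ^ (-κ) := by
  have h1 : r ^ (-κ) ≤ (ρ / 2) ^ (-κ) :=
    Real.rpow_le_rpow_of_nonpos (by positivity) h (by linarith)
  refine h1.trans ?_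
  rw [Real.div_rpow hρ.le (by norm_num), Real.rpow_neg (by norm_num : (0:ℝ) ≤ 2), div_inv_eq_mul, mul_comm]
  gcongr
  calc (2:ℝ) ^ κ ≤ 2 ^ (1:ℝ) := Real.rpow_le_rpow_of_exponent_le (by norm_num) hκ1
    _ = 2 := by simp

/-- gradient bounds -/
lemma grad_bounds {δ : ℝ} (hδ : 0 < δ) {u : Fin 3 → V3 → ℝ} {p : V3 → ℝ} {U : Set V3} (hU : IsOpen U)
    (hBU : Breg δ ⊆ U) (hu : ∀ i, ContDiffOn ℝ 2 (u i) U) (hp : ContDiffOn ℝ 2 p U)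
    (hNS : ∀ x ∈ U, ∀ i, pd i p x = lap3 (u i) x - ∑ j, u j x * pd j (u i) x)
    (hdiv : ∀ x ∈ U, ∑ j, pd j (u j) x = 0)
    {κ C0 : ℝ} (hκ : 0 < κ) (hκ1 : κ ≤ 1) (hC0 : 0 < C0)
    (hb : ∀ x ∈ Breg δ, ∀ i, |u i x| ≤ C0 * rho x ^ (-κ)) :
    ∃ C, 0 < C ∧ ∀ x ∈ Areg δ, (∀ i j, |pd j (u i) x| ≤ C * rho x ^ (-1 - κ)) ∧
      ∀ k, |pd k p x| ≤ C * rho x ^ (-2 - κ) := by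
  obtain ⟨C, c0, hC, hc0, hest⟩ := interior_est'
  set l : ℝ := min (1/4) (min (2 / δ) (c0 / (2 * C0 * (δ / 16) ^ (1 - κ)))) with hl
  have hl0 : 0 < l := by positivity
  have hl1 : l ≤ 1 / 4 := min_le_left _ _
  have hl2 : l * δ ≤ 2 := by
    have : l ≤ 2 / δ := (min_le_right _ _).trans (min_le_left _ _)
    rwa [le_div_iff₀ hδ] at this
  have hl3 : l * (2 * C0 * (δ / 16) ^ (1 - κ)) ≤ c0 := by
    have : l ≤ c0 / (2 * C0 * (δ / 16) ^ (1 - κ)) := (min_le_right _ _).trans (min_le_right _ _)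
    rwa [le_div_iff₀ (by positivity)] at this
  refine ⟨C * (2 * C0) / l + C * (2 * C0) / l ^ 2, by positivity, ?_⟩
  intro x hx
  obtain ⟨h1, h2, h3, h4⟩ := hx
  have hsub : closedBall x (2 * (l * rho x)) ⊆ Breg δ := by
    intro z hz
    rw [mem_closedBall, dist_eq_norm] at hz
    have a1 := abs_le.1 ((abs_coord_le (z - x) 2).trans hz)
    simp only [PiLp.sub_apply] at a1
    have a2 := rho_lip z x
    have a3 := rho_lip x z
    rw [norm_sub_rev] at a3
    have a4 : l * rho x ≤ 1 / 8 := by nlinarith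
    have a5 : l * rho x ≤ 1 / 4 * rho x := by gcongr
    refine ⟨by linarith, by linarith, by linarith, by linarith⟩
  have hM : ∀ z ∈ closedBall x (l * rho x), ∀ i, |u i z| ≤ 2 * C0 * rho x ^ (-κ) := by
    intro z hz i
    have hzB := hsub (closedBall_subset_closedBall (by nlinarith) hz)
    refine (hb z hzB i).trans ?_
    have a3 := rho_lip x z
    rw [norm_sub_rev, ← dist_eq_norm] at a3
    have hz' := mem_closedBall.1 hz
    have a5 : l * rho x ≤ 1 / 4 * rho x := by gcongr
    have := rpow_half_le hκ hκ1 h3 (r := rho z) (by linarith)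
    nlinarith
  have hMR : 2 * C0 * rho x ^ (-κ) * (l * rho x) ≤ c0 := by
    have : 2 * C0 * rho x ^ (-κ) * (l * rho x) = l * (2 * C0 * rho x ^ (1 - κ)) := by
      rw [sub_eq_add_neg, Real.rpow_add h3, Real.rpow_one]; ring
    rw [this]
    refine le_trans ?_ hl3
    gcongr
  have hpos : 0 < rho x ^ (-κ) := by positivity
  obtain ⟨g1, g2⟩ := hest u p x (l * rho x) (2 * C0 * rho x ^ (-κ)) U hU hu hp (by positivity)
    (by positivity) (hsub.trans hBU) hNS hdiv hM hMR
  have q1 : rho x ^ (-1 - κ) = rho x ^ (-κ) / rho x := by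
    rw [show -1 - κ = -κ - 1 by ring, Real.rpow_sub h3, Real.rpow_one]
  have q2 : rho x ^ (-2 - κ) = rho x ^ (-κ) / rho x ^ 2 := by
    rw [show -2 - κ = -κ - 2 by ring, Real.rpow_sub h3]; norm_num
  refine ⟨fun i j => (g1 i j).trans ?_, fun k => (g2 k).trans ?_⟩
  · rw [q1]
    have : C * (2 * C0 * rho x ^ (-κ) / (l * rho x)) = C * (2 * C0) / l * (rho x ^ (-κ) / rho x) := by
      field_simp
    rw [this]
    gcongr
    have : 0 ≤ C * (2 * C0) / l ^ 2 := by positivity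
    linarith
  · rw [q2]
    have : C * (2 * C0 * rho x ^ (-κ) / (l * rho x) ^ 2)
        = C * (2 * C0) / l ^ 2 * (rho x ^ (-κ) / rho x ^ 2) := by
      field_simp
    rw [this]
    gcongr
    have : 0 ≤ C * (2 * C0) / l := by positivity
    linarith

lemma radial_aux {q q' : ℝ → ℝ} {a b K κ : ℝ} (ha : 0 < a) (hab : a ≤ b) (hκ : 0 < κ) (hK : 0 ≤ K)
    (hq : ∀ s ∈ Set.Icc a b, HasDerivAt q (q' s) s)
    (hb : ∀ s ∈ Set.Icc a b, q' s ≤ K * s ^ (-2 - κ)) : - q a ≤ - q b + K * a ^ (-1 - κ) := by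
  have hd : ∀ s ∈ Set.Icc a b, HasDerivAt (fun s => q s + K * s ^ (-1 - κ))
      (q' s + K * ((-1 - κ) * s ^ (-2 - κ))) s := by
    intro s hs
    have hs0 : 0 < s := lt_of_lt_of_le ha hs.1
    have := (Real.hasDerivAt_rpow_const (x := s) (p := -1 - κ) (Or.inl hs0.ne')).const_mul K
    rw [show -1 - κ - 1 = -2 - κ by ring] at this
    exact (hq s hs).add this
  have hanti : AntitoneOn (fun s => q s + K * s ^ (-1 - κ)) (Set.Icc a b) := by
    apply antitoneOn_of_deriv_nonpos (convex_Icc a b)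
    · exact fun s hs => (hd s hs).continuousAt.continuousWithinAt
    · intro s hs
      rw [interior_Icc] at hs
      exact (hd s (Set.Ioo_subset_Icc_self hs)).differentiableAt.differentiableWithinAt
    · intro s hs
      rw [interior_Icc] at hs
      have hs' := Set.Ioo_subset_Icc_self hs
      rw [(hd s hs').deriv]
      have := hb s hs'
      have h1 : 0 ≤ K * κ * s ^ (-2 - κ) := by
        have : 0 < s := lt_of_lt_of_le ha hs'.1
        positivity
      nlinarith
  have := hanti ⟨le_rfl, hab⟩ ⟨hab, le_rfl⟩ hab
  simp only at this
  have h2 : 0 ≤ K * b ^ (-1 - κ) := by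
    have : 0 < b := by linarith
    positivity
  linarith

def radp (x : V3) (s : ℝ) : V3 := x + (s - rho x) • !₂[x 0 / rho x, x 1 / rho x, 0]

lemma radp_rho {x : V3} (hx : 0 < rho x) {s : ℝ} (hs : 0 ≤ s) : rho (radp x s) = s := by
  have h := rho_sq x
  have e0 : (radp x s) 0 = s / rho x * x 0 := by
    simp [radp]; field_simp; ring
  have e1 : (radp x s) 1 = s / rho x * x 1 := by
    simp [radp]; field_simp; ring
  rw [rho, e0, e1, mul_pow, mul_pow, ← mul_add, ← h, ← mul_pow, div_mul_cancel₀ _ hx.ne',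
    Real.sqrt_sq hs]

lemma radp_two (x : V3) (s : ℝ) : (radp x s) 2 = x 2 := by simp [radp]

lemma radp_self (x : V3) : radp x (rho x) = x := by simp [radp]

lemma abs_coord_le_rho (x : V3) : |x 0| ≤ rho x ∧ |x 1| ≤ rho x := by
  have h := rho_sq x
  exact ⟨abs_le_of_sq_le_sq (by nlinarith [sq_nonneg (x 1)]) (rho_nonneg x),
    abs_le_of_sq_le_sq (by nlinarith [sq_nonneg (x 0)]) (rho_nonneg x)⟩

/-- pressure bound -/
lemma p_bound {δ : ℝ} (hδ : 0 < δ) {p : V3 → ℝ} {U : Set V3} (hU : IsOpen U)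
    (hAU : Areg δ ⊆ U) (hp : ContDiffOn ℝ 1 p U) {κ C0 : ℝ} (hκ : 0 < κ) (hC0 : 0 < C0)
    (hb : ∀ x ∈ Areg δ, ∀ k, |pd k p x| ≤ C0 * rho x ^ (-2 - κ)) :
    ∃ C, 0 < C ∧ ∀ x ∈ Areg δ, |p x| ≤ C * rho x ^ (-1 - κ) := by
  set Kc : Set V3 := {x | -2 ≤ x 2 ∧ x 2 ≤ -1/2 ∧ rho x = δ / 16} with hKdef
  have hKA : Kc ⊆ Areg δ := fun x ⟨h1, h2, h3⟩ => ⟨h1, h2, by rw [h3]; positivity, h3.le⟩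
  have hc2 : Continuous fun x : V3 => x 2 := by fun_prop
  have hKc : IsCompact Kc := by
    apply Metric.isCompact_of_isClosed_isBounded
    · exact (isClosed_le continuous_const hc2).inter ((isClosed_le hc2 continuous_const).inter
        (isClosed_eq rho_continuous continuous_const))
    · rw [isBounded_iff_forall_norm_le]
      refine ⟨3 + δ, fun x hx => (Breg_dist (Areg_sub_Breg (hKA hx))).2.2.1⟩
  obtain ⟨B, hB⟩ := hKc.exists_bound_of_continuousOn (hp.continuousOn.mono (hKA.trans hAU))
  refine ⟨(|B| + 1) * (δ / 16) ^ (1 + κ) + 2 * C0, by positivity, ?_⟩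
  intro x hx
  have hr : 0 < rho x := hx.2.2.1
  have hrR := hx.2.2.2
  have hmem : ∀ s ∈ Set.Icc (rho x) (δ / 16), radp x s ∈ Areg δ := by
    intro s hs
    have hs0 : 0 < s := lt_of_lt_of_le hr hs.1
    have e := radp_rho hr hs0.le
    refine ⟨?_, ?_, ?_, ?_⟩
    · rw [radp_two]; exact hx.1
    · rw [radp_two]; exact hx.2.1
    · rw [e]; exact hs0
    · rw [e]; exact hs.2
  set v : V3 := !₂[x 0 / rho x, x 1 / rho x, 0] with hv
  have hq : ∀ s ∈ Set.Icc (rho x) (δ / 16), HasDerivAt (fun s => p (radp x s))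
      (∑ j, v j * pd j p (radp x s)) s := by
    intro s hs
    have h1 : HasDerivAt (radp x) v s := by
      unfold radp
      have := (((hasDerivAt_id s).sub_const (rho x)).smul_const v).const_add x
      simpa using this
    have hd : DifferentiableAt ℝ p (radp x s) :=
      (hp.differentiableOn (by simp)).differentiableAt (hU.mem_nhds (hAU (hmem s hs)))
    have := hd.hasFDerivAt.comp_hasDerivAt s h1
    rw [pd_dir] at this
    exact this
  have hv0 : |v 0| ≤ 1 ∧ |v 1| ≤ 1 ∧ v 2 = 0 := by
    obtain ⟨c0, c1⟩ := abs_coord_le_rho x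
    refine ⟨?_, ?_, by simp [hv]⟩
    · simp only [hv]; simp [abs_div, abs_of_pos hr]; rwa [div_le_one hr]
    · simp only [hv]; simp [abs_div, abs_of_pos hr]; rwa [div_le_one hr]
  have hq' : ∀ s ∈ Set.Icc (rho x) (δ / 16), |∑ j, v j * pd j p (radp x s)| ≤ 2 * C0 * s ^ (-2 - κ) := by
    intro s hs
    have hs0 : 0 < s := lt_of_lt_of_le hr hs.1
    have e := hb _ (hmem s hs)
    rw [radp_rho hr hs0.le] at e
    rw [Fin.sum_univ_three, hv0.2.2, zero_mul, add_zero]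
    refine (abs_add_le _ _).trans ?_
    rw [abs_mul, abs_mul]
    have a0 := mul_le_mul hv0.1 (e 0) (abs_nonneg _) zero_le_one
    have a1 := mul_le_mul hv0.2.1 (e 1) (abs_nonneg _) zero_le_one
    linarith
  have i1 := radial_aux hr hrR hκ (K := 2 * C0) (by positivity) hq
    (fun s hs => (le_abs_self _).trans (hq' s hs))
  have i2 := radial_aux hr hrR hκ (K := 2 * C0) (by positivity) (fun s hs => (hq s hs).neg)
    (fun s hs => (neg_le_abs _).trans (hq' s hs))
  simp only [radp_self, Pi.neg_apply] at i1 i2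
  have hend := hB (radp x (δ / 16)) ⟨by rw [radp_two]; exact hx.1, by rw [radp_two]; exact hx.2.1,
    radp_rho hr (by positivity)⟩
  rw [Real.norm_eq_abs] at hend
  have hend' := abs_le.1 hend
  have hBB := le_abs_self B
  have h1 : 1 ≤ (δ / 16) ^ (1 + κ) * rho x ^ (-1 - κ) := by
    have : rho x ^ (1 + κ) * rho x ^ (-1 - κ) = 1 := by rw [← Real.rpow_add hr]; ring_nf; simp
    refine this.symm.le.trans ?_
    gcongr
  have h2 : |B| ≤ |B| * ((δ / 16) ^ (1 + κ) * rho x ^ (-1 - κ)) := le_mul_of_one_le_right (abs_nonneg _) h1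
  have h3 : |p x| ≤ |B| * ((δ / 16) ^ (1 + κ) * rho x ^ (-1 - κ)) + 2 * C0 * rho x ^ (-1 - κ) := by
    rw [abs_le]; constructor <;> linarith
  linarith

structure Dat (δ : ℝ) (u : Fin 3 → V3 → ℝ) (p : V3 → ℝ) (U : Set V3) : Prop where
  hδ : 0 < δ
  hU : IsOpen U
  hAU : Areg δ ⊆ U
  hu : ∀ i, ContDiffOn ℝ 2 (u i) U
  hp : ContDiffOn ℝ 2 p U
  hNS : ∀ x ∈ U, ∀ i, pd i p x = lap3 (u i) x - ∑ j, u j x * pd j (u i) x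
  hdiv : ∀ x ∈ U, ∑ j, pd j (u j) x = 0
  hlog : ∀ ε : ℝ, 0 < ε → ∃ C, 0 < C ∧ ∀ x ∈ Areg δ, ∀ i, |u i x| ≤ ε * |Real.log (rho x)| + C
  hpow : ∀ κ : ℝ, 0 < κ → κ ≤ 1 → ∃ C, 0 < C ∧ ∀ x ∈ Areg δ,
    (∀ i, |u i x| ≤ C * rho x ^ (-κ)) ∧ (∀ i j, |pd j (u i) x| ≤ C * rho x ^ (-1 - κ)) ∧
    |p x| ≤ C * rho x ^ (-1 - κ)

lemma mkDat {δ : ℝ} (hδ : 0 < δ) {u : V3 → V3} {p : V3 → ℝ}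
    (hu_hom : ∀ x ∈ cone3 (NSCap δ), ∀ lam : ℝ, 0 < lam → u (lam • x) = lam⁻¹ • u x)
    (hu_reg : ContDiffOn ℝ 2 u (cone3 (NSCap δ)))
    (hp_reg : ContDiffOn ℝ 2 p (cone3 (NSCap δ)))
    (hNS : ∀ x ∈ cone3 (NSCap δ), NSEq u p x)
    (hlim : Tendsto (fun x => ‖u x‖ / Real.log (dist x S3))
      (𝓝[sphere2 \ {S3}] S3) (𝓝 0)) :
    Dat δ (fun i x => u x i) p (cone3 (NSCap δ)) := by
  have hU := isOpen_cone δ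
  have hu : ∀ i, ContDiffOn ℝ 2 (fun x => u x i) (cone3 (NSCap δ)) := fun i =>
    (contDiff_coord i).comp_contDiffOn hu_reg
  have hNS' : ∀ x ∈ cone3 (NSCap δ), ∀ i, pd i p x
      = lap3 (fun x => u x i) x - ∑ j, u x j * pd j (fun x => u x i) x := by
    intro x hx i
    have := (hNS x hx).1 i
    linarith
  have hdiv : ∀ x ∈ cone3 (NSCap δ), ∑ j, pd j (fun x => u x j) x = 0 := fun x hx => (hNS x hx).2
  have hlog0 := u_log_bound hδ hu_hom hu_reg.continuousOn hlim
  refine ⟨hδ, hU, Areg_sub_Breg.trans Breg_sub_cone, hu, hp_reg, hNS', hdiv, ?_, ?_⟩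
  · intro ε hε
    obtain ⟨C, hC, h⟩ := hlog0 ε hε
    exact ⟨C, hC, fun x hx i => (abs_coord_le _ _).trans (h x (Areg_sub_Breg hx))⟩
  · intro κ hκ hκ1
    obtain ⟨C, hC, h⟩ := hlog0 1 one_pos
    obtain ⟨C', hC', h'⟩ := abs_log_le_rpow hκ (R := δ / 8) (by positivity)
    have hb : ∀ x ∈ Breg δ, ∀ i, |u x i| ≤ (1 + C) * C' * rho x ^ (-κ) := by
      intro x hx i
      refine ((abs_coord_le _ _).trans (h x hx)).trans ?_
      have e := h' (rho x) hx.2.2.1 hx.2.2.2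
      have e2 : (1 + C) * (|Real.log (rho x)| + 1) ≤ (1 + C) * (C' * rho x ^ (-κ)) := by gcongr
      have e3 := mul_nonneg hC.le (abs_nonneg (Real.log (rho x)))
      linarith
    obtain ⟨C2, hC2, h2⟩ := grad_bounds hδ hU Breg_sub_cone hu hp_reg hNS' hdiv hκ hκ1
      (by positivity) hb
    obtain ⟨C3, hC3, h3⟩ := p_bound hδ hU (Areg_sub_Breg.trans Breg_sub_cone)
      (hp_reg.of_le (by norm_num)) hκ hC2 (fun x hx => (h2 x hx).2)
    refine ⟨(1 + C) * C' + C2 + C3, by positivity, fun x hx => ⟨fun i => ?_, fun i j => ?_, ?_⟩⟩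
    · refine (hb x (Areg_sub_Breg hx) i).trans ?_
      have := hx.2.2.1
      gcongr
      linarith
    · refine ((h2 x hx).1 i j).trans ?_
      have := hx.2.2.1
      gcongr
      have : 0 < (1 + C) * C' := by positivity
      linarith
    · refine (h3 x hx).trans ?_
      have := hx.2.2.1
      gcongr
      have : 0 < (1 + C) * C' := by positivity
      linarith


/-! ### Part 6: integrals -/

lemma mp_split : MeasurePreserving (fun x : V3 => ((x 2, (x 0, x 1)) : ℝ × ℝ × ℝ)) := by
  have h1 := PiLp.volume_preserving_ofLp (Fin 3)
  have h2 := volume_preserving_piFinSuccAbove (fun _ : Fin 3 => ℝ) 2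
  have h3 := (MeasurePreserving.id (volume : Measure ℝ)).prod (volume_preserving_finTwoArrow ℝ)
  have := h3.comp (h2.comp h1)
  rw [← Measure.volume_eq_prod] at this
  have e : (fun x : V3 => ((x 2, (x 0, x 1)) : ℝ × ℝ × ℝ)) = Prod.map id MeasurableEquiv.finTwoArrow ∘
      (MeasurableEquiv.piFinSuccAbove (fun _ : Fin 3 => ℝ) 2) ∘ WithLp.ofLp := by
    ext x <;> rfl
  rw [e]
  exact this

lemma lint_radial (h k : ℝ → ℝ≥0∞) (hh : Measurable h) (hk : Measurable k) :
    ∫⁻ x : V3, h (x 2) * k (rho x)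
      = (∫⁻ t, h t) * (ENNReal.ofReal (2 * π) * ∫⁻ r in Set.Ioi 0, ENNReal.ofReal r * k r) := by
  have hm : Measurable (fun q : ℝ × ℝ => k (√(q.1 ^ 2 + q.2 ^ 2))) := hk.comp (by fun_prop)
  have e1 := mp_split.lintegral_comp (f := fun q => h q.1 * k (√(q.2.1 ^ 2 + q.2.2 ^ 2)))
    ((hh.comp measurable_fst).mul (hm.comp measurable_snd))
  have e2 : ∫⁻ x : V3, h (x 2) * k (rho x)
      = ∫⁻ x : V3, (fun q : ℝ × ℝ × ℝ => h q.1 * k (√(q.2.1 ^ 2 + q.2.2 ^ 2))) (x 2, (x 0, x 1)) := rfl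
  rw [e2, e1, Measure.volume_eq_prod, lintegral_prod_mul hh.aemeasurable hm.aemeasurable]
  congr 1
  rw [← lintegral_comp_polarCoord_symm, polarCoord_target]
  have e3 : ∀ q ∈ (Set.Ioi (0:ℝ) ×ˢ Set.Ioo (-π) π), ENNReal.ofReal q.1 •
      k (√((polarCoord.symm q).1 ^ 2 + (polarCoord.symm q).2 ^ 2))
      = (ENNReal.ofReal q.1 * k q.1) * 1 := by
    rintro ⟨r, θ⟩ ⟨hr, hθ⟩
    have hr' : 0 < r := hr
    simp only [polarCoord_symm_apply, smul_eq_mul, mul_one]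
    rw [mul_pow, mul_pow, ← mul_add, Real.cos_sq_add_sin_sq, mul_one, Real.sqrt_sq hr'.le]
  rw [setLIntegral_congr_fun (measurableSet_Ioi.prod measurableSet_Ioo) e3, Measure.volume_eq_prod,
    ← Measure.prod_restrict, lintegral_prod_mul (f := fun r => ENNReal.ofReal r * k r) (g := fun _ => 1)
      (by fun_prop) (by fun_prop)]
  rw [mul_comm]
  congr 1
  simp only [lintegral_const, one_mul, Measure.restrict_apply MeasurableSet.univ, Set.univ_inter,
    Real.volume_Ioo]
  congr 1; ring

lemma ae_rho_pos : ∀ᵐ x : V3, 0 < rho x := by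
  have := lint_radial (fun _ => 1) (Set.indicator {0} 1) measurable_const
    (measurable_one.indicator (measurableSet_singleton _))
  have h0 : ∫⁻ r in Set.Ioi (0:ℝ), ENNReal.ofReal r * (Set.indicator {0} 1 : ℝ → ℝ≥0∞) r = 0 := by
    rw [setLIntegral_congr_fun (g := fun _ => 0) measurableSet_Ioi]
    · simp
    · intro r hr
      have : r ≠ 0 := ne_of_gt hr
      simp [this]
  have hmeas : Measurable (fun x : V3 => 1 * (Set.indicator {0} 1 : ℝ → ℝ≥0∞) (rho x)) :=
    measurable_const.mul
      ((measurable_one.indicator (measurableSet_singleton _)).comp rho_continuous.measurable)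
  rw [h0, mul_zero, mul_zero, lintegral_eq_zero_iff hmeas] at this
  filter_upwards [this] with x hx
  rcases (rho_nonneg x).eq_or_lt with h | h
  · simp [← h] at hx
  · exact h

lemma measurableSet_OmegaR (a b R : ℝ) : MeasurableSet (OmegaR a b R) := by
  have hc2 : Continuous fun x : V3 => x 2 := by fun_prop
  exact (measurableSet_lt measurable_const hc2.measurable).inter
    ((measurableSet_lt hc2.measurable measurable_const).inter
    (measurableSet_lt rho_continuous.measurable measurable_const))

lemma isOpen_OmegaR (a b R : ℝ) : IsOpen (OmegaR a b R) := by
  have hc2 : Continuous fun x : V3 => x 2 := by fun_prop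
  exact (isOpen_lt continuous_const hc2).inter
    ((isOpen_lt hc2 continuous_const).inter (isOpen_lt rho_continuous continuous_const))

lemma radial_int {a b R : ℝ} (hab : a ≤ b) {F : ℝ → ℝ} (hF : Measurable F) (hF0 : ∀ r, 0 ≤ F r)
    (hI : IntegrableOn (fun r => r * F r) (Set.Ioo 0 R)) :
    IntegrableOn (fun x => F (rho x)) (OmegaR a b R) ∧
    ∫ x in OmegaR a b R, F (rho x) = (b - a) * (2 * π) * ∫ r in Set.Ioo 0 R, r * F r := by
  have hL : ∫⁻ x in OmegaR a b R, ENNReal.ofReal (F (rho x))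
      = ENNReal.ofReal (b - a) * (ENNReal.ofReal (2 * π) *
        ENNReal.ofReal (∫ r in Set.Ioo 0 R, r * F r)) := by
    have e := lint_radial (Set.indicator (Set.Ioo a b) 1)
      (Set.indicator (Set.Iio R) (fun r => ENNReal.ofReal (F r)))
      (measurable_one.indicator measurableSet_Ioo)
      ((hF.ennreal_ofReal).indicator measurableSet_Iio)
    rw [← lintegral_indicator (measurableSet_OmegaR a b R)]
    have e1 : ∀ x : V3, (OmegaR a b R).indicator (fun x => ENNReal.ofReal (F (rho x))) x
        = (Set.indicator (Set.Ioo a b) 1 : ℝ → ℝ≥0∞) (x 2) *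
          (Set.indicator (Set.Iio R) (fun r => ENNReal.ofReal (F r))) (rho x) := by
      intro x
      by_cases h1 : x 2 ∈ Set.Ioo a b
      · by_cases h2 : rho x < R
        · have : x ∈ OmegaR a b R := ⟨h1.1, h1.2, h2⟩
          simp [this, h1, h2, -Set.mem_Ioo]
        · have : x ∉ OmegaR a b R := fun h => h2 h.2.2
          simp [this, h2]
      · have : x ∉ OmegaR a b R := fun h => h1 ⟨h.1, h.2.1⟩
        simp [this, h1, -Set.mem_Ioo]
    simp_rw [e1]
    rw [e]
    congr 1
    · rw [lintegral_indicator measurableSet_Ioo]; simp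
    · congr 1
      rw [ofReal_integral_eq_lintegral_ofReal hI]
      · rw [← lintegral_indicator measurableSet_Ioi, ← lintegral_indicator measurableSet_Ioo]
        congr 1; ext r
        by_cases h1 : 0 < r
        · by_cases h2 : r < R
          · simp [h1, h2, ENNReal.ofReal_mul h1.le]
          · simp [h1, h2]
        · simp [h1]
      · filter_upwards [ae_restrict_mem measurableSet_Ioo] with r hr
        exact mul_nonneg hr.1.le (hF0 r)
  have hm : AEStronglyMeasurable (fun x => F (rho x)) (volume.restrict (OmegaR a b R)) :=
    (hF.comp rho_continuous.measurable).aestronglyMeasurable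
  have hpos : 0 ≤ ∫ r in Set.Ioo 0 R, r * F r :=
    setIntegral_nonneg measurableSet_Ioo fun r hr => mul_nonneg hr.1.le (hF0 r)
  have hint : IntegrableOn (fun x => F (rho x)) (OmegaR a b R) := by
    refine ⟨hm, ?_⟩
    rw [hasFiniteIntegral_iff_ofReal (Eventually.of_forall fun x => hF0 _), hL]
    finiteness
  refine ⟨hint, ?_⟩
  rw [integral_eq_lintegral_of_nonneg_ae (Eventually.of_forall fun x => hF0 _) hm, hL,
    ENNReal.toReal_mul, ENNReal.toReal_mul, ENNReal.toReal_ofReal (by linarith),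
    ENNReal.toReal_ofReal (by positivity), ENNReal.toReal_ofReal hpos]
  ring

lemma integrable_rho_rpow {a b R c : ℝ} (hab : a ≤ b) (hR : 0 < R) (hc : c < 2) :
    IntegrableOn (fun x => rho x ^ (-c)) (OmegaR a b R) := by
  have hm : Measurable fun r : ℝ => |r| ^ (-c) := by fun_prop
  have := (radial_int hab (F := fun r => |r| ^ (-c)) hm (fun r => by positivity) (R := R) ?_).1
  · refine this.congr_fun (fun x _ => ?_) (measurableSet_OmegaR a b R)
    simp only [abs_of_nonneg (rho_nonneg x)]
  · have h1 : IntegrableOn (fun r : ℝ => r ^ (1 - c)) (Set.Ioo 0 R) :=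
      (intervalIntegral.integrableOn_Ioo_rpow_iff hR).2 (by linarith)
    refine h1.congr_fun (fun r hr => ?_) measurableSet_Ioo
    simp only [abs_of_pos hr.1]
    rw [sub_eq_add_neg, Real.rpow_add hr.1, Real.rpow_one]

/-- concentration integral -/
lemma conc_int (a b R : ℝ) (hab : a ≤ b) (s : ℝ) (hs : 0 < s) :
    IntegrableOn (fun x => (1 + rho x / s + s / rho x) * (s ^ 4 / (rho x ^ 2 + s ^ 2) ^ 3))
      (OmegaR a b R) ∧
    ∫ x in OmegaR a b R, (1 + rho x / s + s / rho x) * (s ^ 4 / (rho x ^ 2 + s ^ 2) ^ 3)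
      ≤ (b - a) * (2 * π) * (3 * π) := by
  set F : ℝ → ℝ := fun r => (1 + |r| / s + s / |r|) * (s ^ 4 / (r ^ 2 + s ^ 2) ^ 3) with hF
  have hFm : Measurable F := by fun_prop
  have hF0 : ∀ r, 0 ≤ F r := fun r => by positivity
  have hGi : Integrable (fun r : ℝ => 3 * s⁻¹ * (1 + (s⁻¹ * r) ^ 2)⁻¹) :=
    (integrable_inv_one_add_sq.comp_mul_left' (R := s⁻¹) (by positivity)).const_mul _
  have hG : ∫ r : ℝ, 3 * s⁻¹ * (1 + (s⁻¹ * r) ^ 2)⁻¹ = 3 * π := by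
    rw [integral_const_mul, Measure.integral_comp_mul_left (fun y => (1 + y ^ 2)⁻¹),
      integral_univ_inv_one_add_sq, inv_inv, abs_of_pos hs, smul_eq_mul]
    field_simp
  have hle : ∀ r ∈ Set.Ioo 0 R, r * F r ≤ 3 * s⁻¹ * (1 + (s⁻¹ * r) ^ 2)⁻¹ := by
    intro r hr
    have hr0 : 0 < r := hr.1
    have e1 : 3 * s⁻¹ * (1 + (s⁻¹ * r) ^ 2)⁻¹
        = 3 * s * (r ^ 2 + s ^ 2) ^ 2 / (r ^ 2 + s ^ 2) ^ 3 := by field_simp; try ring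
    have e2 : r * F r = (s ^ 4 * r + s ^ 3 * r ^ 2 + s ^ 5) / (r ^ 2 + s ^ 2) ^ 3 := by
      rw [hF]; simp only [abs_of_pos hr0]; field_simp; try ring
    rw [e1, e2]
    gcongr
    have h1 : s * r ≤ r ^ 2 + s ^ 2 := by nlinarith [sq_nonneg (s - r)]
    have h2 : s ^ 2 ≤ r ^ 2 + s ^ 2 := by nlinarith [sq_nonneg r]
    have h3 : r ^ 2 ≤ r ^ 2 + s ^ 2 := by nlinarith [sq_nonneg s]
    have k1 : (s * r) * s ^ 2 ≤ (r ^ 2 + s ^ 2) * (r ^ 2 + s ^ 2) := by gcongr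
    have k2 : s ^ 2 * s ^ 2 ≤ (r ^ 2 + s ^ 2) * (r ^ 2 + s ^ 2) := by gcongr
    have k3 : s ^ 2 * r ^ 2 ≤ (r ^ 2 + s ^ 2) * (r ^ 2 + s ^ 2) := by gcongr
    nlinarith
  have hI : IntegrableOn (fun r => r * F r) (Set.Ioo 0 R) := by
    refine Integrable.mono' hGi.integrableOn (measurable_id.mul hFm).aestronglyMeasurable ?_
    filter_upwards [ae_restrict_mem measurableSet_Ioo] with r hr
    rw [Real.norm_eq_abs, abs_of_nonneg (mul_nonneg hr.1.le (hF0 r))]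
    exact hle r hr
  obtain ⟨h1, h2⟩ := radial_int hab hFm hF0 hI
  have e : ∀ x, F (rho x) = (1 + rho x / s + s / rho x) * (s ^ 4 / (rho x ^ 2 + s ^ 2) ^ 3) := by
    intro x; simp only [hF, abs_of_nonneg (rho_nonneg x)]
  simp_rw [e] at h1 h2
  refine ⟨h1, ?_⟩
  rw [h2]
  have h3 : ∫ r in Set.Ioo 0 R, r * F r ≤ 3 * π := by
    rw [← hG]
    refine (setIntegral_mono_on hI hGi.integrableOn measurableSet_Ioo hle).trans ?_
    exact setIntegral_le_integral hGi (Eventually.of_forall fun r => by positivity)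
  have : 0 ≤ b - a := by linarith
  gcongr


lemma mem_Areg {δ : ℝ} {x : V3} (hx : x ∈ OmegaR (-2) (-1/2) (δ/16)) (h : 0 < rho x) : x ∈ Areg δ :=
  ⟨hx.1.le, hx.2.1.le, h, hx.2.2.le⟩

lemma eLpNorm_bound {E : Type*} [NormedAddCommGroup E] {a b R : ℝ} (hab : a ≤ b) (hR : 0 < R)
    {f : V3 → E} {C c s : ℝ}
    (hs : 0 < s) (hC : 0 ≤ C) (hcs : c * s < 2)
    (hb : ∀ x ∈ OmegaR a b R, 0 < rho x → ‖f x‖ ≤ C * rho x ^ (-c)) :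
    eLpNorm f (ENNReal.ofReal s) (volume.restrict (OmegaR a b R)) ≠ ⊤ := by
  apply ne_of_lt
  rw [eLpNorm_lt_top_iff_lintegral_rpow_enorm_lt_top (by simpa using hs) ENNReal.ofReal_ne_top,
    ENNReal.toReal_ofReal hs.le]
  have hi := (integrable_rho_rpow hab hR hcs).const_mul (C ^ s)
  have hfin : ∫⁻ x in OmegaR a b R, ENNReal.ofReal (C ^ s * rho x ^ (-(c * s))) < ⊤ := by
    have := hi.2
    rwa [hasFiniteIntegral_iff_ofReal] at this
    filter_upwards with x
    have := rho_nonneg x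
    positivity
  refine lt_of_le_of_lt (lintegral_mono_ae ?_) hfin
  filter_upwards [ae_restrict_mem (measurableSet_OmegaR a b R), ae_restrict_of_ae ae_rho_pos] with x hx hr
  have h1 : ‖f x‖ₑ ≤ ENNReal.ofReal (C * rho x ^ (-c)) := by
    rw [← ofReal_norm_eq_enorm]
    exact ENNReal.ofReal_le_ofReal (hb x hx hr)
  calc ‖f x‖ₑ ^ s ≤ (ENNReal.ofReal (C * rho x ^ (-c))) ^ s := by gcongr
    _ = ENNReal.ofReal (C ^ s * rho x ^ (-(c * s))) := by
      rw [ENNReal.ofReal_rpow_of_nonneg (by positivity) hs.le, Real.mul_rpow hC (by positivity),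
        ← Real.rpow_mul hr.le, neg_mul]

lemma basis_expand (y : V3) : y = ∑ j, y j • e3 j := by
  ext i
  simp [Fin.sum_univ_three, e3_apply]
  fin_cases i <;> simp

lemma norm_le_sum_abs (y : V3) : ‖y‖ ≤ ∑ j, |y j| := by
  conv_lhs => rw [basis_expand y]
  refine (norm_sum_le _ _).trans (Finset.sum_le_sum fun j _ => ?_)
  rw [norm_smul, e3, EuclideanSpace.norm_single]; simp

lemma opNorm_bound {u : V3 → V3} {x : V3} {B : ℝ} (hd : DifferentiableAt ℝ u x)
    (hb : ∀ i j, |pd j (fun z => u z i) x| ≤ B) : ‖fderiv ℝ u x‖ ≤ 9 * B := by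
  have hB : 0 ≤ B := (abs_nonneg _).trans (hb 0 0)
  refine ContinuousLinearMap.opNorm_le_bound _ (by positivity) fun y => ?_
  have h1 : ∀ j, ‖fderiv ℝ u x (e3 j)‖ ≤ 3 * B := by
    intro j
    refine (norm_le_sum_abs _).trans ?_
    calc ∑ i, |(fderiv ℝ u x (e3 j)) i| ≤ ∑ i : Fin 3, B := by
          refine Finset.sum_le_sum fun i _ => ?_
          have := hb i j
          unfold pd at this
          have e : fderiv ℝ (fun z => u z i) x = (EuclideanSpace.proj i : V3 →L[ℝ] ℝ).comp (fderiv ℝ u x) :=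
            ((EuclideanSpace.proj i : V3 →L[ℝ] ℝ).hasFDerivAt.comp x hd.hasFDerivAt).fderiv
          rw [e] at this
          simpa using this
      _ = 3 * B := by simp
  conv_lhs => rw [basis_expand y]
  rw [map_sum]
  refine (norm_sum_le _ _).trans ?_
  calc ∑ j, ‖fderiv ℝ u x (y j • e3 j)‖ ≤ ∑ j : Fin 3, ‖y‖ * (3 * B) := by
        refine Finset.sum_le_sum fun j _ => ?_
        rw [map_smul, norm_smul]
        exact mul_le_mul (abs_coord_le y j) (h1 j) (norm_nonneg _) (norm_nonneg _)
    _ = 9 * B * ‖y‖ := by simp; ring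

/-- the three integrability claims -/
lemma Lp_claims {δ : ℝ} {u : V3 → V3} {p : V3 → ℝ} {U : Set V3} (D : Dat δ (fun i x => u x i) p U)
    (hu : ContDiffOn ℝ 2 u U) :
    eLpNorm u 2 (volume.restrict (OmegaR (-2) (-1/2) (δ/16))) ≠ ⊤ ∧
    (∀ s : ℝ, 1 < s → s < 2 →
      eLpNorm (fun x => fderiv ℝ u x) (ENNReal.ofReal s)
        (volume.restrict (OmegaR (-2) (-1/2) (δ/16))) ≠ ⊤ ∧
      eLpNorm (fun x => fun i j => u x i * u x j) (ENNReal.ofReal s)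
        (volume.restrict (OmegaR (-2) (-1/2) (δ/16))) ≠ ⊤ ∧
      eLpNorm p (ENNReal.ofReal s)
        (volume.restrict (OmegaR (-2) (-1/2) (δ/16))) ≠ ⊤) := by
  have hδ := D.hδ
  have hR : 0 < δ / 16 := by positivity
  have hab : (-2 : ℝ) ≤ -1/2 := by norm_num
  constructor
  · obtain ⟨C, hC, h⟩ := D.hpow (1/2) (by norm_num) (by norm_num)
    have := eLpNorm_bound hab hR (f := u) (C := 3 * C) (c := 1/2) (s := 2) (by norm_num) (by positivity)
      (by norm_num) (fun x hx hr => by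
        refine (norm_le_sum_abs _).trans ?_
        calc ∑ i, |u x i| ≤ ∑ i : Fin 3, C * rho x ^ (-(1/2) : ℝ) :=
              Finset.sum_le_sum fun i _ => (h x (mem_Areg hx hr)).1 i
          _ = _ := by simp; ring)
    simpa using this
  · intro s hs1 hs2
    set κ : ℝ := (2 / s - 1) / 2 with hκ
    have h2s : 1 < 2 / s := by rw [lt_div_iff₀ (by linarith)]; linarith
    have h2s' : 2 / s < 2 := by rw [div_lt_iff₀ (by linarith)]; linarith
    have hκ0 : 0 < κ := by rw [hκ]; linarith
    have hκ1 : κ ≤ 1 := by rw [hκ]; linarith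
    have hcs : (1 + κ) * s < 2 := by
      have : (1 + κ) < 2 / s := by rw [hκ]; linarith
      rwa [lt_div_iff₀ (by linarith)] at this
    obtain ⟨C, hC, h⟩ := D.hpow κ hκ0 hκ1
    refine ⟨?_, ?_, ?_⟩
    · refine eLpNorm_bound hab hR (C := 9 * C) (c := 1 + κ) (by linarith) (by positivity) hcs
        fun x hx hr => ?_
      have hxA := mem_Areg hx hr
      have hd : DifferentiableAt ℝ u x :=
        (hu.differentiableOn (by norm_num)).differentiableAt (D.hU.mem_nhds (D.hAU hxA))
      refine (opNorm_bound hd (h x hxA).2.1).trans (le_of_eq ?_)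
      rw [mul_assoc]; congr 3; ring
    · obtain ⟨C, hC, h⟩ := D.hpow (1/2) (by norm_num) (by norm_num)
      refine eLpNorm_bound hab hR (C := C * C) (c := 1) (by linarith) (by positivity) (by linarith)
        fun x hx hr => ?_
      have hxA := mem_Areg hx hr
      have e : C * C * rho x ^ (-1 : ℝ) = (C * rho x ^ (-(1/2) : ℝ)) * (C * rho x ^ (-(1/2) : ℝ)) := by
        rw [show (-1 : ℝ) = -(1/2) + -(1/2) by norm_num, Real.rpow_add hr]; ring
      have hpos : 0 ≤ C * C * rho x ^ (-1 : ℝ) := by positivity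
      rw [pi_norm_le_iff_of_nonneg hpos]
      intro i
      rw [pi_norm_le_iff_of_nonneg hpos]
      intro j
      rw [e, norm_mul]
      exact mul_le_mul ((h x hxA).1 i) ((h x hxA).1 j) (norm_nonneg _) (by positivity)
    · refine eLpNorm_bound hab hR (C := C) (c := 1 + κ) (by linarith) hC.le hcs
        fun x hx hr => ?_
      refine (h x (mem_Areg hx hr)).2.2.trans (le_of_eq ?_)
      congr 2; ring


/-! ### Part 7: integration by parts across the axis -/

/-- the square of the distance to the axis -/
def mm (x : V3) : ℝ := x 0 ^ 2 + x 1 ^ 2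

/-- horizontal coordinates -/
def hx (j : Fin 3) (x : V3) : ℝ := if j = 2 then 0 else x j

lemma mm_rho (x : V3) : mm x = rho x ^ 2 := (rho_sq x).symm

lemma contDiff_mm {n : WithTop ℕ∞} : ContDiff ℝ n mm := by
  unfold mm
  exact ((contDiff_coord 0).pow 2).add ((contDiff_coord 1).pow 2)

lemma contDiff_hx {n : WithTop ℕ∞} (j : Fin 3) : ContDiff ℝ n (hx j) := by
  unfold hx
  by_cases h : j = 2
  · simp only [h, if_true]; exact contDiff_const
  · simp only [h, if_false]; exact contDiff_coord j

lemma pd_sq_coord (i j : Fin 3) (x : V3) : pd j (fun y : V3 => y i ^ 2) x = 2 * x i * (if i = j then 1 else 0) := by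
  have := pd_comp_real (F := fun t => t ^ 2) (f := fun y : V3 => y i) (x := x) j
    (by simpa using hasDerivAt_pow 2 (x i)) ((contDiff_coord (n := 1) i).differentiable (by simp) x)
  rw [this, pd_coord]

lemma pd_mm (j : Fin 3) (x : V3) : pd j mm x = 2 * hx j x := by
  have h : ∀ i : Fin 3, DifferentiableAt ℝ (fun y : V3 => y i ^ 2) x := fun i =>
    ((contDiff_coord (n := 1) i).pow 2).differentiable (by simp) x
  have := pd_add j (h 0) (h 1)
  rw [pd_sq_coord, pd_sq_coord] at this
  unfold mm; rw [this]; unfold hx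
  fin_cases j <;> simp

lemma pd_hx (i j : Fin 3) (x : V3) : pd j (hx i) x = if i = j ∧ i ≠ 2 then 1 else 0 := by
  unfold hx
  by_cases h : i = 2
  · simp only [h, if_true]; rw [pd_const]; simp
  · simp only [h, if_false]; rw [pd_coord]; simp [h]

lemma abs_hx_le (j : Fin 3) (x : V3) : |hx j x| ≤ rho x := by
  have := abs_coord_le_rho x
  unfold hx
  fin_cases j
  · simpa using this.1
  · simpa using this.2
  · simpa using rho_nonneg x

lemma deriv_transition : ∃ C : ℝ, 0 < C ∧ ∀ x, |deriv Real.smoothTransition x| ≤ C ∧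
    ((x < 0 ∨ 1 < x) → deriv Real.smoothTransition x = 0) := by
  have hc : Continuous (deriv Real.smoothTransition) :=
    (Real.smoothTransition.contDiff (n := 1)).continuous_deriv (by simp)
  obtain ⟨C, hC⟩ := (isCompact_Icc (a := (0:ℝ)) (b := 1)).exists_bound_of_continuousOn hc.continuousOn
  have h0 : ∀ x : ℝ, (x < 0 ∨ 1 < x) → deriv Real.smoothTransition x = 0 := by
    rintro x (hx | hx)
    · have : Real.smoothTransition =ᶠ[𝓝 x] fun _ => 0 := by
        filter_upwards [Iio_mem_nhds hx] with y hy
        exact Real.smoothTransition.zero_of_nonpos (le_of_lt hy)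
      rw [this.deriv_eq]; simp
    · have : Real.smoothTransition =ᶠ[𝓝 x] fun _ => 1 := by
        filter_upwards [Ioi_mem_nhds hx] with y hy
        exact Real.smoothTransition.one_of_one_le (le_of_lt hy)
      rw [this.deriv_eq]; simp
  refine ⟨|C| + 1, by positivity, fun x => ⟨?_, h0 x⟩⟩
  by_cases hx : x ∈ Set.Icc (0:ℝ) 1
  · have := hC x hx
    rw [Real.norm_eq_abs] at this
    linarith [le_abs_self C]
  · rw [h0 x (by
      by_contra hcon
      push Not at hcon
      exact hx hcon)]
    simp; positivity

/-- cutoff away from the axis -/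
def cut (s : ℝ) (x : V3) : ℝ := Real.smoothTransition (mm x / s ^ 2 - 1)

lemma contDiff_cut {n : ℕ∞} (s : ℝ) : ContDiff ℝ n (cut s) :=
  Real.smoothTransition.contDiff.comp ((contDiff_mm.div_const _).sub contDiff_const)

lemma pd_cut (s : ℝ) (j : Fin 3) (x : V3) :
    pd j (cut s) x = deriv Real.smoothTransition (mm x / s ^ 2 - 1) * (2 * hx j x / s ^ 2) := by
  have hd : DifferentiableAt ℝ (fun y => mm y / s ^ 2 - 1) x :=
    ((contDiff_mm (n := 1).div_const _).sub contDiff_const).differentiable (by simp) x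
  have h1 := pd_comp_real (F := Real.smoothTransition) (f := fun y => mm y / s ^ 2 - 1) (x := x) j
    ((Real.smoothTransition.contDiff (n := 1)).differentiable (by simp) _).hasDerivAt hd
  have h2 : pd j (fun y => mm y / s ^ 2 - 1) x = 2 * hx j x / s ^ 2 := by
    have hdm : DifferentiableAt ℝ mm x := (contDiff_mm (n := 1)).differentiable (by simp) x
    rw [pd_comp_real (F := fun t => t / s ^ 2 - 1) (F' := 1 / s ^ 2) (f := mm) j
      (((hasDerivAt_id _).div_const _).sub_const _) hdm, pd_mm]
    ring
  rw [h2] at h1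
  exact h1

lemma cut_bound : ∃ C : ℝ, 0 < C ∧ ∀ s : ℝ, 0 < s → ∀ x : V3, 0 < rho x →
    |cut s x| ≤ 1 ∧ ∀ j, |pd j (cut s) x| ≤ C / rho x := by
  obtain ⟨C, hC, h⟩ := deriv_transition
  refine ⟨4 * C, by positivity, fun s hs x hr => ⟨?_, fun j => ?_⟩⟩
  · unfold cut
    rw [abs_of_nonneg (Real.smoothTransition.nonneg _)]
    exact Real.smoothTransition.le_one _
  · rw [pd_cut]
    by_cases h2 : 1 < mm x / s ^ 2 - 1
    · rw [(h _).2 (Or.inr h2)]; simp; positivity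
    · have h3 : mm x ≤ 2 * s ^ 2 := by
        have : mm x / s ^ 2 ≤ 2 := by linarith
        rwa [div_le_iff₀ (by positivity)] at this
      rw [mm_rho] at h3
      rw [abs_mul]
      have e : |2 * hx j x / s ^ 2| ≤ 4 / rho x := by
        rw [abs_div, abs_mul, abs_of_pos (by positivity : (0:ℝ) < s ^ 2), abs_two,
          div_le_div_iff₀ (by positivity) hr]
        nlinarith [abs_hx_le j x]
      calc _ ≤ C * (4 / rho x) := mul_le_mul (h _).1 e (abs_nonneg _) hC.le
        _ = _ := by ring

lemma cut_lim {s : ℕ → ℝ} (hs : ∀ n, 0 < s n) (hs0 : Tendsto s atTop (𝓝 0)) {x : V3} (hr : 0 < rho x) :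
    ∀ᶠ n in atTop, cut (s n) x = 1 ∧ ∀ j, pd j (cut (s n)) x = 0 := by
  have : ∀ᶠ n in atTop, s n < rho x / 2 := hs0.eventually_lt_const (by positivity)
  filter_upwards [this] with n hn
  have h1 : 1 < mm x / (s n) ^ 2 - 1 := by
    have : 2 < mm x / (s n) ^ 2 := by
      rw [lt_div_iff₀ (pow_pos (hs n) 2), mm_rho]
      nlinarith [hs n]
    linarith
  obtain ⟨C, hC, h⟩ := deriv_transition
  refine ⟨Real.smoothTransition.one_of_one_le h1.le, fun j => ?_⟩
  rw [pd_cut, (h _).2 (Or.inr h1), zero_mul]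

lemma tsupport_cut {s : ℝ} (hs : 0 < s) {x : V3} (hx : x ∈ tsupport (cut s)) : 0 < rho x := by
  have hcl : IsClosed {y : V3 | s ^ 2 ≤ mm y} :=
    isClosed_le continuous_const (contDiff_mm (n := 0)).continuous
  have hsub : tsupport (cut s) ⊆ {y : V3 | s ^ 2 ≤ mm y} := by
    refine closure_minimal (fun y hy => ?_) hcl
    by_contra hcon
    simp only [Set.mem_setOf_eq, not_le] at hcon
    apply hy
    apply Real.smoothTransition.zero_of_nonpos
    have : mm y / s ^ 2 < 1 := by rw [div_lt_one (by positivity)]; exact hcon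
    linarith
  have h1 : s ^ 2 ≤ mm x := hsub hx
  rw [mm_rho] at h1
  have : 0 < s ^ 2 := by positivity
  by_contra hcon
  have : rho x = 0 := le_antisymm (not_lt.mp hcon) (rho_nonneg x)
  rw [this] at h1
  nlinarith

/-- measurability of products -/
lemma aesm_mul {δ : ℝ} {U : Set V3} (hU : IsOpen U) (hAU : Areg δ ⊆ U) {f g : V3 → ℝ}
    (hf : ContinuousOn f U) (hg : Continuous g) (hgs : tsupport g ⊆ OmegaR (-2) (-1/2) (δ/16)) :
    AEStronglyMeasurable (fun x => f x * g x) := by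
  have h1 : AEStronglyMeasurable (U.indicator (fun x => f x * g x)) volume :=
    (aestronglyMeasurable_indicator_iff hU.measurableSet).2
      ((hf.mul hg.continuousOn).aestronglyMeasurable hU.measurableSet)
  refine h1.congr ?_
  filter_upwards [ae_rho_pos] with x hx
  by_cases hxU : x ∈ U
  · rw [Set.indicator_of_mem hxU]
  · rw [Set.indicator_of_notMem hxU]
    have : x ∉ tsupport g := fun h => hxU (hAU (mem_Areg (hgs h) hx))
    rw [image_eq_zero_of_notMem_tsupport this, mul_zero]

/-- integrability from a pointwise bound -/
lemma int_of_bound {δ : ℝ} (hδ : 0 < δ) {h : V3 → ℝ} {C c : ℝ} (hm : AEStronglyMeasurable h)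
    (hc : c < 2)
    (hb : ∀ x ∈ OmegaR (-2) (-1/2) (δ/16), 0 < rho x → |h x| ≤ C * rho x ^ (-c))
    (h0 : ∀ x, x ∉ OmegaR (-2) (-1/2) (δ/16) → h x = 0) :
    Integrable h := by
  have hi := (integrable_rho_rpow (a := -2) (b := -1/2) (R := δ/16) (by norm_num) (by positivity) hc).const_mul C
  have hi' := (integrable_indicator_iff (measurableSet_OmegaR (-2) (-1/2) (δ/16))).2 hi
  refine hi'.mono' hm ?_
  filter_upwards [ae_rho_pos] with x hx
  by_cases hxU : x ∈ OmegaR (-2) (-1/2) (δ/16)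
  · rw [Set.indicator_of_mem hxU]; exact hb x hxU hx
  · rw [Set.indicator_of_notMem hxU, h0 x hxU]; simp

lemma exists_bd {g : V3 → ℝ} (hg : Continuous g) (hgc : HasCompactSupport g) :
    ∃ C : ℝ, 0 < C ∧ ∀ x, |g x| ≤ C := by
  obtain ⟨C, hC⟩ := hgc.exists_bound_of_continuous hg
  exact ⟨|C| + 1, by positivity, fun x => (hC x).trans (by linarith [le_abs_self C])⟩

/-- integration by parts across the axis -/
lemma ibp_axis {δ : ℝ} {u : Fin 3 → V3 → ℝ} {p : V3 → ℝ} {U : Set V3} (D : Dat δ u p U)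
    {f : Fin 3 → V3 → ℝ} {g : V3 → ℝ} (hf : ∀ j, ContDiffOn ℝ 1 (f j) U)
    (hg : ContDiff ℝ (⊤ : ℕ∞) g) (hgc : HasCompactSupport g)
    (hgs : tsupport g ⊆ OmegaR (-2) (-1/2) (δ/16)) {C κ : ℝ} (hC : 0 < C) (hκ : κ < 1)
    (h1 : ∀ x ∈ Areg δ, ∀ j, |f j x| ≤ C * rho x ^ (-1 - κ))
    (h2 : ∀ x ∈ Areg δ, ∀ j, |f j x * g x| ≤ C * rho x ^ (-κ))
    (h3 : ∀ x ∈ Areg δ, |(∑ j, pd j (f j) x) * g x| ≤ C * rho x ^ (-1 - κ)) :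
    ∫ x, ∑ j, f j x * pd j g x = - ∫ x, (∑ j, pd j (f j) x) * g x := by
  have hδ := D.hδ
  obtain ⟨C₁, hC₁, hcut⟩ := cut_bound
  have hgj : ∀ j, ContDiff ℝ (⊤ : ℕ∞) (fun x => pd j g x) := contDiff_pd_top hg
  choose B hB0 hB using fun j => exists_bd (hgj j).continuous (hasCompactSupport_pd hgc j)
  set s : ℕ → ℝ := fun n => 1 / ((n : ℝ) + 1) with hsdef
  have hs : ∀ n, 0 < s n := fun n => by simp only [hsdef]; positivity
  have hs0 : Tendsto s atTop (𝓝 0) := tendsto_one_div_add_atTop_nhds_zero_nat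
  set Om := OmegaR (-2) (-1/2) (δ/16) with hOm
  set G : ℕ → V3 → ℝ := fun n x => cut (s n) x * g x with hG
  have hGc : ∀ n, ContDiff ℝ 1 (G n) := fun n => (contDiff_cut (n := 1) (s n)).mul (hg.of_le (by exact_mod_cast le_top))
  have hGs : ∀ n, HasCompactSupport (G n) := fun n => hgc.mul_left
  have hGU : ∀ n, tsupport (G n) ⊆ U := fun n x hx => by
    have hx1 : x ∈ tsupport g := tsupport_mul_subset_right hx
    have hx2 : x ∈ tsupport (cut (s n)) := tsupport_mul_subset_left hx
    exact D.hAU (mem_Areg (hgs hx1) (tsupport_cut (hs n) hx2))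
  have hI1 : ∀ n j, Integrable (fun x => f j x * pd j (G n) x) := fun n j =>
    integrable_mul_of_tsupport D.hU (hf j).continuousOn
      (contDiff_pd (m := 0) (hGc n) (by simp) j).continuous (hasCompactSupport_pd (hGs n) j)
      ((tsupport_pd_subset _ j).trans (hGU n))
  have hI2 : ∀ n j, Integrable (fun x => pd j (f j) x * G n x) := fun n j =>
    integrable_mul_of_tsupport D.hU (contDiffOn_pd (m := 0) D.hU (hf j) (by simp) j).continuousOn
      (hGc n).continuous (hGs n) (hGU n)
  have hn : ∀ n, ∫ x, ∑ j, f j x * pd j (G n) x = - ∫ x, (∑ j, pd j (f j) x) * G n x := by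
    intro n
    simp_rw [Finset.sum_mul]
    rw [integral_finsetSum _ (fun j _ => hI1 n j), integral_finsetSum _ (fun j _ => hI2 n j),
      ← Finset.sum_neg_distrib]
    exact Finset.sum_congr rfl fun j _ => ibp D.hU (hf j) (hGc n) (hGs n) (hGU n) j
  have hpdG : ∀ n j x, pd j (G n) x = pd j (cut (s n)) x * g x + cut (s n) x * pd j g x := fun n j x =>
    pd_mul j ((contDiff_cut (n := 1) (s n)).differentiable (by simp) x) (hg.differentiable (by simp) x)
  have hg0 : ∀ x, x ∉ Om → g x = 0 := fun x hx =>
    image_eq_zero_of_notMem_tsupport fun h => hx (hgs h)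
  have hgj0 : ∀ x, x ∉ Om → ∀ j, pd j g x = 0 := fun x hx j =>
    image_eq_zero_of_notMem_tsupport (f := fun x => pd j g x)
      fun h => hx (hgs (tsupport_pd_subset _ j h))
  have hlim1 : Tendsto (fun n => ∫ x, ∑ j, f j x * pd j (G n) x) atTop (𝓝 (∫ x, ∑ j, f j x * pd j g x)) := by
    set K : ℝ := ∑ j, (C * C₁ + C * B j) with hK
    refine tendsto_integral_of_dominated_convergence
      (Om.indicator (fun x => K * rho x ^ (-(1 + κ)))) (fun n => ?_) ?_ (fun n => ?_) ?_
    · exact (integrable_finsetSum _ (fun j _ => hI1 n j)).1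
    · exact (integrable_indicator_iff (measurableSet_OmegaR (-2) (-1/2) (δ/16))).2
        ((integrable_rho_rpow (a := -2) (b := -1/2) (R := δ/16) (by norm_num) (by positivity) (by linarith)).const_mul K)
    · filter_upwards [ae_rho_pos] with x hx
      by_cases hxU : x ∈ Om
      · rw [Set.indicator_of_mem hxU, Real.norm_eq_abs, hK, Finset.sum_mul]
        refine (Finset.abs_sum_le_sum_abs _ _).trans (Finset.sum_le_sum fun j _ => ?_)
        have hA := mem_Areg hxU hx
        rw [hpdG, mul_add, add_mul]
        refine (abs_add_le _ _).trans (add_le_add ?_ ?_)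
        · calc |f j x * (pd j (cut (s n)) x * g x)| = |f j x * g x| * |pd j (cut (s n)) x| := by
                rw [← abs_mul]; congr 1; ring
            _ ≤ (C * rho x ^ (-κ)) * (C₁ / rho x) :=
                mul_le_mul (h2 x hA j) ((hcut _ (hs n) x hx).2 j) (abs_nonneg _) (by positivity)
            _ = C * C₁ * rho x ^ (-(1 + κ)) := by
                rw [show -(1 + κ) = -κ + -1 by ring, Real.rpow_add hx, Real.rpow_neg_one]; ring
        · calc |f j x * (cut (s n) x * pd j g x)| = |f j x| * (|cut (s n) x| * |pd j g x|) := by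
                rw [abs_mul, abs_mul]
            _ ≤ (C * rho x ^ (-1 - κ)) * (1 * B j) :=
                mul_le_mul (h1 x hA j) (mul_le_mul (hcut _ (hs n) x hx).1 (hB j x) (abs_nonneg _)
                  zero_le_one) (by positivity) (by positivity)
            _ = C * B j * rho x ^ (-(1 + κ)) := by
                rw [show -(1 + κ) = -1 - κ by ring]; ring
      · rw [Set.indicator_of_notMem hxU]
        simp [hpdG, hg0 x hxU, hgj0 x hxU]
    · filter_upwards [ae_rho_pos] with x hx
      refine tendsto_const_nhds.congr' ?_
      filter_upwards [cut_lim hs hs0 hx] with n hn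
      refine Finset.sum_congr rfl fun j _ => ?_
      rw [hpdG, hn.1, hn.2 j]; ring
  have hlim2 : Tendsto (fun n => ∫ x, (∑ j, pd j (f j) x) * G n x) atTop
      (𝓝 (∫ x, (∑ j, pd j (f j) x) * g x)) := by
    refine tendsto_integral_of_dominated_convergence
      (Om.indicator (fun x => C * rho x ^ (-(1 + κ)))) (fun n => ?_) ?_ (fun n => ?_) ?_
    · simp_rw [Finset.sum_mul]
      exact (integrable_finsetSum _ (fun j _ => hI2 n j)).1
    · exact (integrable_indicator_iff (measurableSet_OmegaR (-2) (-1/2) (δ/16))).2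
        ((integrable_rho_rpow (a := -2) (b := -1/2) (R := δ/16) (by norm_num) (by positivity) (by linarith)).const_mul C)
    · filter_upwards [ae_rho_pos] with x hx
      by_cases hxU : x ∈ Om
      · rw [Set.indicator_of_mem hxU, Real.norm_eq_abs]
        have hA := mem_Areg hxU hx
        calc |(∑ j, pd j (f j) x) * (cut (s n) x * g x)|
            = |(∑ j, pd j (f j) x) * g x| * |cut (s n) x| := by rw [← abs_mul]; congr 1; ring
          _ ≤ (C * rho x ^ (-1 - κ)) * 1 :=
              mul_le_mul (h3 x hA) (hcut _ (hs n) x hx).1 (abs_nonneg _) (by positivity)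
          _ = _ := by rw [show -(1 + κ) = -1 - κ by ring, mul_one]
      · rw [Set.indicator_of_notMem hxU]
        simp [hG, hg0 x hxU]
    · filter_upwards [ae_rho_pos] with x hx
      refine tendsto_const_nhds.congr' ?_
      filter_upwards [cut_lim hs hs0 hx] with n hn
      simp only [hG]
      rw [hn.1, one_mul]
  exact tendsto_nhds_unique (hlim1.congr hn) hlim2.neg


/-! ### Part 8: consequences of integration by parts -/

lemma rpow_le_rpow_mul {r R a b : ℝ} (hr : 0 < r) (hrR : r ≤ R) (hab : b ≤ a) :
    r ^ a ≤ R ^ (a - b) * r ^ b := by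
  have : r ^ a = r ^ (a - b) * r ^ b := by rw [← Real.rpow_add hr]; congr 1; ring
  rw [this]
  exact mul_le_mul_of_nonneg_right (Real.rpow_le_rpow hr.le hrR (by linarith)) (by positivity)

lemma Areg_rho {δ : ℝ} {x : V3} (hx : x ∈ Areg δ) : 0 < rho x ∧ rho x ≤ δ / 16 := ⟨hx.2.2.1, hx.2.2.2⟩

lemma int_prod {δ : ℝ} {u : Fin 3 → V3 → ℝ} {p : V3 → ℝ} {U : Set V3} (D : Dat δ u p U)
    {f g : V3 → ℝ} (hf : ContinuousOn f U) (hg : Continuous g) (hgc : HasCompactSupport g)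
    (hgs : tsupport g ⊆ OmegaR (-2) (-1/2) (δ/16)) {C c : ℝ} (hC : 0 ≤ C) (hc : c < 2)
    (hb : ∀ x ∈ Areg δ, |f x| ≤ C * rho x ^ (-c)) : Integrable (fun x => f x * g x) := by
  obtain ⟨B, hB0, hB⟩ := exists_bd hg hgc
  refine int_of_bound D.hδ (C := C * B) (aesm_mul D.hU D.hAU hf hg hgs) hc (fun x hx hr => ?_) (fun x hx => ?_)
  · rw [abs_mul]
    calc _ ≤ (C * rho x ^ (-c)) * B :=
          mul_le_mul (hb x (mem_Areg hx hr)) (hB x) (abs_nonneg _) (by positivity)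
      _ = _ := by ring
  · rw [image_eq_zero_of_notMem_tsupport (f := g) fun h => hx (hgs h), mul_zero]

/-- fixed-exponent bounds -/
lemma Dat.quarter {δ : ℝ} {u : Fin 3 → V3 → ℝ} {p : V3 → ℝ} {U : Set V3} (D : Dat δ u p U) :
    ∃ C : ℝ, 0 < C ∧ ∀ x ∈ Areg δ, (∀ i, |u i x| ≤ C * rho x ^ (-(1/4) : ℝ)) ∧
      (∀ i, |u i x| ≤ C * rho x ^ (-(5/4) : ℝ)) ∧
      (∀ i j, |u i x * u j x| ≤ C * rho x ^ (-(1/2) : ℝ)) ∧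
      (∀ i j, |u i x * u j x| ≤ C * rho x ^ (-(5/4) : ℝ)) ∧
      (∀ i j, |pd j (u i) x| ≤ C * rho x ^ (-(5/4) : ℝ)) ∧ |p x| ≤ C * rho x ^ (-(5/4) : ℝ) := by
  have hδ := D.hδ
  obtain ⟨C, hC, h⟩ := D.hpow (1/4) (by norm_num) (by norm_num)
  set R := δ / 16 with hR
  have hR0 : 0 < R := by positivity
  set M1 := R ^ (-(1/4) - -(5/4) : ℝ)
  set M2 := R ^ (-(1/2) - -(5/4) : ℝ)
  have hM1 : 0 < M1 := by positivity
  have hM2 : 0 < M2 := by positivity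
  set K := C + C * M1 + C * C + C * C * M2 with hK
  have k0 : C ≤ K := by rw [hK]; have := mul_pos hC hM1; have := mul_pos (mul_pos hC hC) hM2; nlinarith
  have k1 : C * M1 ≤ K := by rw [hK]; have := mul_pos hC hM1; have := mul_pos (mul_pos hC hC) hM2; nlinarith
  have k2 : C * C ≤ K := by rw [hK]; have := mul_pos hC hM1; have := mul_pos (mul_pos hC hC) hM2; nlinarith
  have k3 : C * C * M2 ≤ K := by rw [hK]; have := mul_pos hC hM1; have := mul_pos (mul_pos hC hC) hM2; nlinarith
  refine ⟨K, by linarith, fun x hx => ?_⟩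
  obtain ⟨hr, hrR⟩ := Areg_rho hx
  obtain ⟨b1, b2, b3⟩ := h x hx
  have e1 : rho x ^ (-(1/4) : ℝ) ≤ M1 * rho x ^ (-(5/4) : ℝ) := rpow_le_rpow_mul hr hrR (by norm_num)
  have e2 : rho x ^ (-(1/2) : ℝ) ≤ M2 * rho x ^ (-(5/4) : ℝ) := rpow_le_rpow_mul hr hrR (by norm_num)
  have q1 : 0 < rho x ^ (-(1/4) : ℝ) := by positivity
  have q2 : 0 < rho x ^ (-(1/2) : ℝ) := by positivity
  have q5 : 0 < rho x ^ (-(5/4) : ℝ) := by positivity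
  have b4 : ∀ i j, |u i x * u j x| ≤ C * C * rho x ^ (-(1/2) : ℝ) := fun i j => by
    rw [abs_mul]
    calc _ ≤ (C * rho x ^ (-(1/4) : ℝ)) * (C * rho x ^ (-(1/4) : ℝ)) :=
          mul_le_mul (b1 i) (b1 j) (abs_nonneg _) (by positivity)
      _ = _ := by
          rw [show (-(1/2) : ℝ) = -(1/4) + -(1/4) by norm_num, Real.rpow_add hr]; ring
  have e5 : (-1 - 1/4 : ℝ) = -(5/4) := by norm_num
  rw [e5] at b2 b3
  refine ⟨fun i => (b1 i).trans (mul_le_mul_of_nonneg_right k0 q1.le), fun i => ?_,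
    fun i j => (b4 i j).trans (mul_le_mul_of_nonneg_right k2 q2.le), fun i j => ?_,
    fun i j => (b2 i j).trans (mul_le_mul_of_nonneg_right k0 q5.le), b3.trans (mul_le_mul_of_nonneg_right k0 q5.le)⟩
  · calc _ ≤ C * rho x ^ (-(1/4) : ℝ) := b1 i
      _ ≤ C * (M1 * rho x ^ (-(5/4) : ℝ)) := by gcongr
      _ ≤ _ := by rw [← mul_assoc]; gcongr
  · calc _ ≤ C * C * rho x ^ (-(1/2) : ℝ) := b4 i j
      _ ≤ C * C * (M2 * rho x ^ (-(5/4) : ℝ)) := by gcongr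
      _ ≤ _ := by rw [← mul_assoc]; gcongr

lemma Dat.hu1 {δ : ℝ} {u : Fin 3 → V3 → ℝ} {p : V3 → ℝ} {U : Set V3} (D : Dat δ u p U) (i : Fin 3) :
    ContDiffOn ℝ 1 (u i) U := (D.hu i).of_le (by norm_num)

lemma Dat.hdu1 {δ : ℝ} {u : Fin 3 → V3 → ℝ} {p : V3 → ℝ} {U : Set V3} (D : Dat δ u p U) (i j : Fin 3) :
    ContDiffOn ℝ 1 (fun x => pd j (u i) x) U := contDiffOn_pd D.hU (D.hu i) (by norm_num) j

/-- weak divergence-freeness -/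
lemma weak_div {δ : ℝ} {u : Fin 3 → V3 → ℝ} {p : V3 → ℝ} {U : Set V3} (D : Dat δ u p U)
    {g : V3 → ℝ} (hg : ContDiff ℝ (⊤ : ℕ∞) g) (hgc : HasCompactSupport g)
    (hgs : tsupport g ⊆ OmegaR (-2) (-1/2) (δ/16)) :
    ∫ x, ∑ j, u j x * pd j g x = 0 := by
  obtain ⟨C, hC, h⟩ := D.quarter
  obtain ⟨B, hB0, hB⟩ := exists_bd hg.continuous hgc
  rw [ibp_axis D (f := u) D.hu1 hg hgc hgs (C := C + C * B) (κ := 1/4) (by positivity) (by norm_num)]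
  · rw [neg_eq_zero]
    apply integral_eq_zero_of_ae
    filter_upwards [ae_rho_pos] with x hx
    by_cases hxU : x ∈ OmegaR (-2) (-1/2) (δ/16)
    · rw [D.hdiv x (D.hAU (mem_Areg hxU hx))]; simp
    · rw [image_eq_zero_of_notMem_tsupport (f := g) fun h => hxU (hgs h)]; simp
  · intro x hx j
    rw [show (-1 - 1/4 : ℝ) = -(5/4) by norm_num]
    have hr := (Areg_rho hx).1
    refine ((h x hx).2.1 j).trans ?_
    have : 0 < C * B := by positivity
    gcongr; linarith
  · intro x hx j
    have hr := (Areg_rho hx).1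
    rw [abs_mul]
    calc _ ≤ (C * rho x ^ (-(1/4) : ℝ)) * B := mul_le_mul ((h x hx).1 j) (hB x) (abs_nonneg _) (by positivity)
      _ ≤ _ := by
        have : 0 < C * rho x ^ (-(1/4) : ℝ) := by positivity
        rw [add_mul]; linarith
  · intro x hx
    have hr := (Areg_rho hx).1
    rw [D.hdiv x (D.hAU hx)]; simp; positivity

/-- weak derivative -/
lemma weak_pd {δ : ℝ} {u : Fin 3 → V3 → ℝ} {p : V3 → ℝ} {U : Set V3} (D : Dat δ u p U)
    {g : V3 → ℝ} (hg : ContDiff ℝ (⊤ : ℕ∞) g) (hgc : HasCompactSupport g)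
    (hgs : tsupport g ⊆ OmegaR (-2) (-1/2) (δ/16)) (i j : Fin 3) :
    ∫ x, pd j (u i) x * g x = - ∫ x, u i x * pd j g x := by
  obtain ⟨C, hC, h⟩ := D.quarter
  obtain ⟨B, hB0, hB⟩ := exists_bd hg.continuous hgc
  have hCB : 0 < C * B := by positivity
  set f : Fin 3 → V3 → ℝ := fun l x => if l = j then u i x else 0 with hf
  have hpd : ∀ x, ∑ l, pd l (f l) x = pd j (u i) x := fun x => by
    have : ∀ l, pd l (f l) x = if l = j then pd j (u i) x else 0 := fun l => by
      by_cases hl : l = j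
      · subst hl; simp [hf]
      · simp only [hf, hl, if_false]; exact pd_const _ _ _
    simp [this]
  have key := ibp_axis D (f := f) (g := g) (fun l => ?_) hg hgc hgs (C := C + C * B) (κ := 1/4) (by positivity)
    (by norm_num) ?_ ?_ ?_
  · simp_rw [hpd] at key
    have e : ∀ x, ∑ l, f l x * pd l g x = u i x * pd j g x := fun x => by simp [hf]
    simp_rw [e] at key
    rw [key, neg_neg]
  · by_cases hl : l = j
    · simp only [hf, hl, if_true]; exact D.hu1 i
    · simp only [hf, hl, if_false]; exact contDiffOn_const
  · intro x hx l
    have hr := (Areg_rho hx).1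
    rw [show (-1 - 1/4 : ℝ) = -(5/4) by norm_num]
    simp only [hf]
    split_ifs
    · refine ((h x hx).2.1 i).trans ?_
      gcongr; linarith
    · simp; positivity
  · intro x hx l
    have hr := (Areg_rho hx).1
    simp only [hf]
    split_ifs
    · rw [abs_mul]
      calc _ ≤ (C * rho x ^ (-(1/4) : ℝ)) * B := mul_le_mul ((h x hx).1 i) (hB x) (abs_nonneg _) (by positivity)
        _ ≤ _ := by
          have : 0 < C * rho x ^ (-(1/4) : ℝ) := by positivity
          rw [add_mul]; linarith
    · simp; positivity
  · intro x hx
    have hr := (Areg_rho hx).1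
    rw [show (-1 - 1/4 : ℝ) = -(5/4) by norm_num, hpd, abs_mul]
    calc _ ≤ (C * rho x ^ (-(5/4) : ℝ)) * B :=
          mul_le_mul ((h x hx).2.2.2.2.1 i j) (hB x) (abs_nonneg _) (by positivity)
        _ ≤ _ := by
          have : 0 < C * rho x ^ (-(5/4) : ℝ) := by positivity
          rw [add_mul]; linarith

lemma int_du {δ : ℝ} {u : Fin 3 → V3 → ℝ} {p : V3 → ℝ} {U : Set V3} (D : Dat δ u p U)
    {g : V3 → ℝ} (hg : Continuous g) (hgc : HasCompactSupport g)
    (hgs : tsupport g ⊆ OmegaR (-2) (-1/2) (δ/16)) (i j : Fin 3) :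
    Integrable (fun x => pd j (u i) x * g x) := by
  obtain ⟨C, hC, h⟩ := D.quarter
  exact int_prod D (D.hdu1 i j).continuousOn hg hgc hgs hC.le (c := 5/4) (by norm_num)
    fun x hx => (h x hx).2.2.2.2.1 i j

lemma int_u {δ : ℝ} {u : Fin 3 → V3 → ℝ} {p : V3 → ℝ} {U : Set V3} (D : Dat δ u p U)
    {g : V3 → ℝ} (hg : Continuous g) (hgc : HasCompactSupport g)
    (hgs : tsupport g ⊆ OmegaR (-2) (-1/2) (δ/16)) (i : Fin 3) :
    Integrable (fun x => u i x * g x) := by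
  obtain ⟨C, hC, h⟩ := D.quarter
  exact int_prod D (D.hu1 i).continuousOn hg hgc hgs hC.le (c := 1/4) (by norm_num)
    fun x hx => (h x hx).1 i

lemma int_uu {δ : ℝ} {u : Fin 3 → V3 → ℝ} {p : V3 → ℝ} {U : Set V3} (D : Dat δ u p U)
    {g : V3 → ℝ} (hg : Continuous g) (hgc : HasCompactSupport g)
    (hgs : tsupport g ⊆ OmegaR (-2) (-1/2) (δ/16)) (i j : Fin 3) :
    Integrable (fun x => u i x * u j x * g x) := by
  obtain ⟨C, hC, h⟩ := D.quarter
  exact int_prod D ((D.hu1 i).continuousOn.mul (D.hu1 j).continuousOn) hg hgc hgs hC.le (c := 1/2) (by norm_num)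
    fun x hx => (h x hx).2.2.1 i j

lemma int_p {δ : ℝ} {u : Fin 3 → V3 → ℝ} {p : V3 → ℝ} {U : Set V3} (D : Dat δ u p U)
    {g : V3 → ℝ} (hg : Continuous g) (hgc : HasCompactSupport g)
    (hgs : tsupport g ⊆ OmegaR (-2) (-1/2) (δ/16)) :
    Integrable (fun x => p x * g x) := by
  obtain ⟨C, hC, h⟩ := D.quarter
  exact int_prod D D.hp.continuousOn hg hgc hgs hC.le (c := 5/4) (by norm_num)
    fun x hx => (h x hx).2.2.2.2.2

/-- the weak form vanishes for solenoidal fields vanishing on the axis -/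
lemma weak_axis {δ : ℝ} {u : Fin 3 → V3 → ℝ} {p : V3 → ℝ} {U : Set V3} (D : Dat δ u p U)
    {Ψ : Fin 3 → V3 → ℝ} (hg : ∀ i, ContDiff ℝ (⊤ : ℕ∞) (Ψ i)) (hgc : ∀ i, HasCompactSupport (Ψ i))
    (hgs : ∀ i, tsupport (Ψ i) ⊆ OmegaR (-2) (-1/2) (δ/16)) (hdiv : ∀ x, ∑ j, pd j (Ψ j) x = 0)
    {B : ℝ} (hB0 : 0 < B) (hB : ∀ i x, |Ψ i x| ≤ B * rho x) :
    ∫ x, ∑ i, ∑ j, (pd j (u i) x * pd j (Ψ i) x - u i x * u j x * pd j (Ψ i) x) = 0 := by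
  obtain ⟨C, hC, h⟩ := D.quarter
  have hdc : ∀ i j, Continuous (fun x => pd j (Ψ i) x) := fun i j => (contDiff_pd_top (hg i) j).continuous
  have hds : ∀ i j, HasCompactSupport (fun x => pd j (Ψ i) x) := fun i j => hasCompactSupport_pd (hgc i) j
  have hdt : ∀ i j, tsupport (fun x => pd j (Ψ i) x) ⊆ OmegaR (-2) (-1/2) (δ/16) := fun i j =>
    (tsupport_pd_subset _ j).trans (hgs i)
  set f : Fin 3 → Fin 3 → V3 → ℝ := fun i j x =>
    pd j (u i) x - (if i = j then 1 else 0) * p x - u i x * u j x with hf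
  have hp1 : ContDiffOn ℝ 1 p U := D.hp.of_le (by norm_num)
  have hfb : ∀ i j, ∀ x ∈ Areg δ, |f i j x| ≤ 3 * C * rho x ^ (-(5/4) : ℝ) := fun i j x hx => by
    have b1 := (h x hx).2.2.2.2.1 i j
    have b2 := (h x hx).2.2.2.2.2
    have b3 := (h x hx).2.2.2.1 i j
    have b4 : |(if i = j then 1 else 0) * p x| ≤ C * rho x ^ (-(5/4) : ℝ) := by
      split_ifs
      · simpa using b2
      · simpa using (abs_nonneg _).trans b2
    simp only [hf]
    have t1 := abs_sub (pd j (u i) x - (if i = j then 1 else 0) * p x) (u i x * u j x)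
    have t2 := abs_sub (pd j (u i) x) ((if i = j then 1 else 0) * p x)
    linarith
  have hfd : ∀ i, ∀ x ∈ Areg δ, ∑ j, pd j (f i j) x = 0 := fun i x hx => by
    have hxU := D.hAU hx
    have hn := D.hU.mem_nhds hxU
    have d1 : ∀ i, DifferentiableAt ℝ (u i) x := fun i =>
      ((D.hu1 i).differentiableOn (by simp)).differentiableAt hn
    have d2 : ∀ i j, DifferentiableAt ℝ (fun x => pd j (u i) x) x := fun i j =>
      ((D.hdu1 i j).differentiableOn (by simp)).differentiableAt hn
    have d3 : DifferentiableAt ℝ p x := (hp1.differentiableOn (by simp)).differentiableAt hn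
    have e : ∀ j, pd j (f i j) x = pd j (fun y => pd j (u i) y) x - (if i = j then 1 else 0) * pd j p x
        - (pd j (u i) x * u j x + u i x * pd j (u j) x) := fun j => by
      simp only [hf]
      have d4 : DifferentiableAt ℝ (fun y => (if i = j then (1:ℝ) else 0) * p y) x := d3.const_mul _
      have d5 : DifferentiableAt ℝ (fun y => pd j (u i) y - (if i = j then (1:ℝ) else 0) * p y) x := (d2 i j).sub d4
      have d6 : DifferentiableAt ℝ (fun y => u i y * u j y) x := (d1 i).mul (d1 j)
      rw [pd_sub j d5 d6, pd_sub j (d2 i j) d4, pd_const_mul j _ d3, pd_mul j (d1 i) (d1 j)]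
    simp_rw [e, Finset.sum_sub_distrib, Finset.sum_add_distrib, ← Finset.mul_sum, D.hdiv x hxU]
    have hN := D.hNS x hxU i
    have e2 : ∑ j, (if i = j then 1 else 0) * pd j p x = pd i p x := by simp
    have e3 : ∑ j, pd j (u i) x * u j x = ∑ j, u j x * pd j (u i) x :=
      Finset.sum_congr rfl fun j _ => mul_comm _ _
    rw [e2, e3, hN]
    unfold lap3
    ring
  have key : ∀ i, ∫ x, ∑ j, f i j x * pd j (Ψ i) x = 0 := fun i => by
    have K := ibp_axis D (f := f i) (g := Ψ i) (fun j => ?_) (hg i) (hgc i) (hgs i) (C := 3 * C + 3 * C * B)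
      (κ := 1/4) (by positivity) (by norm_num) ?_ ?_ ?_
    · rw [K, neg_eq_zero]
      apply integral_eq_zero_of_ae
      filter_upwards [ae_rho_pos] with x hx
      by_cases hxU : x ∈ OmegaR (-2) (-1/2) (δ/16)
      · rw [hfd i x (mem_Areg hxU hx)]; simp
      · rw [image_eq_zero_of_notMem_tsupport (f := Ψ i) fun h => hxU (hgs i h)]; simp
    · exact ((D.hdu1 i j).sub (contDiffOn_const.mul hp1)).sub ((D.hu1 i).mul (D.hu1 j))
    · intro x hx j
      have hr := (Areg_rho hx).1
      rw [show (-1 - 1/4 : ℝ) = -(5/4) by norm_num]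
      refine (hfb i j x hx).trans ?_
      have : 0 < 3 * C * B := by positivity
      gcongr; linarith
    · intro x hx j
      have hr := (Areg_rho hx).1
      rw [abs_mul]
      calc _ ≤ (3 * C * rho x ^ (-(5/4) : ℝ)) * (B * rho x) :=
            mul_le_mul (hfb i j x hx) (hB i x) (abs_nonneg _) (by positivity)
        _ = 3 * C * B * rho x ^ (-(1/4) : ℝ) := by
            rw [show (-(1/4) : ℝ) = -(5/4) + 1 by norm_num, Real.rpow_add hr, Real.rpow_one]; ring
        _ ≤ _ := by
            have : 0 < 3 * C * rho x ^ (-(1/4) : ℝ) := by positivity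
            rw [add_mul]; linarith
    · intro x hx
      have hr := (Areg_rho hx).1
      rw [hfd i x hx]; simp; positivity
  have hsplit : ∀ i j x, f i j x * pd j (Ψ i) x = pd j (u i) x * pd j (Ψ i) x
      - (if i = j then 1 else 0) * (p x * pd j (Ψ i) x) - u i x * u j x * pd j (Ψ i) x := fun i j x => by
    simp only [hf]; ring
  have hint : ∀ i j, Integrable (fun x => f i j x * pd j (Ψ i) x) := fun i j => by
    simp_rw [hsplit]
    exact ((int_du D (hdc i j) (hds i j) (hdt i j) i j).sub
      ((int_p D (hdc i j) (hds i j) (hdt i j)).const_mul _)).sub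
      (int_uu D (hdc i j) (hds i j) (hdt i j) i j)
  have e : ∀ x, ∑ i, ∑ j, (pd j (u i) x * pd j (Ψ i) x - u i x * u j x * pd j (Ψ i) x)
      = ∑ i, ∑ j, f i j x * pd j (Ψ i) x := fun x => by
    simp_rw [hsplit, Finset.sum_sub_distrib]
    have : ∑ i, ∑ j, (if i = j then 1 else 0) * (p x * pd j (Ψ i) x) = 0 := by
      simp [← Finset.mul_sum, hdiv x]
    rw [this, sub_zero]
  simp_rw [e]
  rw [integral_finsetSum _ (fun i _ => integrable_finsetSum _ (fun j _ => hint i j))]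
  simp [key]


/-! ### Part 9: the logarithmic kernel -/

/-- regularized squared distance to the axis -/
def nn (s : ℝ) (x : V3) : ℝ := mm x + s ^ 2

/-- the logarithmic kernel -/
def kk (s : ℝ) (x : V3) : ℝ := nn s x * Real.log (nn s x) - s ^ 2 * Real.log (s ^ 2)

/-- horizontal Kronecker symbol -/
def dlt (b c : Fin 3) : ℝ := if b = c ∧ b ≠ 2 then 1 else 0

lemma mm_nonneg (x : V3) : 0 ≤ mm x := by unfold mm; positivity

lemma nn_pos {s : ℝ} (hs : 0 < s) (x : V3) : 0 < nn s x := by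
  have := mm_nonneg x; unfold nn; positivity

lemma dmm (x : V3) : DifferentiableAt ℝ mm x := (contDiff_mm (n := 1)).differentiable (by simp) x

lemma dhx (c : Fin 3) (x : V3) : DifferentiableAt ℝ (hx c) x := (contDiff_hx (n := 1) c).differentiable (by simp) x

lemma contDiff_nn {n : WithTop ℕ∞} (s : ℝ) : ContDiff ℝ n (nn s) := contDiff_mm.add contDiff_const

lemma dnn (s : ℝ) (x : V3) : DifferentiableAt ℝ (nn s) x := (contDiff_nn (n := 1) s).differentiable (by simp) x

lemma pd_nn (s : ℝ) (j : Fin 3) (x : V3) : pd j (nn s) x = 2 * hx j x := by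
  have := pd_add j (dmm x) (differentiableAt_const (s ^ 2) : DifferentiableAt ℝ (fun _ : V3 => s ^ 2) x)
  rw [pd_const, pd_mm, add_zero] at this
  exact this

lemma contDiff_kk {s : ℝ} (hs : 0 < s) : ContDiff ℝ (⊤ : ℕ∞) (kk s) :=
  ((contDiff_nn s).mul ((contDiff_nn s).log fun x => (nn_pos hs x).ne')).sub contDiff_const

lemma pd_kk {s : ℝ} (hs : 0 < s) (c : Fin 3) :
    (fun x => pd c (kk s) x) = fun x => (2 * (Real.log (nn s x) + 1)) * hx c x := by
  funext x
  have hn := (nn_pos hs x).ne'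
  have h : HasDerivAt (fun t : ℝ => t * Real.log t - s ^ 2 * Real.log (s ^ 2)) (Real.log (nn s x) + 1) (nn s x) :=
    (Real.hasDerivAt_mul_log hn).sub_const _
  have := pd_comp_real c h (dnn s x)
  rw [pd_nn] at this
  exact this.trans (by ring)

lemma pd_log {s : ℝ} (hs : 0 < s) (b : Fin 3) (x : V3) :
    pd b (fun y => 2 * (Real.log (nn s y) + 1)) x = 4 * hx b x / nn s x := by
  have hn := (nn_pos hs x).ne'
  have h : HasDerivAt (fun t : ℝ => 2 * (Real.log t + 1)) (2 * (nn s x)⁻¹) (nn s x) :=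
    ((Real.hasDerivAt_log hn).add_const _).const_mul _
  have := pd_comp_real b h (dnn s x)
  rw [pd_nn] at this
  exact this.trans (by ring)

lemma dlog {s : ℝ} (hs : 0 < s) (x : V3) : DifferentiableAt ℝ (fun y => 2 * (Real.log (nn s y) + 1)) x :=
  (((dnn s x).log (nn_pos hs x).ne').add_const _).const_mul _

lemma pd_pd_kk {s : ℝ} (hs : 0 < s) (b c : Fin 3) :
    (fun x => pd b (fun y => pd c (kk s) y) x) = fun x => 4 * hx b x / nn s x * hx c x
      + dlt c b * (2 * (Real.log (nn s x) + 1)) := by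
  funext x
  rw [pd_kk hs c, pd_mul b (dlog hs x) (dhx c x), pd_log hs, pd_hx]
  unfold dlt
  ring

lemma pd_inv {s : ℝ} (hs : 0 < s) (b : Fin 3) (x : V3) :
    pd b (fun y => 4 / nn s y) x = - (8 * hx b x / nn s x ^ 2) := by
  have hn := (nn_pos hs x).ne'
  have h : HasDerivAt (fun t : ℝ => 4 / t) (-4 / nn s x ^ 2) (nn s x) := by
    exact ((hasDerivAt_const (nn s x) (4:ℝ)).div (hasDerivAt_id _) hn).congr_deriv (by simp)
  have := pd_comp_real b h (dnn s x)
  rw [pd_nn] at this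
  exact this.trans (by ring)

lemma dinv {s : ℝ} (hs : 0 < s) (x : V3) : DifferentiableAt ℝ (fun y => 4 / nn s y) x :=
  (contDiff_const.div (contDiff_nn (n := 1) s) fun y => (nn_pos hs y).ne').differentiable (by simp) x

lemma pd3_kk {s : ℝ} (hs : 0 < s) (a b c : Fin 3) (x : V3) :
    pd a (fun y => pd b (fun z => pd c (kk s) z) y) x =
      - (8 * hx a x / nn s x ^ 2) * (hx b x * hx c x)
      + 4 / nn s x * (dlt b a * hx c x + hx b x * dlt c a) + dlt c b * (4 * hx a x / nn s x) := by
  rw [pd_pd_kk hs b c]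
  have e : (fun x => 4 * hx b x / nn s x * hx c x + dlt c b * (2 * (Real.log (nn s x) + 1)))
      = fun x => (4 / nn s x) * (hx b x * hx c x) + dlt c b * (2 * (Real.log (nn s x) + 1)) := by
    funext x; ring
  have d1 : DifferentiableAt ℝ (fun y => hx b y * hx c y) x := (dhx b x).mul (dhx c x)
  have d2 : DifferentiableAt ℝ (fun y => (4 / nn s y) * (hx b y * hx c y)) x := (dinv hs x).mul d1
  have d3 : DifferentiableAt ℝ (fun y => dlt c b * (2 * (Real.log (nn s y) + 1))) x := (dlog hs x).const_mul _
  rw [e, pd_add a d2 d3, pd_mul a (dinv hs x) d1, pd_mul a (dhx b x) (dhx c x), pd_inv hs,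
    pd_const_mul a _ (dlog hs x), pd_log hs, pd_hx, pd_hx]
  rfl

lemma sum_hx_sq (x : V3) : ∑ a, hx a x ^ 2 = mm x := by
  simp [Fin.sum_univ_three, hx, mm]

lemma lap_kk {s : ℝ} (hs : 0 < s) :
    (fun x => lap3 (kk s) x) = fun x => 8 + 4 * Real.log (nn s x) - s ^ 2 * (4 / nn s x) := by
  funext x
  unfold lap3
  have h : ∀ j, pd j (fun y => pd j (kk s) y) x = _ := fun j => congrFun (pd_pd_kk hs j j) x
  simp_rw [h]
  have hn := (nn_pos hs x).ne'
  have e : mm x = nn s x - s ^ 2 := by unfold nn; ring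
  have e2 := sum_hx_sq x
  rw [e] at e2
  simp only [Fin.sum_univ_three, dlt] at e2 ⊢
  simp
  field_simp
  linear_combination 4 * e2

lemma pd_lap_kk {s : ℝ} (hs : 0 < s) (a : Fin 3) :
    (fun x => pd a (fun y => lap3 (kk s) y) x) = fun x => (8 / nn s x + 8 * s ^ 2 / nn s x ^ 2) * hx a x := by
  funext x
  rw [lap_kk hs]
  have hn := (nn_pos hs x).ne'
  have h : HasDerivAt (fun t : ℝ => 8 + 4 * Real.log t - s ^ 2 * (4 / t))
      (4 * (nn s x)⁻¹ - s ^ 2 * (-4 / nn s x ^ 2)) (nn s x) := by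
    have h1 : HasDerivAt (fun t : ℝ => 4 / t) (-4 / nn s x ^ 2) (nn s x) := by
      exact ((hasDerivAt_const (nn s x) (4:ℝ)).div (hasDerivAt_id _) hn).congr_deriv (by simp)
    exact (((Real.hasDerivAt_log hn).const_mul 4).const_add 8).sub (h1.const_mul _)
  have := pd_comp_real a h (dnn s x)
  rw [pd_nn] at this
  exact this.trans (by ring)

lemma lap_lap_kk {s : ℝ} (hs : 0 < s) (x : V3) :
    lap3 (fun y => lap3 (kk s) y) x = 32 * (s ^ 4 / (rho x ^ 2 + s ^ 2) ^ 3) := by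
  have hn := (nn_pos hs x).ne'
  have h : HasDerivAt (fun t : ℝ => 8 / t + 8 * s ^ 2 / t ^ 2)
      (-8 / nn s x ^ 2 - 16 * s ^ 2 / nn s x ^ 3) (nn s x) := by
    have h1 := (hasDerivAt_inv hn).const_mul 8
    have h2 := ((hasDerivAt_pow 2 (nn s x)).inv (pow_ne_zero 2 hn)).const_mul (8 * s ^ 2)
    refine (h1.add h2).congr_deriv ?_ |>.congr_of_eventuallyEq ?_
    · field_simp; ring
    · filter_upwards with t
      simp [div_eq_mul_inv]
  have hd : DifferentiableAt ℝ (fun y => 8 / nn s y + 8 * s ^ 2 / nn s y ^ 2) x :=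
    ((contDiff_const.div (contDiff_nn (n := 1) s) fun y => (nn_pos hs y).ne').add
      (contDiff_const.div ((contDiff_nn (n := 1) s).pow 2) fun y => pow_ne_zero 2 (nn_pos hs y).ne')).differentiable
      (by simp) x
  have e : ∀ a, pd a (fun y => pd a (fun y => lap3 (kk s) y) y) x =
      (-8 / nn s x ^ 2 - 16 * s ^ 2 / nn s x ^ 3) * (2 * hx a x) * hx a x
        + (8 / nn s x + 8 * s ^ 2 / nn s x ^ 2) * dlt a a := fun a => by
    rw [pd_lap_kk hs a, pd_mul a hd (dhx a x), pd_hx]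
    have := pd_comp_real a h (dnn s x)
    rw [pd_nn] at this
    rw [this]
    rfl
  unfold lap3 at e ⊢
  simp_rw [e]
  have e1 : mm x = nn s x - s ^ 2 := by unfold nn; ring
  have e2 := sum_hx_sq x
  rw [e1] at e2
  have e3 : rho x ^ 2 + s ^ 2 = nn s x := by unfold nn; rw [mm_rho]
  rw [e3]
  simp only [Fin.sum_univ_three, dlt] at e2 ⊢
  simp
  field_simp
  linear_combination (-16 * nn s x - 32 * s ^ 2) * e2

lemma abs_dlt_le (b c : Fin 3) : |dlt b c| ≤ 1 := by
  unfold dlt; split_ifs <;> simp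

lemma kk_bound {R : ℝ} (hR : 0 < R) : ∃ C : ℝ, 0 < C ∧ ∀ s : ℝ, 0 < s → s < 1 → ∀ x : V3, 0 < rho x → rho x ≤ R →
    |kk s x| ≤ C * rho x ^ (-(1/4) : ℝ) ∧ (∀ c, |pd c (kk s) x| ≤ C * rho x ^ (-(1/4) : ℝ)) ∧
    (∀ b c, |pd b (fun y => pd c (kk s) y) x| ≤ C * rho x ^ (-(1/4) : ℝ)) ∧
    (∀ a b c, |pd a (fun y => pd b (fun z => pd c (kk s) z) y) x| ≤ C * rho x ^ (-(5/4) : ℝ)) := by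
  obtain ⟨C₀, hC₀, hlog⟩ := abs_log_le_rpow (κ := 1/4) (R := R) (by norm_num) hR
  set Q := Real.log (R ^ 2 + 1) with hQ
  have hQ0 : 0 ≤ Q := Real.log_nonneg (by nlinarith [sq_nonneg R])
  set A := 2 + Q with hA
  have hA0 : 0 < A := by rw [hA]; linarith
  set K := (R ^ 2 + 1) * (A * C₀) + C₀ + 2 * (A * C₀) * R + 2 * C₀ * R + 4 * C₀ + 2 * (A * C₀) + 2 * C₀ + 20 * R ^ (1/4 : ℝ) with hK
  refine ⟨K, by positivity, fun s hs hs1 x hr hrR => ?_⟩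
  have hnpos := nn_pos hs x
  have hmn : rho x ^ 2 ≤ nn s x := by unfold nn; rw [mm_rho]; nlinarith
  have hnR : nn s x ≤ R ^ 2 + 1 := by unfold nn; rw [mm_rho]; nlinarith
  set P := rho x ^ (-(1/4) : ℝ) with hP
  have hP0 : 0 < P := by positivity
  have hl := hlog (rho x) hr hrR
  have hl1 : 1 ≤ C₀ * P := by have := abs_nonneg (Real.log (rho x)); rw [hP]; linarith
  have hL : |Real.log (nn s x)| ≤ A * C₀ * P := by
    have h1 : Real.log (nn s x) ≤ Q := Real.log_le_log hnpos hnR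
    have h2 : 2 * Real.log (rho x) ≤ Real.log (nn s x) := by
      rw [← Real.log_rpow hr]
      apply Real.log_le_log (by positivity)
      exact_mod_cast hmn
    have h3 : |Real.log (nn s x)| ≤ 2 * |Real.log (rho x)| + Q := by
      rw [abs_le]
      constructor
      · have := neg_abs_le (Real.log (rho x)); linarith
      · have := abs_nonneg (Real.log (rho x)); linarith
    have h4 : |Real.log (rho x)| ≤ C₀ * P := by linarith
    rw [hA]
    nlinarith
  have ht : |s ^ 2 * Real.log (s ^ 2)| ≤ 1 := by
    have h1 : (0:ℝ) < s ^ 2 := by positivity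
    have h2 : s ^ 2 ≤ 1 := by nlinarith
    have h3 : 1 - (s ^ 2)⁻¹ ≤ Real.log (s ^ 2) := Real.one_sub_inv_le_log_of_pos h1
    have h4 : Real.log (s ^ 2) ≤ 0 := Real.log_nonpos h1.le h2
    rw [abs_le]
    constructor
    · have : s ^ 2 * (1 - (s ^ 2)⁻¹) ≤ s ^ 2 * Real.log (s ^ 2) := mul_le_mul_of_nonneg_left h3 h1.le
      have e : s ^ 2 * (1 - (s ^ 2)⁻¹) = s ^ 2 - 1 := by field_simp
      linarith
    · nlinarith
  have hL1 : |2 * (Real.log (nn s x) + 1)| ≤ (2 * (A * C₀) + 2 * C₀) * P := by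
    rw [abs_mul, abs_two]
    have := abs_add_le (Real.log (nn s x)) 1
    rw [abs_one] at this
    nlinarith
  have hxa : ∀ j, |hx j x| ≤ rho x := fun j => abs_hx_le j x
  have hK1 : ((R ^ 2 + 1) * (A * C₀) + C₀) ≤ K := by
    rw [hK]; have : 0 < 2 * (A * C₀) * R + 2 * C₀ * R + 4 * C₀ + 2 * (A * C₀) + 2 * C₀ + 20 * R ^ (1/4 : ℝ) := by positivity
    linarith
  have hK2 : (2 * (A * C₀) + 2 * C₀) * R ≤ K := by
    rw [hK]; have : 0 < (R ^ 2 + 1) * (A * C₀) + C₀ + 4 * C₀ + 2 * (A * C₀) + 2 * C₀ + 20 * R ^ (1/4 : ℝ) := by positivity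
    linarith
  have hK3 : 4 * C₀ + (2 * (A * C₀) + 2 * C₀) ≤ K := by
    rw [hK]; have : 0 < (R ^ 2 + 1) * (A * C₀) + C₀ + 2 * (A * C₀) * R + 2 * C₀ * R + 20 * R ^ (1/4 : ℝ) := by positivity
    linarith
  have hK4 : 20 * R ^ (1/4 : ℝ) ≤ K := by
    rw [hK]; have : 0 < (R ^ 2 + 1) * (A * C₀) + C₀ + 2 * (A * C₀) * R + 2 * C₀ * R + 4 * C₀ + 2 * (A * C₀) + 2 * C₀ := by positivity
    linarith
  have hq : ∀ b, |hx b x / nn s x| ≤ 1 / rho x := fun b => by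
    rw [abs_div, abs_of_pos hnpos, div_le_div_iff₀ hnpos hr]
    nlinarith [hxa b]
  refine ⟨?_, fun c => ?_, fun b c => ?_, fun a b c => ?_⟩
  · refine le_trans ?_ (mul_le_mul_of_nonneg_right hK1 hP0.le)
    unfold kk
    refine (abs_sub _ _).trans ?_
    rw [add_mul]
    refine add_le_add ?_ (ht.trans hl1)
    rw [abs_mul, abs_of_pos hnpos, mul_assoc]
    exact mul_le_mul hnR hL (abs_nonneg _) (by positivity)
  · refine le_trans ?_ (mul_le_mul_of_nonneg_right hK2 hP0.le)
    rw [show pd c (kk s) x = _ from congrFun (pd_kk hs c) x, abs_mul]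
    calc _ ≤ ((2 * (A * C₀) + 2 * C₀) * P) * R :=
          mul_le_mul hL1 ((hxa c).trans hrR) (abs_nonneg _) (by positivity)
      _ = _ := by ring
  · refine le_trans ?_ (mul_le_mul_of_nonneg_right hK3 hP0.le)
    rw [show pd b (fun y => pd c (kk s) y) x = _ from congrFun (pd_pd_kk hs b c) x]
    refine (abs_add_le _ _).trans ?_
    rw [add_mul]
    refine add_le_add ?_ ?_
    · have : |4 * hx b x / nn s x * hx c x| ≤ 4 := by
        rw [mul_div_assoc, mul_assoc, abs_mul, abs_mul]
        have h1 : |hx b x / nn s x| * |hx c x| ≤ 1 / rho x * rho x :=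
          mul_le_mul (hq b) (hxa c) (abs_nonneg _) (by positivity)
        rw [one_div_mul_cancel hr.ne'] at h1
        rw [abs_of_pos (by norm_num : (0:ℝ) < 4)]
        linarith
      nlinarith
    · rw [abs_mul]
      calc _ ≤ 1 * ((2 * (A * C₀) + 2 * C₀) * P) :=
            mul_le_mul (abs_dlt_le _ _) hL1 (abs_nonneg _) (by norm_num)
        _ = _ := by ring
  · rw [pd3_kk hs]
    have hP5 : (1:ℝ) / rho x ≤ R ^ (1/4 : ℝ) * rho x ^ (-(5/4) : ℝ) := by
      have := rpow_le_rpow_mul (a := -1) (b := -(5/4)) hr hrR (by norm_num)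
      rw [Real.rpow_neg_one, ← one_div] at this
      convert this using 3
      norm_num
    have hP50 : 0 < rho x ^ (-(5/4) : ℝ) := by positivity
    have key : |-(8 * hx a x / nn s x ^ 2) * (hx b x * hx c x) + 4 / nn s x * (dlt b a * hx c x + hx b x * dlt c a) +
        dlt c b * (4 * hx a x / nn s x)| ≤ 20 * (1 / rho x) := by
      have e : -(8 * hx a x / nn s x ^ 2) * (hx b x * hx c x) + 4 / nn s x * (dlt b a * hx c x + hx b x * dlt c a) +
        dlt c b * (4 * hx a x / nn s x) = -8 * ((hx a x / nn s x) * ((hx b x / nn s x) * hx c x))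
          + 4 * (dlt b a * (hx c x / nn s x)) + 4 * (dlt c a * (hx b x / nn s x)) + 4 * (dlt c b * (hx a x / nn s x)) := by
        field_simp
        ring
      rw [e]
      have t1 : |(hx a x / nn s x) * ((hx b x / nn s x) * hx c x)| ≤ 1 / rho x := by
        rw [abs_mul, abs_mul]
        have h1 : |hx b x / nn s x| * |hx c x| ≤ 1 / rho x * rho x :=
          mul_le_mul (hq b) (hxa c) (abs_nonneg _) (by positivity)
        rw [one_div_mul_cancel hr.ne'] at h1
        calc _ ≤ 1 / rho x * 1 := mul_le_mul (hq a) h1 (by positivity) (by positivity)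
          _ = _ := mul_one _
      have t2 : ∀ i j l, |dlt i j * (hx l x / nn s x)| ≤ 1 / rho x := fun i j l => by
        rw [abs_mul]
        calc _ ≤ 1 * (1 / rho x) := mul_le_mul (abs_dlt_le _ _) (hq l) (abs_nonneg _) (by norm_num)
          _ = _ := one_mul _
      have a1 := abs_le.1 t1
      have a2 := abs_le.1 (t2 b a c)
      have a3 := abs_le.1 (t2 c a b)
      have a4 := abs_le.1 (t2 c b a)
      rw [abs_le]
      constructor <;> linarith [a1.1, a1.2, a2.1, a2.2, a3.1, a3.2, a4.1, a4.2]
    refine key.trans ?_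
    calc 20 * (1 / rho x) ≤ 20 * (R ^ (1/4 : ℝ) * rho x ^ (-(5/4) : ℝ)) := by gcongr
      _ = 20 * R ^ (1/4 : ℝ) * rho x ^ (-(5/4) : ℝ) := by ring
      _ ≤ _ := by gcongr


/-! ### Part 10: test fields -/

/-- smooth, compactly supported in `S` -/
structure TF (S : Set V3) (f : V3 → ℝ) : Prop where
  smooth : ContDiff ℝ (⊤ : ℕ∞) f
  cpt : HasCompactSupport f
  supp : tsupport f ⊆ S

lemma TF.pd {S : Set V3} {f : V3 → ℝ} (h : TF S f) (j : Fin 3) : TF S (fun x => pd j f x) :=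
  ⟨contDiff_pd_top h.smooth j, hasCompactSupport_pd h.cpt j, (tsupport_pd_subset f j).trans h.supp⟩

lemma TF.mul {S : Set V3} {f k : V3 → ℝ} (h : TF S f) (hk : ContDiff ℝ (⊤ : ℕ∞) k) :
    TF S (fun x => k x * f x) :=
  ⟨hk.mul h.smooth, h.cpt.mul_left, fun _ hx => h.supp (tsupport_mul_subset_right hx)⟩

lemma TF.add {S : Set V3} {f g : V3 → ℝ} (h : TF S f) (hg : TF S g) : TF S (fun x => f x + g x) :=
  ⟨h.smooth.add hg.smooth, h.cpt.add hg.cpt, fun _ hx =>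
    (tsupport_add f g hx).elim (fun h' => h.supp h') fun h' => hg.supp h'⟩

lemma TF.cmul {S : Set V3} {f : V3 → ℝ} (h : TF S f) (c : ℝ) : TF S (fun x => c * f x) :=
  h.mul contDiff_const

lemma TF.sub {S : Set V3} {f g : V3 → ℝ} (h : TF S f) (hg : TF S g) : TF S (fun x => f x - g x) := by
  have := h.add (hg.cmul (-1))
  convert this using 2
  ring

lemma TF.sum {S : Set V3} {f : Fin 3 → V3 → ℝ} (h : ∀ i, TF S (f i)) : TF S (fun x => ∑ i, f i x) := by
  simp_rw [Fin.sum_univ_three]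
  exact ((h 0).add (h 1)).add (h 2)

lemma TF.lap {S : Set V3} {f : V3 → ℝ} (h : TF S f) : TF S (fun x => lap3 f x) :=
  TF.sum fun j => (h.pd j).pd j

lemma TF.diff {S : Set V3} {f : V3 → ℝ} (h : TF S f) (x : V3) : DifferentiableAt ℝ f x :=
  h.smooth.differentiable (by simp) x

lemma sm_diff {f : V3 → ℝ} (h : ContDiff ℝ (⊤ : ℕ∞) f) (x : V3) : DifferentiableAt ℝ f x :=
  h.differentiable (by simp) x

lemma pd_swap {f : V3 → ℝ} (h : ContDiff ℝ (⊤ : ℕ∞) f) (i j : Fin 3) :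
    (fun x => pd i (fun y => pd j f y) x) = fun x => pd j (fun y => pd i f y) x := by
  funext x
  exact pd_comm (by exact_mod_cast (contDiff_infty.1 h 2).contDiffAt) i j

lemma pd_lap_sum {f : V3 → ℝ} (h : ContDiff ℝ (⊤ : ℕ∞) f) (i : Fin 3) (x : V3) :
    pd i (fun y => lap3 f y) x = ∑ j, pd i (fun y => pd j (fun z => pd j f z) y) x := by
  unfold lap3
  exact pd_sum i fun j _ => sm_diff (contDiff_pd_top (contDiff_pd_top h j) j) x

lemma pd_lap {f : V3 → ℝ} (h : ContDiff ℝ (⊤ : ℕ∞) f) (i : Fin 3) (x : V3) :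
    pd i (fun y => lap3 f y) x = lap3 (fun y => pd i f y) x := by
  rw [pd_lap_sum h]
  unfold lap3
  refine Finset.sum_congr rfl fun j _ => ?_
  rw [show pd i (fun y => pd j (fun z => pd j f z) y) x = _ from
    congrFun (pd_swap (contDiff_pd_top h j) i j) x, pd_swap h i j]

lemma pd_mul_fun {f g : V3 → ℝ} (hf : ContDiff ℝ (⊤ : ℕ∞) f) (hg : ContDiff ℝ (⊤ : ℕ∞) g) (j : Fin 3) :
    (fun x => pd j (fun y => f y * g y) x) = fun x => pd j f x * g x + f x * pd j g x := by
  funext x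
  exact pd_mul j (sm_diff hf x) (sm_diff hg x)

lemma pd_add_sm {f g : V3 → ℝ} (hf : ContDiff ℝ (⊤ : ℕ∞) f) (hg : ContDiff ℝ (⊤ : ℕ∞) g) (j : Fin 3) :
    (fun x => pd j (fun y => f y + g y) x) = fun x => pd j f x + pd j g x := by
  funext x
  exact pd_add j (sm_diff hf x) (sm_diff hg x)

lemma pd2_mul {f g : V3 → ℝ} (hf : ContDiff ℝ (⊤ : ℕ∞) f) (hg : ContDiff ℝ (⊤ : ℕ∞) g) (b c : Fin 3) :
    (fun x => pd b (fun y => pd c (fun z => f z * g z) y) x) = fun x =>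
      (pd b (fun y => pd c f y) x * g x + pd c f x * pd b g x)
      + (pd b f x * pd c g x + f x * pd b (fun y => pd c g y) x) := by
  have hf' := contDiff_pd_top hf
  have hg' := contDiff_pd_top hg
  rw [pd_mul_fun hf hg c, pd_add_sm ((hf' c).mul hg) (hf.mul (hg' c))]
  funext x
  rw [pd_mul b (sm_diff (hf' c) x) (sm_diff hg x), pd_mul b (sm_diff hf x) (sm_diff (hg' c) x)]

lemma pd3_mul {f g : V3 → ℝ} (hf : ContDiff ℝ (⊤ : ℕ∞) f) (hg : ContDiff ℝ (⊤ : ℕ∞) g) (a b c : Fin 3) :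
    (fun x => pd a (fun w => pd b (fun y => pd c (fun z => f z * g z) y) w) x) = fun x =>
      ((pd a (fun w => pd b (fun y => pd c f y) w) x * g x + pd b (fun y => pd c f y) x * pd a g x)
        + (pd a (fun y => pd c f y) x * pd b g x + pd c f x * pd a (fun y => pd b g y) x))
      + ((pd a (fun y => pd b f y) x * pd c g x + pd b f x * pd a (fun y => pd c g y) x)
        + (pd a f x * pd b (fun y => pd c g y) x + f x * pd a (fun w => pd b (fun y => pd c g y) w) x)) := by
  have hf' := contDiff_pd_top hf
  have hg' := contDiff_pd_top hg
  have hf2 := fun i j => contDiff_pd_top (hf' i) j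
  have hg2 := fun i j => contDiff_pd_top (hg' i) j
  rw [pd2_mul hf hg b c,
    pd_add_sm (((hf2 c b).mul hg).add ((hf' c).mul (hg' b))) (((hf' b).mul (hg' c)).add (hf.mul (hg2 c b)))]
  funext x
  rw [pd_add a (sm_diff ((hf2 c b).mul hg) x) (sm_diff ((hf' c).mul (hg' b)) x),
    pd_add a (sm_diff ((hf' b).mul (hg' c)) x) (sm_diff (hf.mul (hg2 c b)) x),
    pd_mul a (sm_diff (hf2 c b) x) (sm_diff hg x), pd_mul a (sm_diff (hf' c) x) (sm_diff (hg' b) x),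
    pd_mul a (sm_diff (hf' b) x) (sm_diff (hg' c) x), pd_mul a (sm_diff hf x) (sm_diff (hg2 c b) x)]

lemma lap_mul {f g : V3 → ℝ} (hf : ContDiff ℝ (⊤ : ℕ∞) f) (hg : ContDiff ℝ (⊤ : ℕ∞) g) :
    (fun x => lap3 (fun z => f z * g z) x) = fun x =>
      lap3 f x * g x + 2 * (∑ j, pd j f x * pd j g x) + f x * lap3 g x := by
  funext x
  unfold lap3
  have : ∀ j, pd j (fun y => pd j (fun z => f z * g z) y) x = _ := fun j => congrFun (pd2_mul hf hg j j) x
  simp_rw [this, Finset.sum_add_distrib, Finset.sum_mul, Finset.mul_sum]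
  simp only [Fin.sum_univ_three]
  ring

lemma contDiff_lap {f : V3 → ℝ} (hf : ContDiff ℝ (⊤ : ℕ∞) f) : ContDiff ℝ (⊤ : ℕ∞) (fun x => lap3 f x) := by
  unfold lap3
  exact ContDiff.sum fun j _ => contDiff_pd_top (contDiff_pd_top hf j) j

lemma lap_add {f g : V3 → ℝ} (hf : ContDiff ℝ (⊤ : ℕ∞) f) (hg : ContDiff ℝ (⊤ : ℕ∞) g) (x : V3) :
    lap3 (fun z => f z + g z) x = lap3 f x + lap3 g x := by
  unfold lap3
  rw [← Finset.sum_add_distrib]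
  refine Finset.sum_congr rfl fun j _ => ?_
  rw [pd_add_sm hf hg j]
  exact congrFun (pd_add_sm (contDiff_pd_top hf j) (contDiff_pd_top hg j) j) x

lemma lap_sub {f g : V3 → ℝ} (hf : ContDiff ℝ (⊤ : ℕ∞) f) (hg : ContDiff ℝ (⊤ : ℕ∞) g) (x : V3) :
    lap3 (fun z => f z - g z) x = lap3 f x - lap3 g x := by
  have h := lap_add (hf.sub hg) hg x
  have e : (fun z => f z - g z + g z) = f := by funext z; ring
  rw [e] at h
  linarith

lemma lap_sum {f : Fin 3 → V3 → ℝ} (hf : ∀ j, ContDiff ℝ (⊤ : ℕ∞) (f j)) (x : V3) :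
    lap3 (fun z => ∑ j, f j z) x = ∑ j, lap3 (f j) x := by
  simp_rw [Fin.sum_univ_three]
  rw [lap_add ((hf 0).add (hf 1)) (hf 2), lap_add (hf 0) (hf 1)]

lemma lap_cmul {f : V3 → ℝ} (hf : ContDiff ℝ (⊤ : ℕ∞) f) (c : ℝ) (x : V3) :
    lap3 (fun z => c * f z) x = c * lap3 f x := by
  unfold lap3
  rw [Finset.mul_sum]
  refine Finset.sum_congr rfl fun j _ => ?_
  have : (fun y => pd j (fun z => c * f z) y) = fun y => c * pd j f y := by
    funext y; exact pd_const_mul j c (sm_diff hf y)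
  rw [this]
  exact pd_const_mul j c (sm_diff (contDiff_pd_top hf j) x)

lemma lap_lap_mul {f g : V3 → ℝ} (hf : ContDiff ℝ (⊤ : ℕ∞) f) (hg : ContDiff ℝ (⊤ : ℕ∞) g) (x : V3) :
    lap3 (fun y => lap3 (fun z => f z * g z) y) x =
      lap3 (fun y => lap3 f y) x * g x +
      (2 * (∑ j, pd j (fun y => lap3 f y) x * pd j g x) + 2 * (lap3 f x * lap3 g x)
      + 2 * (∑ j, (lap3 (fun y => pd j f y) x * pd j g x
          + 2 * (∑ l, pd l (fun y => pd j f y) x * pd l (fun y => pd j g y) x)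
          + pd j f x * lap3 (fun y => pd j g y) x))
      + 2 * (∑ j, pd j f x * pd j (fun y => lap3 g y) x) + f x * lap3 (fun y => lap3 g y) x) := by
  have hf' := contDiff_pd_top hf
  have hg' := contDiff_pd_top hg
  have hLf := contDiff_lap hf
  have hLg := contDiff_lap hg
  have hS : ContDiff ℝ (⊤ : ℕ∞) (fun x => ∑ j, pd j f x * pd j g x) := ContDiff.sum fun j _ => (hf' j).mul (hg' j)
  have hS2 : ContDiff ℝ (⊤ : ℕ∞) (fun x => 2 * ∑ j, pd j f x * pd j g x) := contDiff_const.mul hS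
  rw [lap_mul hf hg, lap_add ((hLf.mul hg).add hS2) (hf.mul hLg), lap_add (hLf.mul hg) hS2, lap_cmul hS,
    lap_sum (fun j => (hf' j).mul (hg' j))]
  rw [show lap3 (fun z => lap3 f z * g z) x = _ from congrFun (lap_mul hLf hg) x,
    show lap3 (fun z => f z * lap3 g z) x = _ from congrFun (lap_mul hf hLg) x]
  have : ∀ j, lap3 (fun z => pd j f z * pd j g z) x = _ := fun j => congrFun (lap_mul (hf' j) (hg' j)) x
  simp_rw [this]
  ring

lemma exists_bd_fam {ι : Type*} [Fintype ι] {f : ι → V3 → ℝ} {S : Set V3} (h : ∀ i, TF S (f i)) :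
    ∃ C : ℝ, 0 < C ∧ ∀ i x, |f i x| ≤ C := by
  choose B hB0 hB using fun i => exists_bd (h i).smooth.continuous (h i).cpt
  refine ⟨∑ i, B i + 1, by
    have : 0 ≤ ∑ i, B i := Finset.sum_nonneg fun i _ => (hB0 i).le
    linarith, fun i x => (hB i x).trans ?_⟩
  have := Finset.single_le_sum (f := B) (fun i _ => (hB0 i).le) (Finset.mem_univ i)
  linarith

lemma derivs_bd {g : Fin 3 → V3 → ℝ} {S : Set V3} (h : ∀ i, TF S (g i)) :
    ∃ B : ℝ, 0 < B ∧ ∀ i x, |g i x| ≤ B ∧ (∀ c, |pd c (g i) x| ≤ B) ∧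
      (∀ b c, |pd b (fun y => pd c (g i) y) x| ≤ B) ∧
      (∀ a b c, |pd a (fun w => pd b (fun y => pd c (g i) y) w) x| ≤ B) ∧
      |lap3 (g i) x| ≤ B ∧ (∀ c, |lap3 (fun y => pd c (g i) y) x| ≤ B) ∧
      (∀ c, |pd c (fun y => lap3 (g i) y) x| ≤ B) ∧ |lap3 (fun y => lap3 (g i) y) x| ≤ B := by
  obtain ⟨B0, p0, b0⟩ := exists_bd_fam h
  obtain ⟨B1, p1, b1⟩ := exists_bd_fam (fun q : Fin 3 × Fin 3 => (h q.1).pd q.2)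
  obtain ⟨B2, p2, b2⟩ := exists_bd_fam (fun q : Fin 3 × Fin 3 × Fin 3 => ((h q.1).pd q.2.2).pd q.2.1)
  obtain ⟨B3, p3, b3⟩ := exists_bd_fam (fun q : Fin 3 × Fin 3 × Fin 3 × Fin 3 =>
    (((h q.1).pd q.2.2.2).pd q.2.2.1).pd q.2.1)
  obtain ⟨B4, p4, b4⟩ := exists_bd_fam (fun i => (h i).lap)
  obtain ⟨B5, p5, b5⟩ := exists_bd_fam (fun q : Fin 3 × Fin 3 => ((h q.1).pd q.2).lap)
  obtain ⟨B6, p6, b6⟩ := exists_bd_fam (fun q : Fin 3 × Fin 3 => ((h q.1).lap).pd q.2)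
  obtain ⟨B7, p7, b7⟩ := exists_bd_fam (fun i => (h i).lap.lap)
  refine ⟨B0 + B1 + B2 + B3 + B4 + B5 + B6 + B7, by positivity, fun i x => ⟨?_, fun c => ?_, fun b c => ?_,
    fun a b c => ?_, ?_, fun c => ?_, fun c => ?_, ?_⟩⟩
  · exact (b0 i x).trans (by linarith)
  · exact (b1 (i, c) x).trans (by linarith)
  · exact (b2 (i, b, c) x).trans (by linarith)
  · exact (b3 (i, a, b, c) x).trans (by linarith)
  · exact (b4 i x).trans (by linarith)
  · exact (b5 (i, c) x).trans (by linarith)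
  · exact (b6 (i, c) x).trans (by linarith)
  · exact (b7 i x).trans (by linarith)

/-- bounds for the products with the logarithmic kernel -/
lemma prod_bounds {R : ℝ} (hR : 0 < R) {g : Fin 3 → V3 → ℝ} {S : Set V3} (h : ∀ i, TF S (g i)) :
    ∃ K : ℝ, 0 < K ∧ ∀ s : ℝ, 0 < s → s < 1 → ∀ x : V3, 0 < rho x → rho x ≤ R → ∀ i,
      (∀ a b c, |pd a (fun w => pd b (fun y => pd c (fun z => kk s z * g i z) y) w) x| ≤ K * rho x ^ (-(5/4) : ℝ)) ∧
      |lap3 (fun y => lap3 (fun z => kk s z * g i z) y) x| ≤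
        K * (s ^ 4 / (rho x ^ 2 + s ^ 2) ^ 3) + K * rho x ^ (-(5/4) : ℝ) := by
  obtain ⟨C, hC, hk⟩ := kk_bound hR
  obtain ⟨B, hB, hg⟩ := derivs_bd h
  set M := R ^ (-(1/4) - -(5/4) : ℝ) with hM
  have hM0 : 0 < M := by positivity
  set A := C + C * M with hA
  have hA0 : 0 < A := by positivity
  refine ⟨32 * B + 200 * (A * B), by positivity, fun s hs hs1 x hr hrR i => ?_⟩
  obtain ⟨k0, k1, k2, k3⟩ := hk s hs hs1 x hr hrR
  obtain ⟨g0, g1, g2, g3, gL, gLd, gdL, gLL⟩ := hg i x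
  set P := rho x ^ (-(5/4) : ℝ) with hP
  have hP0 : 0 < P := by positivity
  have e1 : C * rho x ^ (-(1/4) : ℝ) ≤ A * P := by
    have : rho x ^ (-(1/4) : ℝ) ≤ M * P := rpow_le_rpow_mul hr hrR (by norm_num)
    have h1 := mul_le_mul_of_nonneg_left this hC.le
    have h2 : 0 < C * P := by positivity
    rw [hA]; nlinarith
  have e2 : C * P ≤ A * P := by
    have h2 : 0 < C * M * P := by positivity
    rw [hA]; nlinarith
  replace k0 := k0.trans e1
  replace k1 := fun c => (k1 c).trans e1
  replace k2 := fun b c => (k2 b c).trans e1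
  replace k3 := fun a b c => (k3 a b c).trans e2
  have hsm := contDiff_kk hs
  have mulb : ∀ {α β : ℝ} {t : ℝ}, |α| ≤ t * P → |β| ≤ B → |α * β| ≤ t * (A * B * P) / A := by
    intro α β t hα hβ
    rw [abs_mul]
    calc _ ≤ (t * P) * B := mul_le_mul hα hβ (abs_nonneg _) ((abs_nonneg _).trans hα)
      _ = _ := by field_simp
  have mul1 : ∀ {α β : ℝ}, |α| ≤ A * P → |β| ≤ B → |α * β| ≤ A * B * P := by
    intro α β hα hβ
    refine (mulb hα hβ).trans (le_of_eq ?_)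
    field_simp
  have kL : |lap3 (kk s) x| ≤ 3 * (A * P) := by
    unfold lap3
    refine (Finset.abs_sum_le_sum_abs _ _).trans ((Finset.sum_le_sum fun j _ => k2 j j).trans (le_of_eq ?_))
    simp
  have kdL : ∀ j, |pd j (fun y => lap3 (kk s) y) x| ≤ 3 * (A * P) := fun j => by
    rw [pd_lap_sum hsm]
    refine (Finset.abs_sum_le_sum_abs _ _).trans ((Finset.sum_le_sum fun l _ => k3 j l l).trans (le_of_eq ?_))
    simp
  have kLd : ∀ j, |lap3 (fun y => pd j (kk s) y) x| ≤ 3 * (A * P) := fun j => by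
    rw [← pd_lap hsm]; exact kdL j
  have mul3 : ∀ {α β : ℝ}, |α| ≤ 3 * (A * P) → |β| ≤ B → |α * β| ≤ 3 * (A * B * P) := by
    intro α β hα hβ
    rw [← mul_assoc] at hα
    refine (mulb hα hβ).trans (le_of_eq ?_)
    field_simp
  set Z := A * B * P with hZ
  have hZ0 : 0 < Z := by positivity
  have hBP : 0 < B * P := by positivity
  constructor
  · intro a b c
    rw [show pd a (fun w => pd b (fun y => pd c (fun z => kk s z * g i z) y) w) x = _ from
      congrFun (pd3_mul hsm (h i).smooth a b c) x]
    have t1 := abs_le.1 (mul1 (k3 a b c) g0)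
    have t2 := abs_le.1 (mul1 (k2 b c) (g1 a))
    have t3 := abs_le.1 (mul1 (k2 a c) (g1 b))
    have t4 := abs_le.1 (mul1 (k1 c) (g2 a b))
    have t5 := abs_le.1 (mul1 (k2 a b) (g1 c))
    have t6 := abs_le.1 (mul1 (k1 b) (g2 a c))
    have t7 := abs_le.1 (mul1 (k1 a) (g2 b c))
    have t8 := abs_le.1 (mul1 k0 (g3 a b c))
    have e : (32 * B + 200 * (A * B)) * P = 32 * (B * P) + 200 * Z := by rw [hZ]; ring
    rw [e, abs_le]
    constructor <;> linarith [t1.1, t1.2, t2.1, t2.2, t3.1, t3.2, t4.1, t4.2, t5.1, t5.2, t6.1, t6.2,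
      t7.1, t7.2, t8.1, t8.2]
  · rw [lap_lap_mul hsm (h i).smooth, lap_lap_kk hs]
    set E := s ^ 4 / (rho x ^ 2 + s ^ 2) ^ 3 with hE
    have hE0 : 0 ≤ E := by positivity
    refine (abs_add_le _ _).trans (add_le_add ?_ ?_)
    · rw [abs_mul, abs_of_nonneg (by positivity)]
      have h1 : 32 * E * |g i x| ≤ 32 * E * B := mul_le_mul_of_nonneg_left g0 (by positivity)
      have h2 : 0 ≤ 200 * (A * B) * E := by positivity
      nlinarith
    · have s1 : |∑ j, pd j (fun y => lap3 (kk s) y) x * pd j (g i) x| ≤ 9 * Z := by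
        refine (Finset.abs_sum_le_sum_abs _ _).trans
          ((Finset.sum_le_sum fun j _ => mul3 (kdL j) (g1 j)).trans (le_of_eq ?_))
        simp; ring
      have s2 := mul3 kL gL
      have s3 : |∑ j, (lap3 (fun y => pd j (kk s) y) x * pd j (g i) x
          + 2 * (∑ l, pd l (fun y => pd j (kk s) y) x * pd l (fun y => pd j (g i) y) x)
          + pd j (kk s) x * lap3 (fun y => pd j (g i) y) x)| ≤ 30 * Z := by
        refine (Finset.abs_sum_le_sum_abs _ _).trans
          ((Finset.sum_le_sum (g := fun _ => 10 * Z) fun j _ => ?_).trans (le_of_eq ?_))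
        · have r1 := abs_le.1 (mul3 (kLd j) (g1 j))
          have r2 : |∑ l, pd l (fun y => pd j (kk s) y) x * pd l (fun y => pd j (g i) y) x| ≤ 3 * Z := by
            refine (Finset.abs_sum_le_sum_abs _ _).trans
              ((Finset.sum_le_sum fun l _ => mul1 (k2 l j) (g2 l j)).trans (le_of_eq ?_))
            simp
          have r3 := abs_le.1 r2
          have r4 := abs_le.1 (mul1 (k1 j) (gLd j))
          rw [abs_le]
          constructor <;> linarith [r1.1, r1.2, r3.1, r3.2, r4.1, r4.2]
        · simp; ring
      have s4 : |∑ j, pd j (kk s) x * pd j (fun y => lap3 (g i) y) x| ≤ 3 * Z := by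
        refine (Finset.abs_sum_le_sum_abs _ _).trans
          ((Finset.sum_le_sum fun j _ => mul1 (k1 j) (gdL j)).trans (le_of_eq ?_))
        simp
      have s5 := mul1 k0 gLL
      have e : (32 * B + 200 * (A * B)) * P = 32 * (B * P) + 200 * Z := by rw [hZ]; ring
      have q1 := abs_le.1 s1
      have q2 := abs_le.1 s2
      have q3 := abs_le.1 s3
      have q4 := abs_le.1 s4
      have q5 := abs_le.1 s5
      rw [e, abs_le]
      constructor <;> linarith [q1.1, q1.2, q2.1, q2.2, q3.1, q3.2, q4.1, q4.2, q5.1, q5.2]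


/-! ### Part 11: the weak formulation -/

/-- the double curl field `ΔW - ∇ div W` -/
def Phi (W : Fin 3 → V3 → ℝ) (i : Fin 3) (x : V3) : ℝ :=
  lap3 (W i) x - pd i (fun y => ∑ j, pd j (W j) y) x

lemma TF.dv {S : Set V3} {W : Fin 3 → V3 → ℝ} (h : ∀ i, TF S (W i)) : TF S (fun y => ∑ j, _root_.pd j (W j) y) :=
  TF.sum fun j => (h j).pd j

lemma TF.Phi {S : Set V3} {W : Fin 3 → V3 → ℝ} (h : ∀ i, TF S (W i)) (i : Fin 3) : TF S (Phi W i) :=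
  (h i).lap.sub ((TF.dv h).pd i)

lemma div_Phi {S : Set V3} {W : Fin 3 → V3 → ℝ} (h : ∀ i, TF S (W i)) (x : V3) : ∑ i, pd i (Phi W i) x = 0 := by
  have e : ∀ i, pd i (Phi W i) x = lap3 (fun y => pd i (W i) y) x
      - pd i (fun z => pd i (fun y => ∑ j, pd j (W j) y) z) x := fun i => by
    unfold Phi
    rw [pd_sub i ((h i).lap.diff x) (((TF.dv h).pd i).diff x), pd_lap (h i).smooth]
  simp_rw [e, Finset.sum_sub_distrib]
  rw [← lap_sum (fun i => ((h i).pd i).smooth)]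
  unfold lap3
  ring

lemma lap_Phi {S : Set V3} {W : Fin 3 → V3 → ℝ} (h : ∀ i, TF S (W i)) (i : Fin 3) (x : V3) :
    lap3 (Phi W i) x = lap3 (fun y => lap3 (W i) y) x
      - pd i (fun z => lap3 (fun y => ∑ j, pd j (W j) y) z) x := by
  unfold Phi
  rw [lap_sub (h i).lap.smooth ((TF.dv h).pd i).smooth, pd_lap (TF.dv h).smooth]

/-- the weak form of the double curl field -/
lemma weak_Phi {δ : ℝ} {u : Fin 3 → V3 → ℝ} {p : V3 → ℝ} {U : Set V3} (D : Dat δ u p U)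
    {W : Fin 3 → V3 → ℝ} (h : ∀ i, TF (OmegaR (-2) (-1/2) (δ/16)) (W i)) :
    ∫ x, ∑ i, ∑ j, (pd j (u i) x * pd j (Phi W i) x - u i x * u j x * pd j (Phi W i) x) =
      - ∫ x, ∑ i, (u i x * lap3 (fun y => lap3 (W i) y) x + ∑ j, u i x * u j x * pd j (Phi W i) x) := by
  have hP := fun i => TF.Phi h i
  have hPd := fun i j => (hP i).pd j
  have hPdd := fun i j => ((hP i).pd j).pd j
  have hq := TF.dv h
  have hqL := hq.lap
  have I1 : ∀ i j, Integrable (fun x => pd j (u i) x * pd j (Phi W i) x) := fun i j =>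
    int_du D (hPd i j).smooth.continuous (hPd i j).cpt (hPd i j).supp i j
  have I2 : ∀ i j, Integrable (fun x => u i x * u j x * pd j (Phi W i) x) := fun i j =>
    int_uu D (hPd i j).smooth.continuous (hPd i j).cpt (hPd i j).supp i j
  have I3 : ∀ i j, Integrable (fun x => u i x * pd j (fun y => pd j (Phi W i) y) x) := fun i j =>
    int_u D (hPdd i j).smooth.continuous (hPdd i j).cpt (hPdd i j).supp i
  have I4 : ∀ i, Integrable (fun x => u i x * lap3 (fun y => lap3 (W i) y) x) := fun i =>
    int_u D (h i).lap.lap.smooth.continuous (h i).lap.lap.cpt (h i).lap.lap.supp i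
  have I5 : ∀ i, Integrable (fun x => u i x * pd i (fun z => lap3 (fun y => ∑ j, pd j (W j) y) z) x) := fun i =>
    int_u D (hqL.pd i).smooth.continuous (hqL.pd i).cpt (hqL.pd i).supp i
  have h0 := weak_div D hqL.smooth hqL.cpt hqL.supp
  have e1 : ∀ i j, ∫ x, pd j (u i) x * pd j (Phi W i) x = - ∫ x, u i x * pd j (fun y => pd j (Phi W i) y) x :=
    fun i j => weak_pd D (hPd i j).smooth (hPd i j).cpt (hPd i j).supp i j
  have e2 : ∀ i, ∑ j, ∫ x, u i x * pd j (fun y => pd j (Phi W i) y) x =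
      (∫ x, u i x * lap3 (fun y => lap3 (W i) y) x)
        - ∫ x, u i x * pd i (fun z => lap3 (fun y => ∑ j, pd j (W j) y) z) x := fun i => by
    rw [← integral_finsetSum _ (fun j _ => I3 i j), ← integral_sub (I4 i) (I5 i)]
    congr 1
    funext x
    rw [← Finset.mul_sum, ← mul_sub, ← lap_Phi h i x]
    rfl
  rw [integral_finsetSum _ (fun i _ => I5 i)] at h0
  have I12 : ∀ i j, Integrable (fun x => pd j (u i) x * pd j (Phi W i) x - u i x * u j x * pd j (Phi W i) x) :=
    fun i j => (I1 i j).sub (I2 i j)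
  have I46 : ∀ i, Integrable (fun x => u i x * lap3 (fun y => lap3 (W i) y) x
      + ∑ j, u i x * u j x * pd j (Phi W i) x) :=
    fun i => (I4 i).add (integrable_finsetSum _ (fun j _ => I2 i j))
  rw [integral_finsetSum _ (fun i _ => integrable_finsetSum _ (fun j _ => I12 i j)),
    integral_finsetSum _ (fun i _ => I46 i)]
  have e3 : ∀ i, ∫ x, ∑ j, (pd j (u i) x * pd j (Phi W i) x - u i x * u j x * pd j (Phi W i) x) =
      - (∫ x, u i x * lap3 (fun y => lap3 (W i) y) x)
        + (∫ x, u i x * pd i (fun z => lap3 (fun y => ∑ j, pd j (W j) y) z) x)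
        - ∑ j, ∫ x, u i x * u j x * pd j (Phi W i) x := fun i => by
    rw [integral_finsetSum _ (fun j _ => I12 i j)]
    have : ∀ j, ∫ x, (pd j (u i) x * pd j (Phi W i) x - u i x * u j x * pd j (Phi W i) x) =
      - (∫ x, u i x * pd j (fun y => pd j (Phi W i) y) x) - ∫ x, u i x * u j x * pd j (Phi W i) x := fun j => by
      rw [integral_sub (I1 i j) (I2 i j), e1]
    simp_rw [this, Finset.sum_sub_distrib, Finset.sum_neg_distrib, e2]
    ring
  have e4 : ∀ i, ∫ x, (u i x * lap3 (fun y => lap3 (W i) y) x + ∑ j, u i x * u j x * pd j (Phi W i) x) =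
      (∫ x, u i x * lap3 (fun y => lap3 (W i) y) x) + ∑ j, ∫ x, u i x * u j x * pd j (Phi W i) x := fun i => by
    rw [integral_add (I4 i) (integrable_finsetSum _ (fun j _ => I2 i j)), integral_finsetSum _ (fun j _ => I2 i j)]
  simp_rw [e3, e4, Finset.sum_sub_distrib, Finset.sum_add_distrib, h0, Finset.sum_neg_distrib]
  ring

/-- weights -/
def cc (i : Fin 3) : ℝ := if i = 2 then 1/2 else 1

lemma Phi_axis {s : ℝ} (hs : 0 < s) {φ : Fin 3 → V3 → ℝ} (hφ : ∀ i, ContDiff ℝ (⊤ : ℕ∞) (φ i)) {x : V3}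
    (hr : rho x = 0) (i : Fin 3) :
    Phi (fun i y => kk s y * (cc i * φ i y)) i x = 2 * (Real.log (s ^ 2) + 1) * φ i x := by
  have hm : mm x = 0 := by rw [mm_rho, hr]; ring
  have hx0 : ∀ j, hx j x = 0 := fun j => by
    have := abs_hx_le j x
    rw [hr] at this
    exact abs_eq_zero.1 (le_antisymm this (abs_nonneg _))
  have hn : nn s x = s ^ 2 := by unfold nn; rw [hm, zero_add]
  have k0 : kk s x = 0 := by unfold kk; rw [hn]; ring
  have k1 : ∀ c, pd c (kk s) x = 0 := fun c => by
    rw [show pd c (kk s) x = _ from congrFun (pd_kk hs c) x, hx0, mul_zero]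
  have k2 : ∀ b c, pd b (fun y => pd c (kk s) y) x = dlt c b * (2 * (Real.log (s ^ 2) + 1)) := fun b c => by
    rw [show pd b (fun y => pd c (kk s) y) x = _ from congrFun (pd_pd_kk hs b c) x]
    simp only [hx0, hn]; ring
  have hsm := contDiff_kk hs
  have hg : ∀ i, ContDiff ℝ (⊤ : ℕ∞) (fun y => cc i * φ i y) := fun i => contDiff_const.mul (hφ i)
  have w2 : ∀ l b c, pd b (fun y => pd c (fun z => kk s z * (cc l * φ l z)) y) x =
      dlt c b * (2 * (Real.log (s ^ 2) + 1)) * (cc l * φ l x) := fun l b c => by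
    rw [show pd b (fun y => pd c (fun z => kk s z * (cc l * φ l z)) y) x = _ from
      congrFun (pd2_mul hsm (hg l) b c) x, k0, k1, k1, k2]
    ring
  unfold Phi
  have e : pd i (fun y => ∑ j, pd j (fun y => kk s y * (cc j * φ j y)) y) x
      = ∑ j, pd i (fun y => pd j (fun y => kk s y * (cc j * φ j y)) y) x :=
    pd_sum i fun j _ => sm_diff (contDiff_pd_top (hsm.mul (hg j)) j) x
  rw [e]
  unfold lap3
  simp_rw [w2]
  fin_cases i <;> simp [Fin.sum_univ_three, dlt, cc] <;> ring

lemma rho_proj (x : V3) : ‖x - x 2 • e3 2‖ = rho x ∧ rho (x 2 • e3 2) = 0 := by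
  constructor
  · rw [← Real.sqrt_sq (norm_nonneg _), norm_sq3]
    unfold rho
    congr 1
    simp [e3_apply]
  · unfold rho
    simp [e3_apply]

lemma TF.axis_bound {S : Set V3} {f : V3 → ℝ} (h : TF S f) (h0 : ∀ x, rho x = 0 → f x = 0) :
    ∃ B : ℝ, 0 < B ∧ ∀ x, |f x| ≤ B * rho x := by
  obtain ⟨K, hK⟩ := (contDiff_infty.1 h.smooth 1).lipschitzWith_of_hasCompactSupport h.cpt (by simp)
  refine ⟨K + 1, by positivity, fun x => ?_⟩
  have h1 := hK.dist_le_mul x (x 2 • e3 2)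
  rw [h0 _ (rho_proj x).2, dist_eq_norm x, (rho_proj x).1, Real.dist_eq, sub_zero] at h1
  have := rho_nonneg x
  linarith

/-- the rescaled weak form -/
lemma weak_scale {δ : ℝ} {u : Fin 3 → V3 → ℝ} {p : V3 → ℝ} {U : Set V3} (D : Dat δ u p U)
    {φ : Fin 3 → V3 → ℝ} (h : ∀ i, TF (OmegaR (-2) (-1/2) (δ/16)) (φ i)) (hdiv : ∀ x, ∑ j, pd j (φ j) x = 0)
    {s : ℝ} (hs : 0 < s) (hs2 : Real.log (s ^ 2) + 1 ≠ 0) :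
    2 * (Real.log (s ^ 2) + 1) *
      ∫ x, ∑ i, ∑ j, (pd j (u i) x * pd j (φ i) x - u i x * u j x * pd j (φ i) x) =
    ∫ x, ∑ i, ∑ j, (pd j (u i) x * pd j (Phi (fun i y => kk s y * (cc i * φ i y)) i) x
      - u i x * u j x * pd j (Phi (fun i y => kk s y * (cc i * φ i y)) i) x) := by
  set W : Fin 3 → V3 → ℝ := fun i y => kk s y * (cc i * φ i y) with hW
  set lam := 2 * (Real.log (s ^ 2) + 1) with hlam
  have hWT : ∀ i, TF (OmegaR (-2) (-1/2) (δ/16)) (W i) := fun i => ((h i).cmul (cc i)).mul (contDiff_kk hs)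
  have hP := fun i => TF.Phi hWT i
  set Ψ : Fin 3 → V3 → ℝ := fun i x => lam * φ i x - Phi W i x with hΨ
  have hΨT : ∀ i, TF (OmegaR (-2) (-1/2) (δ/16)) (Ψ i) := fun i => ((h i).cmul lam).sub (hP i)
  have hpd : ∀ i j x, pd j (Ψ i) x = lam * pd j (φ i) x - pd j (Phi W i) x := fun i j x => by
    simp only [hΨ]
    rw [pd_sub j (((h i).cmul lam).diff x) ((hP i).diff x), pd_const_mul j lam ((h i).diff x)]
  choose B hB0 hB using fun i => (hΨT i).axis_bound fun x hr => by
    simp only [hΨ]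
    rw [Phi_axis hs (fun i => (h i).smooth) hr, sub_self]
  have hB' : ∀ i x, |Ψ i x| ≤ (∑ i, B i) * rho x := fun i x =>
    (hB i x).trans (mul_le_mul_of_nonneg_right
      (Finset.single_le_sum (f := B) (fun i _ => (hB0 i).le) (Finset.mem_univ i)) (rho_nonneg x))
  have key := weak_axis D (Ψ := Ψ) (fun i => (hΨT i).smooth) (fun i => (hΨT i).cpt) (fun i => (hΨT i).supp)
    (fun x => by
      simp_rw [hpd, Finset.sum_sub_distrib, ← Finset.mul_sum]
      rw [hdiv, div_Phi hWT]; ring)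
    (Finset.sum_pos (fun i _ => hB0 i) Finset.univ_nonempty) hB'
  have I : ∀ {f : Fin 3 → V3 → ℝ}, (∀ i, TF (OmegaR (-2) (-1/2) (δ/16)) (f i)) →
      Integrable (fun x => ∑ i, ∑ j, (pd j (u i) x * pd j (f i) x - u i x * u j x * pd j (f i) x)) := fun hf =>
    integrable_finsetSum _ fun i _ => integrable_finsetSum _ fun j _ =>
      (int_du D ((hf i).pd j).smooth.continuous ((hf i).pd j).cpt ((hf i).pd j).supp i j).sub
      (int_uu D ((hf i).pd j).smooth.continuous ((hf i).pd j).cpt ((hf i).pd j).supp i j)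
  rw [← sub_eq_zero, ← integral_const_mul, ← integral_sub ((I h).const_mul _) (I hP), ← key]
  congr 1
  funext x
  simp_rw [hpd, Finset.mul_sum, ← Finset.sum_sub_distrib]
  refine Finset.sum_congr rfl fun i _ => Finset.sum_congr rfl fun j _ => ?_
  ring

lemma log_split {s r : ℝ} (hs : 0 < s) (hr : 0 < r) : |Real.log r| ≤ |Real.log s| + (r / s + s / r) := by
  have h1 : Real.log r = Real.log s + Real.log (r / s) := by
    rw [Real.log_div hr.ne' hs.ne']; ring
  have h2 : Real.log (r / s) ≤ r / s := (Real.log_le_sub_one_of_pos (by positivity)).trans (by linarith)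
  have h3 : - Real.log (r / s) ≤ s / r := by
    rw [← Real.log_inv, inv_div]
    exact (Real.log_le_sub_one_of_pos (by positivity)).trans (by linarith)
  have p1 : 0 < r / s := by positivity
  have p2 : 0 < s / r := by positivity
  rw [h1]
  refine (abs_add_le _ _).trans (add_le_add le_rfl ?_)
  rw [abs_le]
  constructor <;> linarith

/-- the key estimate -/
lemma Phi_est {δ : ℝ} {u : Fin 3 → V3 → ℝ} {p : V3 → ℝ} {U : Set V3} (D : Dat δ u p U)
    {φ : Fin 3 → V3 → ℝ} (h : ∀ i, TF (OmegaR (-2) (-1/2) (δ/16)) (φ i)) :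
    ∃ A : ℝ, 0 < A ∧ ∀ ε : ℝ, 0 < ε → ∃ M : ℝ, ∀ s : ℝ, 0 < s → s < 1 →
    |∫ x, ∑ i, (u i x * lap3 (fun y => lap3 (fun y => kk s y * (cc i * φ i y)) y) x
      + ∑ j, u i x * u j x * pd j (Phi (fun i y => kk s y * (cc i * φ i y)) i) x)| ≤
      A * ε * |Real.log s| + M := by
  have hδ := D.hδ
  have hR : 0 < δ / 16 := by positivity
  obtain ⟨K, hK, hb⟩ := prod_bounds hR (fun i => (h i).cmul (cc i))
  obtain ⟨C, hC, hq⟩ := D.hpow (1/4) (by norm_num) (by norm_num)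
  set I0 : ℝ := (-1/2 - -2) * (2 * π) * (3 * π) with hI0
  have hI0p : 0 < I0 := by rw [hI0]; have := Real.pi_pos; positivity
  set I1 := ∫ x in OmegaR (-2) (-1/2) (δ/16), rho x ^ (-(7/4) : ℝ) with hI1
  have hint7 : IntegrableOn (fun x => rho x ^ (-(7/4) : ℝ)) (OmegaR (-2) (-1/2) (δ/16)) :=
    integrable_rho_rpow (by norm_num) hR (by norm_num)
  set R := δ / 16 with hRd
  set M1 := R ^ (-(3/2) - -(7/4) : ℝ) with hM1
  have hM10 : 0 < M1 := by positivity
  set Q := 3 * (C * K * M1) + 9 * (C * C * (6 * K)) with hQ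
  refine ⟨3 * K * I0, by positivity, fun ε hε => ?_⟩
  obtain ⟨Cε, hCε, hl⟩ := D.hlog ε hε
  refine ⟨3 * K * (ε + Cε) * I0 + Q * I1, fun s hs hs1 => ?_⟩
  have hci := conc_int (-2) (-1/2) (δ/16) (by norm_num) s hs
  set Om := OmegaR (-2) (-1/2) R with hOm
  set T := 3 * K * (ε * |Real.log s| + ε + Cε) with hT
  have hT0 : 0 ≤ T := by positivity
  set b : V3 → ℝ := fun x => T * ((1 + rho x / s + s / rho x) * (s ^ 4 / (rho x ^ 2 + s ^ 2) ^ 3))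
    + Q * rho x ^ (-(7/4) : ℝ) with hbdef
  have hbi : IntegrableOn b Om := (hci.1.const_mul T).add (hint7.const_mul Q)
  have hmeas := measurableSet_OmegaR (-2) (-1/2) R
  set W : Fin 3 → V3 → ℝ := fun i y => kk s y * (cc i * φ i y) with hW
  have hWT : ∀ i, TF Om (W i) := fun i => ((h i).cmul (cc i)).mul (contDiff_kk hs)
  have hP := fun i => TF.Phi hWT i
  have main := norm_integral_le_of_norm_le (f := fun x => ∑ i, (u i x * lap3 (fun y => lap3 (W i) y) x
      + ∑ j, u i x * u j x * pd j (Phi W i) x)) ((integrable_indicator_iff hmeas).2 hbi) ?_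
  · rw [integral_indicator hmeas] at main
    refine main.trans ?_
    simp only [hbdef]
    rw [integral_add (hci.1.const_mul T) (hint7.const_mul Q), integral_const_mul, integral_const_mul]
    have := mul_le_mul_of_nonneg_left hci.2 hT0
    calc _ ≤ T * I0 + Q * I1 := add_le_add this le_rfl
      _ = _ := by rw [hT]; ring
  · filter_upwards [ae_rho_pos] with x hr
    by_cases hxU : x ∈ Om
    · rw [Set.indicator_of_mem hxU, Real.norm_eq_abs]
      have hA := mem_Areg hxU hr
      have hrR : rho x ≤ R := (Areg_rho hA).2
      obtain ⟨b1, -, -⟩ := hq x hA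
      set E := s ^ 4 / (rho x ^ 2 + s ^ 2) ^ 3 with hE
      have hE0 : 0 ≤ E := by positivity
      set G := 1 + rho x / s + s / rho x with hG
      have hG0 : 0 ≤ rho x / s + s / rho x := by positivity
      have hP4 : 0 < rho x ^ (-(1/4) : ℝ) := by positivity
      have hP5 : 0 < rho x ^ (-(5/4) : ℝ) := by positivity
      have hP7 : 0 < rho x ^ (-(7/4) : ℝ) := by positivity
      have m1 : rho x ^ (-(1/4) : ℝ) * rho x ^ (-(5/4) : ℝ) ≤ M1 * rho x ^ (-(7/4) : ℝ) := by
        rw [← Real.rpow_add hr, show (-(1/4) + -(5/4) : ℝ) = -(3/2) by norm_num]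
        exact rpow_le_rpow_mul hr hrR (by norm_num)
      have m2 : rho x ^ (-(1/4) : ℝ) * rho x ^ (-(1/4) : ℝ) * rho x ^ (-(5/4) : ℝ) = rho x ^ (-(7/4) : ℝ) := by
        rw [← Real.rpow_add hr, ← Real.rpow_add hr]; norm_num
      have hu : ∀ i, |u i x| ≤ (ε * |Real.log s| + ε + Cε) * G := fun i => by
        have h1 := hl x hA i
        have h2 := mul_le_mul_of_nonneg_left (log_split hs hr) hε.le
        have h3 : 0 ≤ ε * |Real.log s| * (rho x / s + s / rho x) := by positivity
        have h4 : 0 ≤ Cε * (rho x / s + s / rho x) := by positivity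
        rw [hG]
        nlinarith
      have hdP : ∀ i j, |pd j (Phi W i) x| ≤ 6 * K * rho x ^ (-(5/4) : ℝ) := fun i j => by
        have e1 : pd j (Phi W i) x = (∑ l, pd j (fun y => pd l (fun z => pd l (W i) z) y) x)
            - ∑ l, pd j (fun y => pd i (fun z => pd l (W l) z) y) x := by
          unfold Phi
          rw [pd_sub j ((hWT i).lap.diff x) (((TF.dv hWT).pd i).diff x), pd_lap_sum (hWT i).smooth]
          congr 1
          have : (fun y => pd i (fun y => ∑ j, pd j (W j) y) y) = fun y => ∑ l, pd i (fun z => pd l (W l) z) y := by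
            funext y
            exact pd_sum i fun l _ => ((hWT l).pd l).diff y
          rw [this]
          exact pd_sum j fun l _ => (((hWT l).pd l).pd i).diff x
        rw [e1]
        refine (abs_sub _ _).trans ?_
        have s1 : |∑ l, pd j (fun y => pd l (fun z => pd l (W i) z) y) x| ≤ 3 * (K * rho x ^ (-(5/4) : ℝ)) := by
          refine (Finset.abs_sum_le_sum_abs _ _).trans
            ((Finset.sum_le_sum fun l _ => (hb s hs hs1 x hr hrR i).1 j l l).trans (le_of_eq ?_))
          simp
        have s2 : |∑ l, pd j (fun y => pd i (fun z => pd l (W l) z) y) x| ≤ 3 * (K * rho x ^ (-(5/4) : ℝ)) := by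
          refine (Finset.abs_sum_le_sum_abs _ _).trans
            ((Finset.sum_le_sum fun l _ => (hb s hs hs1 x hr hrR l).1 j i l).trans (le_of_eq ?_))
          simp
        linarith
      have hLL : ∀ i, |u i x * lap3 (fun y => lap3 (W i) y) x| ≤
          (ε * |Real.log s| + ε + Cε) * G * (K * E) + C * K * M1 * rho x ^ (-(7/4) : ℝ) := fun i => by
        rw [abs_mul]
        have h1 : |lap3 (fun y => lap3 (W i) y) x| ≤ K * E + K * rho x ^ (-(5/4) : ℝ) := (hb s hs hs1 x hr hrR i).2
        calc _ ≤ |u i x| * (K * E + K * rho x ^ (-(5/4) : ℝ)) := mul_le_mul_of_nonneg_left h1 (abs_nonneg _)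
          _ = |u i x| * (K * E) + |u i x| * (K * rho x ^ (-(5/4) : ℝ)) := by ring
          _ ≤ _ := by
            refine add_le_add (mul_le_mul_of_nonneg_right (hu i) (by positivity)) ?_
            calc _ ≤ (C * rho x ^ (-(1/4) : ℝ)) * (K * rho x ^ (-(5/4) : ℝ)) :=
                  mul_le_mul_of_nonneg_right (b1 i) (by positivity)
              _ = C * K * (rho x ^ (-(1/4) : ℝ) * rho x ^ (-(5/4) : ℝ)) := by ring
              _ ≤ C * K * (M1 * rho x ^ (-(7/4) : ℝ)) := mul_le_mul_of_nonneg_left m1 (by positivity)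
              _ = _ := by ring
      have huu : ∀ i j, |u i x * u j x * pd j (Phi W i) x| ≤ C * C * (6 * K) * rho x ^ (-(7/4) : ℝ) := fun i j => by
        rw [abs_mul, abs_mul]
        calc _ ≤ (C * rho x ^ (-(1/4) : ℝ)) * (C * rho x ^ (-(1/4) : ℝ)) * (6 * K * rho x ^ (-(5/4) : ℝ)) :=
              mul_le_mul (mul_le_mul (b1 i) (b1 j) (abs_nonneg _) (by positivity)) (hdP i j) (abs_nonneg _)
                (by positivity)
          _ = C * C * (6 * K) * (rho x ^ (-(1/4) : ℝ) * rho x ^ (-(1/4) : ℝ) * rho x ^ (-(5/4) : ℝ)) := by ring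
          _ = _ := by rw [m2]
      have hsum : ∀ i, |u i x * lap3 (fun y => lap3 (W i) y) x + ∑ j, u i x * u j x * pd j (Phi W i) x| ≤
          ((ε * |Real.log s| + ε + Cε) * G * (K * E) + C * K * M1 * rho x ^ (-(7/4) : ℝ))
            + 3 * (C * C * (6 * K) * rho x ^ (-(7/4) : ℝ)) := fun i => by
        refine (abs_add_le _ _).trans (add_le_add (hLL i) ?_)
        refine (Finset.abs_sum_le_sum_abs _ _).trans
          ((Finset.sum_le_sum fun j _ => huu i j).trans (le_of_eq ?_))
        simp
      refine (Finset.abs_sum_le_sum_abs _ _).trans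
          ((Finset.sum_le_sum fun i _ => hsum i).trans (le_of_eq ?_))
      simp only [hbdef, hT, hQ, Finset.sum_const, Finset.card_univ, Fintype.card_fin, nsmul_eq_mul]
      push_cast
      ring
    · rw [Set.indicator_of_notMem hxU]
      have z1 : ∀ {f : V3 → ℝ}, TF Om f → f x = 0 := fun hf =>
        image_eq_zero_of_notMem_tsupport fun hh => hxU (hf.supp hh)
      have z2 : ∀ i, lap3 (fun y => lap3 (W i) y) x = 0 := fun i => z1 (hWT i).lap.lap
      have z3 : ∀ i j, pd j (Phi W i) x = 0 := fun i j => z1 ((hP i).pd j)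
      simp [z2, z3]

/-- the weak formulation -/
lemma weak_form {δ : ℝ} {u : Fin 3 → V3 → ℝ} {p : V3 → ℝ} {U : Set V3} (D : Dat δ u p U)
    {φ : Fin 3 → V3 → ℝ} (h : ∀ i, TF (OmegaR (-2) (-1/2) (δ/16)) (φ i)) (hdiv : ∀ x, ∑ j, pd j (φ j) x = 0) :
    ∫ x, ∑ i, ∑ j, (pd j (u i) x * pd j (φ i) x - u i x * u j x * pd j (φ i) x) = 0 := by
  obtain ⟨A, hA, hest⟩ := Phi_est D h
  set N := ∫ x, ∑ i, ∑ j, (pd j (u i) x * pd j (φ i) x - u i x * u j x * pd j (φ i) x) with hN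
  by_contra hne
  have hNpos : 0 < |N| := abs_pos.2 hne
  obtain ⟨M, hM⟩ := hest (|N| / A) (by positivity)
  set l := 1 + |M| / |N| + 1 with hl
  have hMN : 0 ≤ |M| / |N| := by positivity
  have hl2 : 2 ≤ l := by rw [hl]; linarith
  set s := Real.exp (-l) with hs
  have hs0 : 0 < s := Real.exp_pos _
  have hs1 : s < 1 := by rw [hs, Real.exp_lt_one_iff]; linarith
  have hlog : Real.log s = -l := Real.log_exp _
  have hlog2 : Real.log (s ^ 2) + 1 = 1 - 2 * l := by rw [Real.log_pow, hlog]; push_cast; ring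
  have h1 := weak_scale D h hdiv hs0 (by rw [hlog2]; linarith)
  have hWT : ∀ i, TF (OmegaR (-2) (-1/2) (δ/16)) ((fun i y => kk s y * (cc i * φ i y)) i) := fun i =>
    ((h i).cmul (cc i)).mul (contDiff_kk hs0)
  rw [weak_Phi D hWT, hlog2, ← hN] at h1
  have h2 := hM s hs0 hs1
  have h3 := congrArg abs h1
  rw [abs_neg, abs_mul] at h3
  rw [← h3, hlog, abs_neg, abs_of_pos (by linarith : 0 < l)] at h2
  have e : |2 * (1 - 2 * l)| = 4 * l - 2 := by
    rw [abs_of_nonpos (by linarith)]; ring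
  have e2 : A * (|N| / A) = |N| := by field_simp
  rw [e, e2] at h2
  have e3 : |N| * l = 2 * |N| + |M| := by
    rw [hl]; field_simp; ring
  have := le_abs_self M
  nlinarith

/-- a `(-1)`-homogeneous solution with `u = o(ln dist(x,S))` is a weak solution
of the Stokes system with force `-(u·∇)u` across the singular ray. -/
theorem weak_solution_across_ray (δ : ℝ) (hδ : 0 < δ) (u : V3 → V3) (p : V3 → ℝ)
    (hu_hom : ∀ x ∈ cone3 (NSCap δ), ∀ lam : ℝ, 0 < lam → u (lam • x) = lam⁻¹ • u x)
    (hp_hom : ∀ x ∈ cone3 (NSCap δ), ∀ lam : ℝ, 0 < lam → p (lam • x) = (lam ^ 2)⁻¹ * p x)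
    (hu_reg : ContDiffOn ℝ 2 u (cone3 (NSCap δ)))
    (hp_reg : ContDiffOn ℝ 2 p (cone3 (NSCap δ)))
    (hNS : ∀ x ∈ cone3 (NSCap δ), NSEq u p x)
    (hlim : Tendsto (fun x => ‖u x‖ / Real.log (dist x S3))
      (𝓝[sphere2 \ {S3}] S3) (𝓝 0)) :
    eLpNorm u 2 (volume.restrict (OmegaR (-2) (-1/2) (δ/16))) ≠ ⊤ ∧
    (∀ s : ℝ, 1 < s → s < 2 →
      eLpNorm (fun x => fderiv ℝ u x) (ENNReal.ofReal s)
        (volume.restrict (OmegaR (-2) (-1/2) (δ/16))) ≠ ⊤ ∧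
      eLpNorm (fun x => fun i j => u x i * u x j) (ENNReal.ofReal s)
        (volume.restrict (OmegaR (-2) (-1/2) (δ/16))) ≠ ⊤ ∧
      eLpNorm p (ENNReal.ofReal s)
        (volume.restrict (OmegaR (-2) (-1/2) (δ/16))) ≠ ⊤) ∧
    (∀ φ : V3 → V3, ContDiff ℝ (⊤:ℕ∞) φ → HasCompactSupport φ →
      tsupport φ ⊆ OmegaR (-2) (-1/2) (δ/16) →
      (∀ x, ∑ j, pd j (fun z => φ z j) x = 0) →
      ∫ x in OmegaR (-2) (-1/2) (δ/16),
          (∑ i, ∑ j, pd j (fun z => u z i) x * pd j (fun z => φ z i) x)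
        = ∫ x in OmegaR (-2) (-1/2) (δ/16),
          (∑ i, ∑ j, u x i * u x j * pd j (fun z => φ z i) x)) ∧
    (∀ ψ : V3 → ℝ, ContDiff ℝ (⊤:ℕ∞) ψ → HasCompactSupport ψ →
      tsupport ψ ⊆ OmegaR (-2) (-1/2) (δ/16) →
      ∫ x in OmegaR (-2) (-1/2) (δ/16), (∑ j, u x j * pd j ψ x) = 0) := by
  have D := mkDat hδ hu_hom hu_reg hp_reg hNS hlim
  obtain ⟨ha, hb⟩ := Lp_claims D hu_reg
  have hset : ∀ (F : V3 → ℝ), (∀ x, x ∉ OmegaR (-2) (-1/2) (δ/16) → F x = 0) →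
      ∫ x in OmegaR (-2) (-1/2) (δ/16), F x = ∫ x, F x := fun F hF =>
    setIntegral_eq_integral_of_forall_compl_eq_zero hF
  refine ⟨ha, hb, ?_, ?_⟩
  · intro φ hφ hφc hφs hdiv
    have hsub : ∀ i, tsupport (fun z => φ z i) ⊆ tsupport φ := fun i =>
      closure_mono fun z hz h0 => hz (by simp [h0])
    have hT : ∀ i, TF (OmegaR (-2) (-1/2) (δ/16)) (fun z => φ z i) := fun i =>
      ⟨(contDiff_coord i).comp hφ, hφc.of_isClosed_subset (isClosed_tsupport _) (hsub i),
        (hsub i).trans hφs⟩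
    have hTd := fun i j => (hT i).pd j
    have hz : ∀ i j x, x ∉ OmegaR (-2) (-1/2) (δ/16) → pd j (fun z => φ z i) x = 0 := fun i j x hx =>
      image_eq_zero_of_notMem_tsupport (f := fun x => pd j (fun z => φ z i) x)
        (fun h => hx ((hTd i j).supp h))
    have I1 : ∀ i j, Integrable (fun x => pd j (fun z => u z i) x * pd j (fun z => φ z i) x) := fun i j =>
      int_du D (hTd i j).smooth.continuous (hTd i j).cpt (hTd i j).supp i j
    have I2 : ∀ i j, Integrable (fun x => u x i * u x j * pd j (fun z => φ z i) x) := fun i j =>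
      int_uu D (hTd i j).smooth.continuous (hTd i j).cpt (hTd i j).supp i j
    rw [hset _ (fun x hx => Finset.sum_eq_zero fun i _ => Finset.sum_eq_zero fun j _ => by
        rw [hz i j x hx, mul_zero]),
      hset _ (fun x hx => Finset.sum_eq_zero fun i _ => Finset.sum_eq_zero fun j _ => by
        rw [hz i j x hx, mul_zero]), ← sub_eq_zero,
      ← integral_sub (integrable_finsetSum _ fun i _ => integrable_finsetSum _ fun j _ => I1 i j)
        (integrable_finsetSum _ fun i _ => integrable_finsetSum _ fun j _ => I2 i j)]
    rw [← weak_form D hT hdiv]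
    congr 1
    funext x
    simp only [Finset.sum_sub_distrib]
  · intro ψ hψ hψc hψs
    have hT : TF (OmegaR (-2) (-1/2) (δ/16)) ψ := ⟨hψ, hψc, hψs⟩
    have hz : ∀ j x, x ∉ OmegaR (-2) (-1/2) (δ/16) → pd j ψ x = 0 := fun j x hx =>
      image_eq_zero_of_notMem_tsupport (f := fun x => pd j ψ x) (fun h => hx ((hT.pd j).supp h))
    rw [hset _ (fun x hx => Finset.sum_eq_zero fun j _ => by rw [hz j x hx, mul_zero])]
    exact weak_div D hψ hψc hψs
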